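/- (Homogeneous radial Strichartz estimate for the wave equation.) Let n ≥ 2 and let f, g be spherically symmetric Schwartz functions on ℝⁿ with values in ℂ. Define the free wave u(t,x) = ∫_{ℝⁿ} e^{2πi x·ξ} ( cos(2π t |ξ|) f̂(ξ) + (sin(2π t |ξ|)/(2π|ξ|)) ĝ(ξ) ) dξ for t > 0, x ∈ ℝⁿ. Let (q, r) be a radially wave-admissible pair and let s be determined by the scaling condition 1/q + n/r = n/2 − s. Then there is a constant C = C(n, q, r), independent of f and g, such that ‖ t ↦ ‖u(t,·)‖_{L^r(ℝⁿ)} ‖_{L^q((0,∞))} ≤ C ( ‖ ξ ↦ |ξ|^s f̂(ξ) ‖_{L²(ℝⁿ)} + ‖ ξ ↦ |ξ|^{s−1} ĝ(ξ) ‖_{L²(ℝⁿ)} ), whenever the right-hand side is finite. -/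

import Mathlib

open MeasureTheory ENNReal Real
open scoped FourierTransform RealInnerProductSpace

/-- The mixed norm `‖G‖_{L^q((0,∞))}` of an `ℝ≥0∞`-valued function `G` on `ℝ`,
with the usual modification `essSup` when `q = ∞`. -/
noncomputable def timeNorm (q : ℝ≥0∞) (G : ℝ → ℝ≥0∞) : ℝ≥0∞ :=
  if q = ∞ then essSup G (volume.restrict (Set.Ioi (0 : ℝ)))
  else (∫⁻ t in Set.Ioi (0 : ℝ), G t ^ q.toReal) ^ (1 / q.toReal)

/-- A pair `(q, r)` with `2 ≤ q, r ≤ ∞` is radially wave-admissible in dimension `n` if either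
`(q, r) ≠ (∞, ∞)` and `1/q + (n-1)/r < (n-1)/2`, or `(q, r) = (∞, 2)`. -/
def RadWaveAdmissible (n : ℕ) (q r : ℝ≥0∞) : Prop :=
  2 ≤ q ∧ 2 ≤ r ∧
    ((¬(q = ∞ ∧ r = ∞) ∧ 1 / q + ((n : ℝ≥0∞) - 1) / r < ((n : ℝ≥0∞) - 1) / 2)
      ∨ (q = ∞ ∧ r = 2))

namespace RadialStrichartz

section Polar

variable {E : Type*} [NormedAddCommGroup E] [InnerProductSpace ℝ E] [FiniteDimensional ℝ E]
  [MeasurableSpace E] [BorelSpace E]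

lemma lintegral_gaussian {A : ℝ} (hA : 0 < A) (y : E) :
    ∫⁻ x : E, ENNReal.ofReal (rexp (-A * ‖y - x‖ ^ 2)) =
      ENNReal.ofReal ((π / A) ^ (Module.finrank ℝ E / 2 : ℝ)) := by
  rw [lintegral_sub_left_eq_self (fun x : E => ENNReal.ofReal (rexp (-A * ‖x‖ ^ 2))) y,
    ← GaussianFourier.integral_rexp_neg_mul_sq_norm hA, ofReal_integral_eq_lintegral_ofReal]
  · have := (GaussianFourier.integrable_cexp_neg_mul_sq_norm_add (V := E) (b := A) (by simpa) 0 0).norm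
    refine this.congr (.of_forall fun x => ?_)
    simp [Complex.norm_exp, ← Complex.ofReal_pow]
  · exact .of_forall fun x => (exp_pos _).le

variable [Nontrivial E]

/-- Polar coordinates for nonnegative functions. -/
lemma lintegral_polar {f : E → ℝ≥0∞} (hf : Measurable f) :
    ∫⁻ x, f x = ∫⁻ ω, (∫⁻ ρ in Set.Ioi (0 : ℝ),
      ENNReal.ofReal (ρ ^ (Module.finrank ℝ E - 1)) * f (ρ • (ω : E)))
      ∂(volume : Measure E).toSphere := by
  calc
    ∫⁻ x, f x = ∫⁻ x : ({(0)}ᶜ : Set E), f x.1 ∂((volume : Measure E).comap (↑)) := by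
      rw [lintegral_subtype_comap (measurableSet_singleton _).compl f,
        restrict_compl_singleton]
    _ = ∫⁻ p, f (p.2.1 • p.1.1) ∂((volume : Measure E).toSphere.prod
        (.volumeIoiPow (Module.finrank ℝ E - 1))) := by
      rw [← (volume : Measure E).measurePreserving_homeomorphUnitSphereProd.lintegral_comp_emb
        (Homeomorph.measurableEmbedding _)]
      refine lintegral_congr fun x => ?_
      have : ‖x.1‖ ≠ 0 := norm_ne_zero_iff.2 x.2
      simp [smul_smul, mul_inv_cancel₀ this]
    _ = _ := by
      rw [lintegral_prod _ (by fun_prop)]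
      refine lintegral_congr fun ω => ?_
      rw [Measure.volumeIoiPow, lintegral_withDensity_eq_lintegral_mul _ (by fun_prop) (by fun_prop)]
      exact lintegral_subtype_comap measurableSet_Ioi
        (fun ρ : ℝ => ENNReal.ofReal (ρ ^ (Module.finrank ℝ E - 1)) * f (ρ • (ω : E)))

/-- Polar coordinates for radial nonnegative functions. -/
lemma lintegral_radial {φ : ℝ → ℝ≥0∞} (hφ : Measurable φ) :
    ∫⁻ x : E, φ ‖x‖ = (volume : Measure E).toSphere Set.univ *
      ∫⁻ ρ in Set.Ioi (0 : ℝ), ENNReal.ofReal (ρ ^ (Module.finrank ℝ E - 1)) * φ ρ := by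
  rw [lintegral_polar (f := fun x : E => φ ‖x‖) (by fun_prop), mul_comm, ← lintegral_const]
  refine lintegral_congr fun ω => setLIntegral_congr_fun measurableSet_Ioi fun ρ hρ => ?_
  have : ‖(ω : E)‖ = 1 := by simp
  simp [norm_smul, this, abs_of_pos hρ.out]

/-- The Gaussian mass of a sphere is bounded by that of a hyperplane. -/
lemma sphere_gaussian_le {A : ℝ} (hA : 0 < A) (y : E) {ρ : ℝ} (hρ : 0 < ρ) :
    ENNReal.ofReal (ρ ^ (Module.finrank ℝ E - 1)) *
      ∫⁻ ω, ENNReal.ofReal (rexp (-A * ‖y - ρ • (ω : E)‖ ^ 2)) ∂(volume : Measure E).toSphere ≤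
    ENNReal.ofReal (rexp 1 * √A * (2 * π / A) ^ (Module.finrank ℝ E / 2 : ℝ)) := by
  set d := Module.finrank ℝ E - 1 with hd
  set δ := (√A)⁻¹ with hδ
  have hδ0 : 0 < δ := by positivity
  have key : ∀ ω : Metric.sphere (0 : E) 1,
      ENNReal.ofReal (δ * rexp (-1)) * (ENNReal.ofReal (ρ ^ d) *
        ENNReal.ofReal (rexp (-A * ‖y - ρ • (ω : E)‖ ^ 2))) ≤
      ∫⁻ τ in Set.Ioi (0 : ℝ), ENNReal.ofReal (τ ^ d) *
        ENNReal.ofReal (rexp (-(A / 2) * ‖y - τ • (ω : E)‖ ^ 2)) := by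
    intro ω
    have hω : ‖(ω : E)‖ = 1 := by simp
    calc _ = ∫⁻ τ in Set.Ioo ρ (ρ + δ), ENNReal.ofReal (ρ ^ d) *
            ENNReal.ofReal (rexp (-1) * rexp (-A * ‖y - ρ • (ω : E)‖ ^ 2)) := by
          rw [setLIntegral_const, Real.volume_Ioo, ENNReal.ofReal_mul (exp_pos _).le,
            ENNReal.ofReal_mul hδ0.le, show ρ + δ - ρ = δ by ring]
          ring
      _ ≤ ∫⁻ τ in Set.Ioo ρ (ρ + δ), ENNReal.ofReal (τ ^ d) *
            ENNReal.ofReal (rexp (-(A / 2) * ‖y - τ • (ω : E)‖ ^ 2)) := by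
          refine setLIntegral_mono' measurableSet_Ioo fun τ hτ => ?_
          gcongr
          · exact hτ.1.le
          rw [← Real.exp_add]
          gcongr
          have h1 : ‖y - τ • (ω : E)‖ ≤ ‖y - ρ • (ω : E)‖ + δ := by
            have : y - τ • (ω : E) = (y - ρ • (ω : E)) - (τ - ρ) • (ω : E) := by
              rw [sub_smul]; abel
            rw [this]
            refine (norm_sub_le _ _).trans ?_
            rw [norm_smul, hω, mul_one, Real.norm_eq_abs, abs_of_pos (by linarith [hτ.1])]
            linarith [hτ.2]
          have h2 : ‖y - τ • (ω : E)‖ ^ 2 ≤ 2 * ‖y - ρ • (ω : E)‖ ^ 2 + 2 * δ ^ 2 := by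
            nlinarith [norm_nonneg (y - τ • (ω : E)), sq_nonneg (‖y - ρ • (ω : E)‖ - δ)]
          have h3 : A * δ ^ 2 = 1 := by
            rw [hδ, inv_pow, Real.sq_sqrt hA.le, mul_inv_cancel₀ hA.ne']
          nlinarith
      _ ≤ _ := lintegral_mono_set fun τ hτ => hρ.trans hτ.1
  have h2 := lintegral_mono (μ := (volume : Measure E).toSphere) key
  rw [lintegral_const_mul _ (by fun_prop), lintegral_const_mul _ (by fun_prop),
    ← lintegral_polar (f := fun x : E => ENNReal.ofReal (rexp (-(A / 2) * ‖y - x‖ ^ 2)))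
      (by fun_prop), lintegral_gaussian (by positivity)] at h2
  have h0 : ENNReal.ofReal (δ * rexp (-1)) ≠ 0 := by
    simp only [ne_eq, ENNReal.ofReal_eq_zero, not_le]; positivity
  rw [mul_comm] at h2
  refine ((ENNReal.le_div_iff_mul_le (.inl h0) (.inl ENNReal.ofReal_ne_top)).2
    h2).trans (le_of_eq ?_)
  rw [← ENNReal.ofReal_div_of_pos (by positivity)]
  congr 1
  rw [hδ, Real.exp_neg, show π / (A / 2) = 2 * π / A by field_simp]
  field_simp

/-- A Gaussian-weighted integral of a radial function is controlled by its one-dimensional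
integral. -/
lemma lintegral_radial_mul_gaussian_le {φ : ℝ → ℝ≥0∞} (hφ : Measurable φ) {A : ℝ} (hA : 0 < A)
    (y : E) :
    ∫⁻ x : E, φ ‖x‖ * ENNReal.ofReal (rexp (-A * ‖y - x‖ ^ 2)) ≤
      ENNReal.ofReal (rexp 1 * √A * (2 * π / A) ^ (Module.finrank ℝ E / 2 : ℝ)) *
        ∫⁻ ρ in Set.Ioi (0 : ℝ), φ ρ := by
  rw [lintegral_polar (f := fun x : E => φ ‖x‖ * ENNReal.ofReal (rexp (-A * ‖y - x‖ ^ 2)))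
      (by fun_prop), lintegral_lintegral_swap, ← lintegral_const_mul _ hφ]
  · refine setLIntegral_mono' measurableSet_Ioi fun ρ hρ => ?_
    refine le_trans (le_of_eq ?_) (mul_le_mul_left (sphere_gaussian_le hA y hρ.out) (φ ρ))
    rw [← lintegral_const_mul _ (by fun_prop), ← lintegral_mul_const _ (by fun_prop)]
    refine lintegral_congr fun ω => ?_
    have : ‖(ω : E)‖ = 1 := by simp
    rw [norm_smul, this, mul_one, Real.norm_eq_abs, abs_of_pos hρ.out]
    ring
  · fun_prop

end Polar

section Kernel

variable {X Ω : Type*} [MeasurableSpace X] [MeasurableSpace Ω]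

lemma mul_le_sq_add_sq (a b : ℝ≥0∞) : a * b ≤ a ^ 2 + b ^ 2 := by
  rcases le_total a b with h | h
  · calc a * b ≤ b * b := by gcongr
      _ ≤ _ := by rw [sq b]; exact le_add_self
  · calc a * b ≤ a * a := by gcongr
      _ ≤ _ := by rw [sq a]; exact le_self_add

/-- An `L²` bound for an oscillatory integral operator through Schur's test for `T*T`. -/
lemma lintegral_enorm_sq_le_of_kernel (ν : Measure X) [IsFiniteMeasure ν] (μ : Measure Ω)
    [SFinite μ] {Q : X → Ω → ℂ} (hQ : Measurable (Function.uncurry Q)) (hQ1 : ∀ x ω, ‖Q x ω‖ ≤ 1)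
    {H : Ω → ℂ} (hHm : Measurable H) (hH : Integrable H μ) {B : Ω → Ω → ℝ≥0∞}
    (hB : Measurable (Function.uncurry B)) (hBsymm : ∀ ω ω', B ω ω' = B ω' ω)
    (hκ : ∀ ω ω', ‖∫ x, Q x ω * starRingEnd ℂ (Q x ω') ∂ν‖ₑ ≤ B ω ω')
    {K : ℝ≥0∞} (hK : ∀ ω, ∫⁻ ω', B ω ω' ∂μ ≤ K) :
    ∫⁻ x, ‖∫ ω, Q x ω * H ω ∂μ‖ₑ ^ 2 ∂ν ≤ 2 * K * ∫⁻ ω, ‖H ω‖ₑ ^ 2 ∂μ := by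
  set U : X → ℂ := fun x => ∫ ω, Q x ω * H ω ∂μ with hU
  have hUm : Measurable U := by
    have : StronglyMeasurable (Function.uncurry fun x ω => Q x ω * H ω) :=
      (hQ.mul (hHm.comp measurable_snd)).stronglyMeasurable
    exact this.integral_prod_right.measurable
  have hUb : ∀ x, ‖U x‖ ≤ ∫ ω, ‖H ω‖ ∂μ := fun x =>
    norm_integral_le_of_norm_le hH.norm (.of_forall fun ω => by
      rw [norm_mul]; exact mul_le_of_le_one_left (norm_nonneg _) (hQ1 _ _))
  have hUU : Integrable (fun x => U x * starRingEnd ℂ (U x)) ν := by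
    refine Integrable.of_bound (hUm.mul (by fun_prop)).aestronglyMeasurable
      ((∫ ω, ‖H ω‖ ∂μ) * ∫ ω, ‖H ω‖ ∂μ) (.of_forall fun x => ?_)
    rw [norm_mul, RCLike.norm_conj]
    exact mul_le_mul (hUb x) (hUb x) (norm_nonneg _) ((norm_nonneg _).trans (hUb x))
  have h1 : ∫⁻ x, ‖U x‖ₑ ^ 2 ∂ν = ‖∫ x, U x * starRingEnd ℂ (U x) ∂ν‖ₑ := by
    have h2 : ∀ x, U x * starRingEnd ℂ (U x) = ((‖U x‖ ^ 2 : ℝ) : ℂ) := fun x => by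
      rw [Complex.mul_conj, Complex.normSq_eq_norm_sq]
    have h3 : Integrable (fun x => ‖U x‖ ^ 2) ν := by
      refine hUU.norm.congr (.of_forall fun x => ?_)
      simp only [norm_mul, RCLike.norm_conj]; ring
    simp_rw [h2]
    rw [integral_complex_ofReal, ← ofReal_norm, Complex.norm_real, Real.norm_eq_abs,
      abs_of_nonneg (integral_nonneg fun x => by positivity),
      ofReal_integral_eq_lintegral_ofReal h3 (.of_forall fun x => by positivity)]
    refine lintegral_congr fun x => ?_
    rw [ENNReal.ofReal_pow (norm_nonneg _), ofReal_norm]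
  let Φ : X → Ω × Ω → ℂ := fun x p =>
    (Q x p.1 * starRingEnd ℂ (Q x p.2)) * (H p.1 * starRingEnd ℂ (H p.2))
  have hconj : Measurable (starRingEnd ℂ) := Complex.continuous_conj.measurable
  have hQm1 : Measurable fun z : X × (Ω × Ω) => Q z.1 z.2.1 :=
    hQ.comp (f := fun z : X × (Ω × Ω) => (z.1, z.2.1)) (by fun_prop)
  have hQm2 : Measurable fun z : X × (Ω × Ω) => Q z.1 z.2.2 :=
    hQ.comp (f := fun z : X × (Ω × Ω) => (z.1, z.2.2)) (by fun_prop)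
  have hHH : Integrable (fun p : Ω × Ω => H p.1 * starRingEnd ℂ (H p.2)) (μ.prod μ) :=
    hH.mul_prod (g := fun ω => starRingEnd ℂ (H ω))
      (by simpa using (LinearIsometryEquiv.integrable_comp_iff Complex.conjLIE).2 hH)
  have hΦ : Integrable (Function.uncurry Φ) (ν.prod (μ.prod μ)) := by
    refine Integrable.bdd_mul (c := 1) (hHH.comp_snd ν)
      (hQm1.mul (hconj.comp hQm2)).aestronglyMeasurable (.of_forall fun z => ?_)
    simp only [norm_mul, RCLike.norm_conj]
    exact mul_le_one₀ (hQ1 _ _) (norm_nonneg _) (hQ1 _ _)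
  have h4 : ∫ x, U x * starRingEnd ℂ (U x) ∂ν =
      ∫ p, (∫ x, Q x p.1 * starRingEnd ℂ (Q x p.2) ∂ν) * (H p.1 * starRingEnd ℂ (H p.2))
        ∂(μ.prod μ) := by
    calc _ = ∫ x, ∫ p, Φ x p ∂(μ.prod μ) ∂ν := by
          refine integral_congr_ae (.of_forall fun x => ?_)
          simp only [hU, Φ]
          rw [← integral_conj, ← integral_prod_mul]
          refine integral_congr_ae (.of_forall fun p => ?_)
          simp only [map_mul]; ring
      _ = ∫ p, ∫ x, Φ x p ∂ν ∂(μ.prod μ) := integral_integral_swap hΦ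
      _ = _ := by simp only [Φ, integral_mul_const]
  rw [h1, h4]
  calc _ ≤ ∫⁻ p, B p.1 p.2 * (‖H p.1‖ₑ * ‖H p.2‖ₑ) ∂(μ.prod μ) := by
        refine (enorm_integral_le_lintegral_enorm _).trans (lintegral_mono fun p => ?_)
        simp only [enorm_mul]
        rw [← ofReal_norm (starRingEnd ℂ _), RCLike.norm_conj, ofReal_norm]
        gcongr
        exact hκ _ _
    _ ≤ ∫⁻ p, (‖H p.1‖ₑ ^ 2 * B p.1 p.2 + ‖H p.2‖ₑ ^ 2 * B p.2 p.1) ∂(μ.prod μ) := by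
        refine lintegral_mono fun p => ?_
        rw [hBsymm p.2 p.1, ← add_mul, mul_comm]
        gcongr
        exact mul_le_sq_add_sq _ _
    _ = (∫⁻ ω, ‖H ω‖ₑ ^ 2 * ∫⁻ ω', B ω ω' ∂μ ∂μ) + ∫⁻ ω, ‖H ω‖ₑ ^ 2 * ∫⁻ ω', B ω ω' ∂μ ∂μ := by
        have m1 : Measurable fun p : Ω × Ω => ‖H p.1‖ₑ ^ 2 * B p.1 p.2 :=
          ((hHm.comp measurable_fst).enorm.pow_const 2).mul hB
        rw [lintegral_add_left m1, lintegral_prod _ m1.aemeasurable,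
          lintegral_prod_symm _ (by exact (m1.comp measurable_swap).aemeasurable)]
        have hB1 : ∀ ω, Measurable (B ω) := fun ω => hB.comp measurable_prodMk_left
        congr 1 <;>
        · refine lintegral_congr fun ω => ?_
          exact lintegral_const_mul (‖H ω‖ₑ ^ 2) (hB1 ω)
    _ ≤ (∫⁻ ω, ‖H ω‖ₑ ^ 2 * K ∂μ) + ∫⁻ ω, ‖H ω‖ₑ ^ 2 * K ∂μ := by
        gcongr <;> exact hK _
    _ = _ := by
        rw [lintegral_mul_const _ (hHm.enorm.pow_const 2)]
        ring

end Kernel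

section Wave

variable {E : Type*} [NormedAddCommGroup E] [InnerProductSpace ℝ E] [FiniteDimensional ℝ E]
  [MeasurableSpace E] [BorelSpace E]

variable (E) in
/-- The measure with Gaussian density `exp (-b ‖x‖²)`. -/
noncomputable def gaussMeasure (b : ℝ) : Measure E :=
  volume.withDensity fun x => ENNReal.ofReal (rexp (-b * ‖x‖ ^ 2))

lemma lintegral_gaussMeasure (b : ℝ) {F : E → ℝ≥0∞} (hF : Measurable F) :
    ∫⁻ x, F x ∂gaussMeasure E b = ∫⁻ x, ENNReal.ofReal (rexp (-b * ‖x‖ ^ 2)) * F x :=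
  lintegral_withDensity_eq_lintegral_mul _ (by fun_prop) hF

lemma isFiniteMeasure_gaussMeasure {b : ℝ} (hb : 0 < b) : IsFiniteMeasure (gaussMeasure E b) := by
  refine isFiniteMeasure_withDensity ?_
  have := lintegral_gaussian hb (0 : E)
  simp only [zero_sub, norm_neg] at this
  rw [this]
  exact ofReal_ne_top

/-- The character `exp (2πi ⟪x, w⟫)`. -/
noncomputable def phase (x w : E) : ℂ := Complex.exp (((2 * π * ⟪x, w⟫ : ℝ) : ℂ) * Complex.I)

@[simp] lemma norm_phase (x w : E) : ‖phase x w‖ = 1 := Complex.norm_exp_ofReal_mul_I _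

lemma phase_mul_conj (x v w : E) : phase x v * starRingEnd ℂ (phase x w) = phase x (v - w) := by
  simp only [phase, ← Complex.exp_conj, ← Complex.exp_add, map_mul, Complex.conj_ofReal,
    Complex.conj_I, inner_sub_right]
  push_cast
  ring_nf

lemma integral_phase {b : ℝ} (hb : 0 < b) (w : E) :
    ∫ x, phase x w ∂gaussMeasure E b =
      (((π / b) ^ (Module.finrank ℝ E / 2 : ℝ) * rexp (-(π ^ 2 / b) * ‖w‖ ^ 2) : ℝ) : ℂ) := by
  have h0 : ∫ x, phase x w ∂gaussMeasure E b =
      ∫ x, Complex.exp (-(b : ℂ) * ‖x‖ ^ 2 + (2 * π * Complex.I) * ⟪w, x⟫) := by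
    rw [gaussMeasure, integral_withDensity_eq_integral_toReal_smul (by fun_prop)
      (.of_forall fun x => ofReal_lt_top)]
    refine integral_congr_ae (.of_forall fun x => ?_)
    simp only
    rw [toReal_ofReal (exp_pos _).le, phase, Complex.real_smul, Complex.ofReal_exp,
      ← Complex.exp_add, real_inner_comm]
    push_cast
    ring_nf
  rw [h0, GaussianFourier.integral_cexp_neg_mul_sq_norm_add (by simpa), Complex.ofReal_mul,
    Complex.ofReal_cpow (by positivity), Complex.ofReal_exp]
  push_cast
  congr 2
  rw [mul_pow, Complex.I_sq]
  field_simp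
  ring

lemma enorm_integral_phase {b : ℝ} (hb : 0 < b) (w : E) :
    ‖∫ x, phase x w ∂gaussMeasure E b‖ₑ = ENNReal.ofReal
      ((π / b) ^ (Module.finrank ℝ E / 2 : ℝ) * rexp (-(π ^ 2 / b) * ‖w‖ ^ 2)) := by
  rw [integral_phase hb, ← ofReal_norm, Complex.norm_real, norm_of_nonneg (by positivity)]

/-- Gaussian truncations can be removed from upper bounds. -/
lemma lintegral_le_of_gaussMeasure {F : E → ℝ≥0∞} (hF : Measurable F) {K : ℝ≥0∞}
    (h : ∀ b : ℝ, 0 < b → ∫⁻ x, F x ∂gaussMeasure E b ≤ K) : ∫⁻ x, F x ≤ K := by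
  let b : ℕ → ℝ := fun k => 1 / ((k : ℝ) + 1)
  have hb : ∀ k, 0 < b k := fun k => by positivity
  have hlim : ∀ x : E, Filter.Tendsto (fun k => ENNReal.ofReal (rexp (-b k * ‖x‖ ^ 2)) * F x)
      Filter.atTop (nhds (F x)) := fun x => by
    have h1 : Filter.Tendsto (fun k => ENNReal.ofReal (rexp (-b k * ‖x‖ ^ 2)))
        Filter.atTop (nhds 1) := by
      rw [← ENNReal.ofReal_one]
      refine ENNReal.tendsto_ofReal ?_
      have h2 := (tendsto_one_div_add_atTop_nhds_zero_nat (𝕜 := ℝ)).neg.mul_const (‖x‖ ^ 2)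
      have h3 := (Real.continuous_exp.tendsto _).comp h2
      simpa [Function.comp_def, b] using h3
    simpa using ENNReal.Tendsto.mul_const (b := F x) h1 (Or.inl one_ne_zero)
  calc ∫⁻ x, F x = ∫⁻ x, Filter.liminf (fun k => ENNReal.ofReal (rexp (-b k * ‖x‖ ^ 2)) * F x)
        Filter.atTop := lintegral_congr fun x => (hlim x).liminf_eq.symm
    _ ≤ Filter.liminf (fun k => ∫⁻ x, ENNReal.ofReal (rexp (-b k * ‖x‖ ^ 2)) * F x)
        Filter.atTop := lintegral_liminf_le fun k => by fun_prop
    _ ≤ Filter.liminf (fun _ : ℕ => K) Filter.atTop := by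
        refine Filter.liminf_le_liminf (.of_forall fun k => ?_)
        rw [← lintegral_gaussMeasure _ hF]
        exact h _ (hb k)
    _ = K := by simp

/-- The half-wave evolution with Fourier data `h`. -/
noncomputable def wave (h : E → ℂ) (t : ℝ) (x : E) : ℂ :=
  ∫ ξ, (phase x ξ * phase t ‖ξ‖) * h ξ

lemma measurable_wave {h : E → ℂ} (hm : Measurable h) :
    Measurable (Function.uncurry (wave h)) := by
  have : Measurable (Function.uncurry fun (p : ℝ × E) (ξ : E) =>
      (phase p.2 ξ * phase p.1 ‖ξ‖) * h ξ) := by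
    unfold phase Function.uncurry
    fun_prop
  exact this.stronglyMeasurable.integral_prod_right.measurable

lemma integrable_phase_mul {h : E → ℂ} (hi : Integrable h) (t : ℝ) (x : E) :
    Integrable fun ξ => (phase x ξ * phase t ‖ξ‖) * h ξ := by
  refine Integrable.bdd_mul (c := 1) hi ?_ (.of_forall fun ξ => by simp)
  unfold phase
  fun_prop

/-- Upper bound in Plancherel's theorem. -/
lemma lintegral_wave_sq_le {h : E → ℂ} (hm : Measurable h) (hi : Integrable h) (t : ℝ) :
    ∫⁻ x, ‖wave h t x‖ₑ ^ 2 ≤ 2 * ∫⁻ ξ, ‖h ξ‖ₑ ^ 2 := by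
  refine lintegral_le_of_gaussMeasure
    (((measurable_wave hm).comp measurable_prodMk_left).enorm.pow_const 2) fun b hb => ?_
  have := isFiniteMeasure_gaussMeasure (E := E) hb
  have key := lintegral_enorm_sq_le_of_kernel (gaussMeasure E b) (volume : Measure E)
    (Q := fun x ξ => phase x ξ * phase t ‖ξ‖) (H := h) (K := 1)
    (B := fun ξ η => ENNReal.ofReal
      ((π / b) ^ (Module.finrank ℝ E / 2 : ℝ) * rexp (-(π ^ 2 / b) * ‖ξ - η‖ ^ 2)))
    (by unfold phase Function.uncurry; fun_prop) (by simp) hm hi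
    (by unfold Function.uncurry; fun_prop) (fun ξ η => by simp [norm_sub_rev]) ?_ ?_
  · simpa [wave] using key
  · intro ξ η
    have : ∀ x, phase x ξ * phase t ‖ξ‖ * starRingEnd ℂ (phase x η * phase t ‖η‖) =
        phase x (ξ - η) * phase t (‖ξ‖ - ‖η‖) := fun x => by
      rw [map_mul, ← phase_mul_conj, ← phase_mul_conj]; ring
    simp_rw [this]
    rw [integral_mul_const, enorm_mul, enorm_integral_phase hb, ← ofReal_norm (phase t _)]
    simp
  · intro ξ
    simp_rw [ENNReal.ofReal_mul (show 0 ≤ (π / b) ^ (Module.finrank ℝ E / 2 : ℝ) by positivity)]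
    rw [lintegral_const_mul _ (by fun_prop), lintegral_gaussian (by positivity),
      ← ENNReal.ofReal_mul (by positivity), ← Real.mul_rpow (by positivity) (by positivity),
      show π / b * (π / (π ^ 2 / b)) = 1 by field_simp]
    simp

/-- Local smoothing with a Gaussian weight. -/
lemma lintegral_wave_sq_gauss_le [Nontrivial E] {h : E → ℂ} (hm : Measurable h)
    (hi : Integrable h) {b : ℝ} (hb : 0 < b) :
    ∫⁻ t : ℝ, ∫⁻ x, ENNReal.ofReal (rexp (-b * ‖x‖ ^ 2)) * ‖wave h t x‖ₑ ^ 2 ≤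
      ENNReal.ofReal (2 * (rexp 1 * π * 2 ^ (Module.finrank ℝ E / 2 : ℝ)) / √b) *
        ∫⁻ ξ, ‖h ξ‖ₑ ^ 2 := by
  have hwm : Measurable fun p : ℝ × E => ‖wave h p.1 p.2‖ₑ ^ 2 :=
    (measurable_wave hm).enorm.pow_const 2
  refine lintegral_le_of_gaussMeasure (Measurable.lintegral_prod_right'
    (f := fun p : ℝ × E => ENNReal.ofReal (rexp (-b * ‖p.2‖ ^ 2)) * ‖wave h p.1 p.2‖ₑ ^ 2)
    (Measurable.mul (by fun_prop) hwm)) fun c hc => ?_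
  have := isFiniteMeasure_gaussMeasure (E := E) hb
  have := isFiniteMeasure_gaussMeasure (E := ℝ) hc
  set d : ℝ := Module.finrank ℝ E / 2 with hd
  set K₀ : ℝ := rexp 1 * √(π ^ 2 / b) * (2 * π / (π ^ 2 / b)) ^ d with hK₀
  have key := lintegral_enorm_sq_le_of_kernel ((gaussMeasure ℝ c).prod (gaussMeasure E b))
    (volume : Measure E)
    (Q := fun p ξ => phase p.2 ξ * phase p.1 ‖ξ‖) (H := h)
    (K := ENNReal.ofReal (rexp 1 * π * 2 ^ d / √b))
    (B := fun ξ η => ENNReal.ofReal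
      ((π / c) ^ (1 / 2 : ℝ) * rexp (-(π ^ 2 / c) * (‖ξ‖ - ‖η‖) ^ 2)) * ENNReal.ofReal
      ((π / b) ^ d * rexp (-(π ^ 2 / b) * ‖ξ - η‖ ^ 2)))
    (by unfold phase Function.uncurry; fun_prop) (by simp) hm hi
    (by unfold Function.uncurry; fun_prop)
    (fun ξ η => by rw [norm_sub_rev ξ η, ← neg_sub ‖η‖ ‖ξ‖, neg_sq]) ?_ ?_
  · change ∫⁻ p : ℝ × E, ‖wave h p.1 p.2‖ₑ ^ 2 ∂_ ≤ _ at key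
    rw [lintegral_prod _ hwm.aemeasurable] at key
    rw [show ENNReal.ofReal (2 * (rexp 1 * π * 2 ^ d) / √b) =
      2 * ENNReal.ofReal (rexp 1 * π * 2 ^ d / √b) by
        rw [mul_div_assoc, ENNReal.ofReal_mul (by norm_num)]; simp]
    refine le_trans (le_of_eq ?_) key
    refine lintegral_congr fun t => ?_
    exact (lintegral_gaussMeasure b (hwm.comp measurable_prodMk_left)).symm
  · intro ξ η
    have : ∀ p : ℝ × E, phase p.2 ξ * phase p.1 ‖ξ‖ * starRingEnd ℂ (phase p.2 η * phase p.1 ‖η‖) =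
        phase p.1 (‖ξ‖ - ‖η‖) * phase p.2 (ξ - η) := fun p => by
      rw [map_mul, ← phase_mul_conj, ← phase_mul_conj]; ring
    simp_rw [this]
    rw [integral_prod_mul (fun t : ℝ => phase t (‖ξ‖ - ‖η‖)) (fun x : E => phase x (ξ - η)),
      enorm_mul, enorm_integral_phase hb, enorm_integral_phase hc]
    simp [hd]
  · intro ξ
    simp_rw [ENNReal.ofReal_mul (show 0 ≤ (π / b) ^ d by positivity),
      ← mul_assoc, mul_right_comm _ (ENNReal.ofReal ((π / b) ^ d))]
    simp_rw [mul_comm _ (ENNReal.ofReal ((π / b) ^ d)), mul_assoc]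
    rw [lintegral_const_mul _ (by fun_prop)]
    have h1 := lintegral_radial_mul_gaussian_le (E := E) (φ := fun ρ => ENNReal.ofReal
      ((π / c) ^ (1 / 2 : ℝ) * rexp (-(π ^ 2 / c) * (‖ξ‖ - ρ) ^ 2))) (by fun_prop)
      (A := π ^ 2 / b) (by positivity) ξ
    have h2 : ∫⁻ ρ in Set.Ioi (0 : ℝ), ENNReal.ofReal
      ((π / c) ^ (1 / 2 : ℝ) * rexp (-(π ^ 2 / c) * (‖ξ‖ - ρ) ^ 2)) ≤ 1 := by
      refine (setLIntegral_le_lintegral _ _).trans ?_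
      simp_rw [ENNReal.ofReal_mul (show 0 ≤ (π / c) ^ (1 / 2 : ℝ) by positivity)]
      have h3 := lintegral_gaussian (E := ℝ) (A := π ^ 2 / c) (by positivity) ‖ξ‖
      simp only [Real.norm_eq_abs, sq_abs, Module.finrank_self] at h3
      rw [lintegral_const_mul _ (by fun_prop), h3,
        ← ENNReal.ofReal_mul (by positivity), Nat.cast_one,
        ← Real.mul_rpow (by positivity) (by positivity),
        show π / c * (π / (π ^ 2 / c)) = 1 by field_simp]
      simp
    calc _ ≤ ENNReal.ofReal ((π / b) ^ d) * (ENNReal.ofReal K₀ * 1) := by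
          gcongr
          exact h1.trans (by gcongr)
      _ = _ := by
          rw [mul_one, ← ENNReal.ofReal_mul (by positivity), hK₀]
          congr 1
          rw [show 2 * π / (π ^ 2 / b) = 2 * (b / π) by field_simp, Real.mul_rpow (by norm_num)
            (by positivity), Real.sqrt_div (by positivity), Real.sqrt_sq pi_pos.le]
          have : (π / b) ^ d * (b / π) ^ d = 1 := by
            rw [← Real.mul_rpow (by positivity) (by positivity),
              show π / b * (b / π) = 1 by field_simp, Real.one_rpow]
          calc _ = (rexp 1 * π * 2 ^ d / √b) * ((π / b) ^ d * (b / π) ^ d) := by ring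
            _ = _ := by rw [this]; ring

end Wave

section Weights

/-- The power weight `(1 + ρ) ^ a`. -/
noncomputable def wt (a ρ : ℝ) : ℝ≥0∞ := ENNReal.ofReal ((1 + ρ) ^ a)

@[fun_prop] lemma measurable_wt (a : ℝ) : Measurable (wt a) := by unfold wt; fun_prop

lemma wt_mul (a b : ℝ) {ρ : ℝ} (hρ : 0 ≤ ρ) : wt a ρ * wt b ρ = wt (a + b) ρ := by
  rw [wt, wt, wt, ← ENNReal.ofReal_mul (by positivity), Real.rpow_add (by positivity)]

lemma wt_le_wt {a b : ℝ} (hab : a ≤ b) {ρ : ℝ} (hρ : 0 ≤ ρ) : wt a ρ ≤ wt b ρ :=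
  ENNReal.ofReal_le_ofReal (Real.rpow_le_rpow_of_exponent_le (by linarith) hab)

lemma wt_zero (ρ : ℝ) : wt 0 ρ = 1 := by simp [wt]

lemma wt_rpow (a : ℝ) {p ρ : ℝ} (hp : 0 ≤ p) (hρ : 0 ≤ ρ) : wt a ρ ^ p = wt (a * p) ρ := by
  rw [wt, wt, ENNReal.ofReal_rpow_of_nonneg (by positivity) hp, ← Real.rpow_mul (by positivity)]

/-- A power weight is dominated by a dyadic superposition of Gaussians. -/
lemma wt_neg_le_tsum {γ : ℝ} (hγ : 0 < γ) {ρ : ℝ} (hρ : 0 ≤ ρ) :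
    wt (-γ) ρ ≤ ∑' m : ℕ, ENNReal.ofReal (rexp 4 * 2 ^ (-(m * γ))) *
      ENNReal.ofReal (rexp (-((2 : ℝ) ^ m)⁻¹ ^ 2 * ρ ^ 2)) := by
  obtain ⟨m, hm1, hm2⟩ := exists_nat_pow_near (x := 1 + ρ) (y := (2 : ℝ)) (by linarith) (by norm_num)
  refine le_trans ?_ (ENNReal.le_tsum m)
  rw [← ENNReal.ofReal_mul (by positivity)]
  refine ENNReal.ofReal_le_ofReal ?_
  have h1 : (1 + ρ) ^ (-γ) ≤ 2 ^ (-(m * γ)) := by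
    rw [← mul_neg, Real.rpow_mul (by norm_num), Real.rpow_natCast]
    exact Real.rpow_le_rpow_of_nonpos (by positivity) hm1 (by linarith)
  have h2 : 1 ≤ rexp 4 * rexp (-((2 : ℝ) ^ m)⁻¹ ^ 2 * ρ ^ 2) := by
    rw [← Real.exp_add]
    refine Real.one_le_exp ?_
    have h3 : ((2 : ℝ) ^ m)⁻¹ * ρ ≤ 2 := by
      rw [inv_mul_le_iff₀ (by positivity)]
      rw [pow_succ] at hm2
      linarith
    have h4 : 0 ≤ ((2 : ℝ) ^ m)⁻¹ * ρ := by positivity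
    nlinarith
  calc (1 + ρ) ^ (-γ) ≤ 2 ^ (-(m * γ)) * 1 := by rw [mul_one]; exact h1
    _ ≤ 2 ^ (-(m * γ)) * (rexp 4 * rexp (-((2 : ℝ) ^ m)⁻¹ ^ 2 * ρ ^ 2)) := by gcongr
    _ = _ := by ring

end Weights

section Wave

variable {E : Type*} [NormedAddCommGroup E] [InnerProductSpace ℝ E] [FiniteDimensional ℝ E]
  [MeasurableSpace E] [BorelSpace E]

variable (E) in
/-- Local smoothing with an integrable power weight. -/
lemma exists_lintegral_wave_sq_wt_le [Nontrivial E] {γ : ℝ} (hγ : 1 < γ) :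
    ∃ K : ℝ≥0∞, K ≠ ⊤ ∧ ∀ h : E → ℂ, Measurable h → Integrable h →
      ∫⁻ t : ℝ, ∫⁻ x, wt (-γ) ‖x‖ * ‖wave h t x‖ₑ ^ 2 ≤ K * ∫⁻ ξ, ‖h ξ‖ₑ ^ 2 := by
  set M : ℝ := 2 * (rexp 1 * π * 2 ^ (Module.finrank ℝ E / 2 : ℝ)) with hM
  let c : ℕ → ℝ≥0∞ := fun m => ENNReal.ofReal (rexp 4 * 2 ^ (-(m * γ))) * ENNReal.ofReal (M * 2 ^ m)
  have hc : ∑' m, c m ≠ ⊤ := by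
    have h1 : ∀ m, c m = ENNReal.ofReal (rexp 4 * M * (2 ^ (1 - γ)) ^ m) := fun m => by
      simp only [c]
      rw [← ENNReal.ofReal_mul (by positivity), ← Real.rpow_natCast (2 ^ (1 - γ)),
        ← Real.rpow_mul (by norm_num), show (1 - γ) * m = -(m * γ) + m by ring,
        Real.rpow_add (by norm_num), Real.rpow_natCast]
      ring_nf
    simp_rw [h1]
    have h2 : Summable fun m : ℕ => rexp 4 * M * ((2 : ℝ) ^ (1 - γ)) ^ m :=
      (summable_geometric_of_lt_one (by positivity)
        (Real.rpow_lt_one_of_one_lt_of_neg (by norm_num) (by linarith))).mul_left _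
    rw [← ENNReal.ofReal_tsum_of_nonneg (fun m => by positivity) h2]
    exact ofReal_ne_top
  refine ⟨_, hc, fun h hm hi => ?_⟩
  have hw : Measurable fun p : ℝ × E => ‖wave h p.1 p.2‖ₑ ^ 2 :=
    (measurable_wave hm).enorm.pow_const 2
  let g : ℕ → ℝ × E → ℝ≥0∞ := fun m p => ENNReal.ofReal (rexp 4 * 2 ^ (-(m * γ))) *
      (ENNReal.ofReal (rexp (-((2 : ℝ) ^ m)⁻¹ ^ 2 * ‖p.2‖ ^ 2)) * ‖wave h p.1 p.2‖ₑ ^ 2)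
  have hg : ∀ m, Measurable (g m) := fun m => by fun_prop
  calc _ ≤ ∫⁻ t : ℝ, ∫⁻ x, ∑' m, g m (t, x) := by
        gcongr with t x
        simp only [g]
        simp_rw [← mul_assoc]
        rw [ENNReal.tsum_mul_right]
        gcongr
        exact wt_neg_le_tsum (by linarith) (norm_nonneg _)
    _ = ∑' m, ∫⁻ t : ℝ, ∫⁻ x, g m (t, x) := by
        rw [← lintegral_tsum fun m => (hg m).lintegral_prod_right'.aemeasurable]
        refine lintegral_congr fun t => ?_
        exact lintegral_tsum fun m => ((hg m).comp measurable_prodMk_left).aemeasurable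
    _ ≤ ∑' m, c m * ∫⁻ ξ, ‖h ξ‖ₑ ^ 2 := by
        refine ENNReal.tsum_le_tsum fun m => ?_
        have h3 : ∀ t : ℝ, ∫⁻ x, g m (t, x) = ENNReal.ofReal (rexp 4 * 2 ^ (-(m * γ))) *
            ∫⁻ x, ENNReal.ofReal (rexp (-((2 : ℝ) ^ m)⁻¹ ^ 2 * ‖x‖ ^ 2)) * ‖wave h t x‖ₑ ^ 2 :=
          fun t => lintegral_const_mul _ (Measurable.mul (by fun_prop)
            (hw.comp measurable_prodMk_left))
        simp_rw [h3]
        rw [lintegral_const_mul _ (Measurable.lintegral_prod_right' (f := fun p : ℝ × E =>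
          ENNReal.ofReal (rexp (-((2 : ℝ) ^ m)⁻¹ ^ 2 * ‖p.2‖ ^ 2)) * ‖wave h p.1 p.2‖ₑ ^ 2)
          (by fun_prop))]
        have h4 := lintegral_wave_sq_gauss_le hm hi (b := ((2 : ℝ) ^ m)⁻¹ ^ 2) (by positivity)
        rw [Real.sqrt_sq (by positivity), div_inv_eq_mul] at h4
        simp only [c]
        rw [mul_assoc]
        gcongr
    _ = _ := ENNReal.tsum_mul_right

/-- A function is radial if its values depend only on the norm of the argument. -/
def IsRadial {F : Type*} (h : E → F) : Prop := ∀ x y, ‖x‖ = ‖y‖ → h x = h y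

lemma exists_isometry_map_eq {x y : E} (hxy : ‖x‖ = ‖y‖) : ∃ L : E ≃ₗᵢ[ℝ] E, L x = y :=
  ⟨_, Submodule.reflection_sub hxy⟩

lemma IsRadial.wave {h : E → ℂ} (hr : IsRadial h) (t : ℝ) :
    IsRadial (RadialStrichartz.wave h t) := by
  intro x y hxy
  obtain ⟨L, rfl⟩ := exists_isometry_map_eq hxy
  unfold RadialStrichartz.wave
  symm
  rw [← L.measurePreserving.integral_comp L.toHomeomorph.measurableEmbedding]
  refine integral_congr_ae (.of_forall fun ξ => ?_)
  simp only [phase, L.inner_map_map, L.norm_map, hr (L ξ) ξ (L.norm_map ξ)]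

lemma IsRadial.eq_norm_smul {F : Type*} {h : E → F} (hr : IsRadial h) {e : E} (he : ‖e‖ = 1)
    (x : E) : h x = h (‖x‖ • e) :=
  hr _ _ (by simp [norm_smul, he])

lemma gauss_le_mul (x y : E) : rexp (-π * ‖x - y‖ ^ 2) ≤
    rexp (-(π / 2) * (‖x‖ - ‖y‖) ^ 2) * rexp (-(π / 2) * ‖x - y‖ ^ 2) := by
  rw [← Real.exp_add, Real.exp_le_exp]
  have h1 : (‖x‖ - ‖y‖) ^ 2 ≤ ‖x - y‖ ^ 2 := by
    rw [← sq_abs]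
    exact pow_le_pow_left₀ (abs_nonneg _) (abs_norm_sub_norm_le x y) 2
  nlinarith [pi_pos]

variable (E) in
/-- Gaussian averages of radial functions gain the decay of the volume of spheres. -/
lemma exists_lintegral_radial_gauss_le [Nontrivial E] :
    ∃ K : ℝ≥0∞, K ≠ ⊤ ∧ ∀ φ : ℝ → ℝ≥0∞, Measurable φ → ∀ x : E,
      ∫⁻ y : E, φ ‖y‖ * ENNReal.ofReal (rexp (-π * ‖x - y‖ ^ 2)) ≤
        K * ∫⁻ y : E, φ ‖y‖ * (wt (-(Module.finrank ℝ E - 1 : ℝ)) ‖y‖ *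
          ENNReal.ofReal (rexp (-(π / 2) * (‖x‖ - ‖y‖) ^ 2))) := by
  set n := Module.finrank ℝ E with hn
  have hn1 : 1 ≤ n := Module.finrank_pos
  set d : ℝ := (n : ℝ) - 1 with hd
  have hdn : d = ((n - 1 : ℕ) : ℝ) := by rw [hd]; push_cast [Nat.cast_sub hn1]; ring
  have hd0 : 0 ≤ d := by rw [hdn]; positivity
  set σ := (volume : Measure E).toSphere Set.univ with hσ
  have hσ0 : σ ≠ 0 := by
    rw [hσ, Ne, Measure.measure_univ_eq_zero]; exact Measure.toSphere_ne_zero _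
  have hσt : σ ≠ ⊤ := measure_ne_top _ _
  set C₁ : ℝ≥0∞ := ENNReal.ofReal (rexp 1 * √(π / 2) * (2 * π / (π / 2)) ^ (n / 2 : ℝ)) with hC₁
  set D : ℝ≥0∞ := ENNReal.ofReal (2 ^ d) with hD
  refine ⟨D + C₁ * σ⁻¹ * D, by finiteness, fun φ hφ x => ?_⟩
  let Γ : ℝ → ℝ≥0∞ := fun ρ => ENNReal.ofReal (rexp (-(π / 2) * (‖x‖ - ρ) ^ 2))
  have hΓ : Measurable Γ := by fun_prop
  let I : ℝ≥0∞ := ∫⁻ y : E, φ ‖y‖ * (wt (-d) ‖y‖ * Γ ‖y‖)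
  let φ₁ : ℝ → ℝ≥0∞ := fun ρ => (Set.Ioi (1 : ℝ)).indicator (fun ρ => φ ρ * Γ ρ) ρ
  have hφ₁ : Measurable φ₁ := (hφ.mul hΓ).indicator measurableSet_Ioi
  have hsplit : ∀ y : E, φ ‖y‖ * ENNReal.ofReal (rexp (-π * ‖x - y‖ ^ 2)) ≤
      D * (φ ‖y‖ * (wt (-d) ‖y‖ * Γ ‖y‖)) +
        φ₁ ‖y‖ * ENNReal.ofReal (rexp (-(π / 2) * ‖x - y‖ ^ 2)) := fun y => by
    have h1 : ENNReal.ofReal (rexp (-π * ‖x - y‖ ^ 2)) ≤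
        Γ ‖y‖ * ENNReal.ofReal (rexp (-(π / 2) * ‖x - y‖ ^ 2)) := by
      simp only [Γ]
      rw [← ENNReal.ofReal_mul (exp_pos _).le]
      exact ENNReal.ofReal_le_ofReal (gauss_le_mul x y)
    by_cases hy : 1 < ‖y‖
    · refine le_trans ?_ le_add_self
      simp only [φ₁, Set.indicator_of_mem (Set.mem_Ioi.2 hy), mul_assoc]
      gcongr
    · refine le_trans ?_ le_self_add
      have h2 : 1 ≤ D * wt (-d) ‖y‖ := by
        rw [hD, wt, ← ENNReal.ofReal_mul (by positivity), ← ENNReal.ofReal_one]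
        refine ENNReal.ofReal_le_ofReal ?_
        rw [Real.rpow_neg (by positivity), ← div_eq_mul_inv, one_le_div (by positivity)]
        exact Real.rpow_le_rpow (by positivity) (by linarith) hd0
      have h3 : ENNReal.ofReal (rexp (-(π / 2) * ‖x - y‖ ^ 2)) ≤ 1 := by
        rw [← ENNReal.ofReal_one]
        exact ENNReal.ofReal_le_ofReal (Real.exp_le_one_iff.2 (by
          have := pi_pos
          have : 0 ≤ π / 2 * ‖x - y‖ ^ 2 := by positivity
          linarith))
      calc _ ≤ φ ‖y‖ * (Γ ‖y‖ * 1) := by gcongr; exact h1.trans (by gcongr)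
        _ ≤ φ ‖y‖ * (Γ ‖y‖ * (D * wt (-d) ‖y‖)) := by gcongr
        _ = _ := by ring
  have hfar : ∫⁻ ρ in Set.Ioi (0 : ℝ), φ₁ ρ ≤ σ⁻¹ * (D * I) := by
    rw [← ENNReal.mul_le_iff_le_inv hσ0 hσt]
    let ψ : ℝ → ℝ≥0∞ := fun ρ => φ₁ ρ * ENNReal.ofReal ((ρ ^ (n - 1))⁻¹)
    have hψ : Measurable ψ := hφ₁.mul (by fun_prop)
    have h1 := lintegral_radial (E := E) hψ
    have h2 : ∫⁻ ρ in Set.Ioi (0 : ℝ), ENNReal.ofReal (ρ ^ (n - 1)) * ψ ρ =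
        ∫⁻ ρ in Set.Ioi (0 : ℝ), φ₁ ρ := by
      refine setLIntegral_congr_fun measurableSet_Ioi fun ρ hρ => ?_
      simp only [ψ]
      have hρ' : (0 : ℝ) < ρ := hρ
      rw [mul_left_comm, ← ENNReal.ofReal_mul (by positivity),
        mul_inv_cancel₀ (by positivity), ENNReal.ofReal_one, mul_one]
    rw [h2] at h1
    rw [← h1, ← lintegral_const_mul _ (by fun_prop)]
    refine lintegral_mono fun y => ?_
    by_cases hy : 1 < ‖y‖
    · simp only [ψ, φ₁, Set.indicator_of_mem (Set.mem_Ioi.2 hy)]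
      have h2 : ENNReal.ofReal ((‖y‖ ^ (n - 1))⁻¹) ≤ D * wt (-d) ‖y‖ := by
        rw [hD, wt, ← ENNReal.ofReal_mul (by positivity)]
        refine ENNReal.ofReal_le_ofReal ?_
        rw [Real.rpow_neg (by positivity), ← div_eq_mul_inv, inv_eq_one_div,
          div_le_div_iff₀ (by positivity) (by positivity), one_mul, ← Real.rpow_natCast, ← hdn,
          ← Real.mul_rpow (by norm_num) (by positivity)]
        exact Real.rpow_le_rpow (by positivity) (by linarith) hd0
      calc _ ≤ φ ‖y‖ * Γ ‖y‖ * (D * wt (-d) ‖y‖) := by gcongr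
        _ = _ := by ring
    · simp [ψ, φ₁, hy]
  calc _ ≤ ∫⁻ y : E, (D * (φ ‖y‖ * (wt (-d) ‖y‖ * Γ ‖y‖)) +
        φ₁ ‖y‖ * ENNReal.ofReal (rexp (-(π / 2) * ‖x - y‖ ^ 2))) := lintegral_mono hsplit
    _ = D * I + ∫⁻ y : E, φ₁ ‖y‖ * ENNReal.ofReal (rexp (-(π / 2) * ‖x - y‖ ^ 2)) := by
        rw [lintegral_add_left (by fun_prop), lintegral_const_mul _ (by fun_prop)]
    _ ≤ D * I + C₁ * (σ⁻¹ * (D * I)) := by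
        gcongr
        exact (lintegral_radial_mul_gaussian_le hφ₁ (by positivity) x).trans (by gcongr)
    _ = _ := by ring

end Wave

lemma lintegral_rpow_le {X : Type*} [MeasurableSpace X] (μ : Measure X) {p : ℝ} (hp : 1 ≤ p)
    {f : X → ℝ≥0∞} (hf : AEMeasurable f μ) :
    (∫⁻ x, f x ∂μ) ^ p ≤ μ Set.univ ^ (p - 1) * ∫⁻ x, f x ^ p ∂μ := by
  have hp0 : 0 < p := by linarith
  have h := eLpNorm'_le_eLpNorm'_mul_rpow_measure_univ one_pos hp hf.aestronglyMeasurable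
  simp only [eLpNorm'_eq_lintegral_enorm, enorm_eq_self, ENNReal.rpow_one, div_one] at h
  calc _ ≤ ((∫⁻ x, f x ^ p ∂μ) ^ (1 / p) * μ Set.univ ^ (1 - 1 / p)) ^ p := by gcongr
    _ = _ := by
      rw [ENNReal.mul_rpow_of_nonneg _ _ hp0.le, ← ENNReal.rpow_mul, ← ENNReal.rpow_mul,
        one_div_mul_cancel hp0.ne', ENNReal.rpow_one, mul_comm, sub_mul, one_mul,
        one_div_mul_cancel hp0.ne']

section Wave

variable {E : Type*} [NormedAddCommGroup E] [InnerProductSpace ℝ E] [FiniteDimensional ℝ E]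
  [MeasurableSpace E] [BorelSpace E]

lemma measurable_wave_right {h : E → ℂ} (hm : Measurable h) (t : ℝ) : Measurable (wave h t) :=
  (measurable_wave hm).comp (g := Function.uncurry (wave h)) (f := fun x => (t, x)) (by fun_prop)

/-- Radial integrable Fourier data supported in the ball of radius two. -/
structure IsUnitData (H : E → ℂ) : Prop where
  measurable : Measurable H
  integrable : Integrable H
  radial : IsRadial H
  support : ∀ ξ, 2 < ‖ξ‖ → H ξ = 0

/-- Multiplication by `exp (π ‖ξ‖²)`, the inverse of the Gaussian averaging operator. -/
noncomputable def gaussLift (H : E → ℂ) (ξ : E) : ℂ := (rexp (π * ‖ξ‖ ^ 2) : ℂ) * H ξ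

lemma IsUnitData.norm_gaussLift_le {H : E → ℂ} (hH : IsUnitData H) (ξ : E) :
    ‖gaussLift H ξ‖ ≤ rexp (4 * π) * ‖H ξ‖ := by
  rw [gaussLift, norm_mul, Complex.norm_real, norm_of_nonneg (exp_pos _).le]
  by_cases hξ : 2 < ‖ξ‖
  · simp [hH.support ξ hξ]
  · have : ‖ξ‖ ^ 2 ≤ 2 ^ 2 := pow_le_pow_left₀ (norm_nonneg _) (not_lt.1 hξ) 2
    have : π * ‖ξ‖ ^ 2 ≤ 4 * π := by nlinarith [pi_pos]
    gcongr

lemma IsUnitData.gaussLift {H : E → ℂ} (hH : IsUnitData H) : IsUnitData (gaussLift H) := by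
  have hm : Measurable (RadialStrichartz.gaussLift H) := by
    have := hH.measurable
    unfold RadialStrichartz.gaussLift
    fun_prop
  refine ⟨hm, ?_, fun x y hxy => ?_, fun ξ hξ => ?_⟩
  · refine (hH.integrable.norm.const_mul (rexp (4 * π))).mono' hm.aestronglyMeasurable
      (.of_forall hH.norm_gaussLift_le)
  · simp only [RadialStrichartz.gaussLift, hxy, hH.radial x y hxy]
  · simp [RadialStrichartz.gaussLift, hH.support ξ hξ]

lemma IsUnitData.lintegral_gaussLift_sq_le {H : E → ℂ} (hH : IsUnitData H) :
    ∫⁻ ξ, ‖RadialStrichartz.gaussLift H ξ‖ₑ ^ 2 ≤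
      ENNReal.ofReal (rexp (4 * π)) ^ 2 * ∫⁻ ξ, ‖H ξ‖ₑ ^ 2 := by
  rw [← lintegral_const_mul _ (hH.measurable.enorm.pow_const 2)]
  refine lintegral_mono fun ξ => ?_
  rw [← mul_pow, ← ofReal_norm, ← ofReal_norm, ← ENNReal.ofReal_mul (exp_pos _).le]
  gcongr
  exact hH.norm_gaussLift_le ξ

lemma phase_add_left (x z w : E) : phase (x + z) w = phase x w * phase z w := by
  simp only [phase, ← Complex.exp_add, inner_add_left]
  push_cast
  ring_nf

lemma wave_eq_integral_gaussLift {H : E → ℂ} (hH : IsUnitData H) (t : ℝ) (x : E) :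
    wave H t x = ∫ z, wave (gaussLift H) t (x + z) ∂gaussMeasure E π := by
  have := isFiniteMeasure_gaussMeasure (E := E) pi_pos
  unfold wave
  rw [integral_integral_swap]
  · refine integral_congr_ae (.of_forall fun ξ => ?_)
    simp only
    have h1 : ∀ z, phase (x + z) ξ * phase t ‖ξ‖ * gaussLift H ξ =
        phase z ξ * (phase x ξ * phase t ‖ξ‖ * gaussLift H ξ) := fun z => by
      rw [phase_add_left]; ring
    simp_rw [h1]
    rw [integral_mul_const, integral_phase pi_pos, gaussLift, div_self pi_ne_zero,
      Real.one_rpow, one_mul, show -(π ^ 2 / π) * ‖ξ‖ ^ 2 = -(π * ‖ξ‖ ^ 2) by field_simp,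
      Real.exp_neg]
    have : ((rexp (π * ‖ξ‖ ^ 2) : ℝ) : ℂ) ≠ 0 := by exact_mod_cast (exp_pos _).ne'
    push_cast at this ⊢
    field_simp
  · refine Integrable.bdd_mul (c := 1) (hH.gaussLift.integrable.comp_snd (gaussMeasure E π)) ?_
      (.of_forall fun z => by simp)
    unfold phase
    fun_prop

lemma wave_sq_le_lintegral_gauss {H : E → ℂ} (hH : IsUnitData H) (t : ℝ) (x : E) :
    ‖wave H t x‖ₑ ^ 2 ≤
      ∫⁻ y, ‖wave (gaussLift H) t y‖ₑ ^ 2 * ENNReal.ofReal (rexp (-π * ‖x - y‖ ^ 2)) := by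
  have hwm : Measurable (wave (gaussLift H) t) :=
    measurable_wave_right hH.gaussLift.measurable t
  have h1 : gaussMeasure E π Set.univ = 1 := by
    rw [gaussMeasure, withDensity_apply _ MeasurableSet.univ, Measure.restrict_univ]
    have := lintegral_gaussian pi_pos (0 : E)
    simpa [pi_ne_zero] using this
  have h2 : ‖wave H t x‖ₑ ≤ ∫⁻ z, ‖wave (gaussLift H) t (x + z)‖ₑ ∂gaussMeasure E π := by
    rw [wave_eq_integral_gaussLift hH]
    exact enorm_integral_le_lintegral_enorm _
  have h3 := lintegral_rpow_le (gaussMeasure E π) (p := 2) (by norm_num)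
    (f := fun z => ‖wave (gaussLift H) t (x + z)‖ₑ) (by fun_prop)
  simp only [h1, ENNReal.one_rpow, one_mul, ENNReal.rpow_two] at h3
  calc _ ≤ _ := by gcongr
    _ ≤ _ := h3
    _ = ∫⁻ z, (fun y => ‖wave (gaussLift H) t y‖ₑ ^ 2 *
          ENNReal.ofReal (rexp (-π * ‖x - y‖ ^ 2))) (x + z) := by
        rw [lintegral_gaussMeasure _ (by fun_prop)]
        refine lintegral_congr fun z => ?_
        simp [mul_comm]
    _ = _ := lintegral_add_left_eq_self (fun y => ‖wave (gaussLift H) t y‖ₑ ^ 2 *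
          ENNReal.ofReal (rexp (-π * ‖x - y‖ ^ 2))) x

lemma wt_mul_gauss_le {a : ℝ} (ha : 0 ≤ a) {x y : ℝ} (hx : 0 ≤ x) (hy : 0 ≤ y) :
    wt a x * ENNReal.ofReal (rexp (-(π / 2) * (x - y) ^ 2)) ≤
      ENNReal.ofReal (rexp (a ^ 2)) * wt a y := by
  rw [wt, wt, ← ENNReal.ofReal_mul (by positivity), ← ENNReal.ofReal_mul (by positivity)]
  refine ENNReal.ofReal_le_ofReal ?_
  have h1 : (1 + x) ^ a ≤ (1 + y) ^ a * rexp (a * |x - y|) := by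
    have : 1 + x ≤ (1 + y) * rexp |x - y| := by
      have h2 := Real.add_one_le_exp |x - y|
      have h3 := le_abs_self (x - y)
      nlinarith [abs_nonneg (x - y)]
    calc (1 + x) ^ a ≤ ((1 + y) * rexp |x - y|) ^ a := by gcongr
      _ = _ := by
        rw [Real.mul_rpow (by positivity) (exp_pos _).le, ← Real.exp_mul, mul_comm a]
  calc _ ≤ (1 + y) ^ a * rexp (a * |x - y|) * rexp (-(π / 2) * (x - y) ^ 2) := by gcongr
    _ = rexp (a * |x - y| + -(π / 2) * (x - y) ^ 2) * (1 + y) ^ a := by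
        rw [Real.exp_add]; ring
    _ ≤ _ := by
        gcongr
        rw [← sq_abs (x - y)]
        nlinarith [sq_nonneg (a - |x - y| / 2), pi_gt_three, sq_nonneg |x - y|, sq_nonneg a]

variable (E) in
/-- Weighted pointwise bound for radial waves with unit frequency. -/
lemma exists_wave_sq_le [Nontrivial E] {β : ℝ} (hβ : β ≤ Module.finrank ℝ E - 1) :
    ∃ K : ℝ≥0∞, K ≠ ⊤ ∧ ∀ H : E → ℂ, IsUnitData H → ∀ (t : ℝ) (x : E),
      wt (Module.finrank ℝ E - 1 - β) ‖x‖ * ‖wave H t x‖ₑ ^ 2 ≤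
        K * ∫⁻ y, wt (-β) ‖y‖ * ‖wave (gaussLift H) t y‖ₑ ^ 2 := by
  obtain ⟨K, hK, hb⟩ := exists_lintegral_radial_gauss_le E
  set d : ℝ := Module.finrank ℝ E - 1 with hd
  refine ⟨K * ENNReal.ofReal (rexp ((d - β) ^ 2)), by finiteness, fun H hH t x => ?_⟩
  obtain ⟨e, he⟩ := exists_norm_eq E zero_le_one
  have hwm : Measurable (wave (gaussLift H) t) :=
    measurable_wave_right hH.gaussLift.measurable t
  let φ : ℝ → ℝ≥0∞ := fun ρ => ‖wave (gaussLift H) t (ρ • e)‖ₑ ^ 2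
  have hφ : Measurable φ := by fun_prop
  have hφe : ∀ y, ‖wave (gaussLift H) t y‖ₑ ^ 2 = φ ‖y‖ := fun y => by
    simp only [φ]
    rw [(hH.gaussLift.radial.wave t).eq_norm_smul he y]
  have h1 := wave_sq_le_lintegral_gauss hH t x
  simp_rw [hφe] at h1 ⊢
  calc _ ≤ wt (d - β) ‖x‖ * (K * ∫⁻ y : E, φ ‖y‖ * (wt (-d) ‖y‖ *
          ENNReal.ofReal (rexp (-(π / 2) * (‖x‖ - ‖y‖) ^ 2)))) := by
        gcongr; exact h1.trans (hb φ hφ x)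
    _ = K * ∫⁻ y : E, φ ‖y‖ * (wt (-d) ‖y‖ *
          (wt (d - β) ‖x‖ * ENNReal.ofReal (rexp (-(π / 2) * (‖x‖ - ‖y‖) ^ 2)))) := by
        rw [mul_left_comm, ← lintegral_const_mul _ (by fun_prop)]
        congr 1
        refine lintegral_congr fun y => ?_
        ring
    _ ≤ K * ∫⁻ y : E, φ ‖y‖ * (wt (-d) ‖y‖ *
          (ENNReal.ofReal (rexp ((d - β) ^ 2)) * wt (d - β) ‖y‖)) := by
        refine mul_le_mul_right (lintegral_mono fun y => mul_le_mul_right (mul_le_mul_right ?_ _) _) _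
        exact wt_mul_gauss_le (by linarith) (norm_nonneg x) (norm_nonneg y)
    _ = _ := by
        rw [mul_assoc, ← lintegral_const_mul (ENNReal.ofReal (rexp ((d - β) ^ 2))) (by fun_prop)]
        congr 1
        refine lintegral_congr fun y => ?_
        rw [show -β = -d + (d - β) by ring, ← wt_mul _ _ (norm_nonneg _)]
        ring

end Wave

section Wave

variable {E : Type*} [NormedAddCommGroup E] [InnerProductSpace ℝ E] [FiniteDimensional ℝ E]
  [MeasurableSpace E] [BorelSpace E]

/-- The weighted energy controlling a unit-frequency wave at time `t`. -/
noncomputable def locEnergy (β : ℝ) (H : E → ℂ) (t : ℝ) : ℝ≥0∞ :=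
  ∫⁻ y, wt (-β) ‖y‖ * (‖wave H t y‖ₑ ^ 2 + ‖wave (gaussLift H) t y‖ₑ ^ 2)

lemma eLpNorm_two_eq {X F : Type*} [MeasurableSpace X] (μ : Measure X) [ENorm F] (H : X → F) :
    eLpNorm H 2 μ = (∫⁻ ξ, ‖H ξ‖ₑ ^ 2 ∂μ) ^ (1 / 2 : ℝ) := by
  rw [eLpNorm_eq_lintegral_rpow_enorm_toReal two_ne_zero ofNat_ne_top]
  simp

lemma measurable_wave_sq_add {H : E → ℂ} (hH : IsUnitData H) :
    Measurable fun p : ℝ × E => ‖wave H p.1 p.2‖ₑ ^ 2 + ‖wave (gaussLift H) p.1 p.2‖ₑ ^ 2 :=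
  ((measurable_wave hH.measurable).enorm.pow_const 2).add
    ((measurable_wave hH.gaussLift.measurable).enorm.pow_const 2)

lemma measurable_locEnergy (β : ℝ) {H : E → ℂ} (hH : IsUnitData H) :
    Measurable (locEnergy β H) := by
  have := measurable_wave_sq_add hH
  exact Measurable.lintegral_prod_right' (f := fun p : ℝ × E =>
    wt (-β) ‖p.2‖ * (‖wave H p.1 p.2‖ₑ ^ 2 + ‖wave (gaussLift H) p.1 p.2‖ₑ ^ 2)) (by fun_prop)

variable (E) in
/-- The spatial `L^r` norm of a unit-frequency radial wave is controlled by the weighted energy. -/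
lemma exists_eLpNorm_wave_le [Nontrivial E] {β : ℝ} (hβ0 : 0 ≤ β) {r : ℝ≥0∞} (hr : 2 ≤ r)
    (hβ : β ≤ (Module.finrank ℝ E - 1) * (1 - 2 / r.toReal)) :
    ∃ K : ℝ≥0∞, K ≠ ⊤ ∧ ∀ H : E → ℂ, IsUnitData H → ∀ t : ℝ,
      eLpNorm (wave H t) r volume ≤ K * locEnergy β H t ^ (1 / 2 : ℝ) := by
  set d : ℝ := Module.finrank ℝ E - 1 with hd
  have hd0 : 0 ≤ d := by
    have : 1 ≤ Module.finrank ℝ E := Module.finrank_pos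
    have : (1 : ℝ) ≤ Module.finrank ℝ E := by exact_mod_cast this
    linarith
  have hβd : β ≤ d := hβ.trans (mul_le_of_le_one_right hd0 (by
    have : 0 ≤ 2 / r.toReal := by positivity
    linarith))
  obtain ⟨K, hK, hb⟩ := exists_wave_sq_le E hβd
  have hpt : ∀ H : E → ℂ, IsUnitData H → ∀ (t : ℝ) (x : E),
      wt (d - β) ‖x‖ * ‖wave H t x‖ₑ ^ 2 ≤ K * locEnergy β H t := fun H hH t x => by
    refine (hb H hH t x).trans ?_
    gcongr
    exact lintegral_mono fun y => by gcongr; exact le_add_self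
  by_cases hrt : r = ⊤
  · subst hrt
    refine ⟨K ^ (1 / 2 : ℝ), by finiteness, fun H hH t => ?_⟩
    rw [eLpNorm_exponent_top]
    refine eLpNormEssSup_le_of_ae_enorm_bound (.of_forall fun x => ?_)
    rw [← ENNReal.mul_rpow_of_nonneg _ _ (by norm_num)]
    rw [one_div, ENNReal.le_rpow_inv_iff (by norm_num), ENNReal.rpow_two]
    refine le_trans ?_ (hpt H hH t x)
    refine le_mul_of_one_le_left' ?_
    rw [← wt_zero ‖x‖]
    exact wt_le_wt (by linarith) (norm_nonneg _)
  · have hr0 : r ≠ 0 := (two_pos.trans_le hr).ne'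
    have hr2 : 2 ≤ r.toReal := by
      have := ENNReal.toReal_mono hrt hr; simpa using this
    set ρ := r.toReal with hρ
    set θ : ℝ := (ρ - 2) / 2 with hθ
    have hθ0 : 0 ≤ θ := by rw [hθ]; linarith
    refine ⟨K ^ (θ / ρ), by finiteness, fun H hH t => ?_⟩
    have hwm := measurable_wave_right hH.measurable t
    rw [eLpNorm_eq_lintegral_rpow_enorm_toReal hr0 hrt, ← hρ]
    have h1 : ∀ x, ‖wave H t x‖ₑ ^ ρ ≤
        (K * locEnergy β H t) ^ θ * (wt (-β) ‖x‖ *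
          (‖wave H t x‖ₑ ^ 2 + ‖wave (gaussLift H) t x‖ₑ ^ 2)) := fun x => by
      have h2 : ‖wave H t x‖ₑ ^ ρ = (‖wave H t x‖ₑ ^ 2) ^ θ * ‖wave H t x‖ₑ ^ 2 := by
        rw [← ENNReal.rpow_two, ← ENNReal.rpow_mul, ← ENNReal.rpow_add_of_nonneg _ _ (by linarith)
          (by norm_num)]
        congr 1
        rw [hθ]; ring
      have h3 : (‖wave H t x‖ₑ ^ 2) ≤ wt (-(d - β)) ‖x‖ * (K * locEnergy β H t) := by
        calc _ = wt (-(d - β)) ‖x‖ * (wt (d - β) ‖x‖ * ‖wave H t x‖ₑ ^ 2) := by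
              rw [← mul_assoc, wt_mul _ _ (norm_nonneg _), neg_add_cancel, wt_zero, one_mul]
          _ ≤ _ := mul_le_mul_right (hpt H hH t x) _
      have h4 : wt (-(d - β)) ‖x‖ ^ θ ≤ wt (-β) ‖x‖ := by
        rw [wt_rpow _ hθ0 (norm_nonneg _)]
        refine wt_le_wt ?_ (norm_nonneg _)
        have h5 : β * ρ ≤ d * (ρ - 2) := by
          have := mul_le_mul_of_nonneg_right hβ (show 0 ≤ ρ by linarith)
          rwa [mul_assoc, show (1 - 2 / ρ) * ρ = ρ - 2 by field_simp] at this
        rw [hθ]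
        nlinarith
      rw [h2]
      calc _ ≤ (wt (-(d - β)) ‖x‖ * (K * locEnergy β H t)) ^ θ * ‖wave H t x‖ₑ ^ 2 := by gcongr
        _ ≤ (wt (-β) ‖x‖ * (K * locEnergy β H t) ^ θ) * ‖wave H t x‖ₑ ^ 2 := by
            rw [ENNReal.mul_rpow_of_nonneg _ _ hθ0]; gcongr
        _ = (K * locEnergy β H t) ^ θ * (wt (-β) ‖x‖ * ‖wave H t x‖ₑ ^ 2) := by ring
        _ ≤ _ := by gcongr; exact le_self_add
    have hm2 : Measurable fun x => wt (-β) ‖x‖ *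
        (‖wave H t x‖ₑ ^ 2 + ‖wave (gaussLift H) t x‖ₑ ^ 2) := by
      have := measurable_wave_right hH.gaussLift.measurable t
      fun_prop
    calc _ ≤ ((K * locEnergy β H t) ^ θ * locEnergy β H t) ^ (1 / ρ) := by
          gcongr
          exact (lintegral_mono h1).trans (lintegral_const_mul _ hm2).le
      _ = _ := by
          rw [ENNReal.mul_rpow_of_nonneg _ _ hθ0, mul_assoc,
            ENNReal.mul_rpow_of_nonneg _ _ (by positivity), ← ENNReal.rpow_mul, mul_one_div]
          congr 1
          nth_rewrite 2 [← ENNReal.rpow_one (locEnergy β H t)]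
          rw [← ENNReal.rpow_add_of_nonneg _ _ hθ0 zero_le_one, ← ENNReal.rpow_mul]
          congr 1
          rw [hθ]
          field_simp
          ring

variable (E) in
/-- The temporal `L^q` norm of the weighted energy. -/
lemma exists_eLpNorm_locEnergy_le [Nontrivial E] {β : ℝ} {q : ℝ≥0∞} (hq : 2 ≤ q)
    (hβ : 2 / q.toReal < β) :
    ∃ K : ℝ≥0∞, K ≠ ⊤ ∧ ∀ H : E → ℂ, IsUnitData H →
      eLpNorm (fun t => locEnergy β H t ^ (1 / 2 : ℝ)) q volume ≤ K * eLpNorm H 2 volume := by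
  have hβ0 : 0 < β := lt_of_le_of_lt (by positivity) hβ
  set D : ℝ≥0∞ := ENNReal.ofReal (rexp (4 * π)) ^ 2 with hD
  have hDt : D ≠ ⊤ := by finiteness
  have henergy : ∀ H : E → ℂ, IsUnitData H → ∀ t : ℝ,
      ∫⁻ y, (‖wave H t y‖ₑ ^ 2 + ‖wave (gaussLift H) t y‖ₑ ^ 2) ≤
        (2 * (1 + D)) * ∫⁻ ξ, ‖H ξ‖ₑ ^ 2 := fun H hH t => by
    have := measurable_wave_right hH.measurable t
    rw [lintegral_add_left (by fun_prop)]
    calc _ ≤ 2 * (∫⁻ ξ, ‖H ξ‖ₑ ^ 2) + 2 * (D * ∫⁻ ξ, ‖H ξ‖ₑ ^ 2) := by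
          gcongr
          · exact lintegral_wave_sq_le hH.measurable hH.integrable t
          · refine (lintegral_wave_sq_le hH.gaussLift.measurable hH.gaussLift.integrable t).trans ?_
            gcongr
            exact hH.lintegral_gaussLift_sq_le
      _ = _ := by ring
  by_cases hqt : q = ⊤
  · subst hqt
    refine ⟨(2 * (1 + D)) ^ (1 / 2 : ℝ), by finiteness, fun H hH => ?_⟩
    rw [eLpNorm_exponent_top, eLpNorm_two_eq]
    refine eLpNormEssSup_le_of_ae_enorm_bound (.of_forall fun t => ?_)
    rw [enorm_eq_self, ← ENNReal.mul_rpow_of_nonneg _ _ (by norm_num)]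
    gcongr
    refine le_trans (lintegral_mono fun y => ?_) (henergy H hH t)
    refine mul_le_of_le_one_left' ?_
    rw [← wt_zero ‖y‖]
    exact wt_le_wt (by linarith) (norm_nonneg _)
  · have hq0 : q ≠ 0 := (two_pos.trans_le hq).ne'
    have hq2 : 2 ≤ q.toReal := by
      have := ENNReal.toReal_mono hqt hq; simpa using this
    set κ := q.toReal with hκ
    set p : ℝ := κ / 2 with hp
    have hp1 : 1 ≤ p := by rw [hp]; linarith
    have hγ : 1 < β * p := by
      rw [div_lt_iff₀ (by linarith)] at hβ
      rw [hp]; linarith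
    obtain ⟨K, hK, hb⟩ := exists_lintegral_wave_sq_wt_le E hγ
    set M : ℝ≥0∞ := (2 * (1 + D)) ^ (p - 1) * (K * (1 + D)) with hM
    have hMt : M ≠ ⊤ := by
      have : 0 ≤ p - 1 := by linarith
      finiteness
    refine ⟨M ^ (1 / κ), by finiteness, fun H hH => ?_⟩
    set S := ∫⁻ ξ, ‖H ξ‖ₑ ^ 2 with hS
    have hmm := measurable_wave_sq_add hH
    have hpow : ∀ t, locEnergy β H t ^ p ≤ ((2 * (1 + D)) * S) ^ (p - 1) *
        ∫⁻ y, wt (-(β * p)) ‖y‖ * (‖wave H t y‖ₑ ^ 2 + ‖wave (gaussLift H) t y‖ₑ ^ 2) :=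
      fun t => by
      let m : E → ℝ≥0∞ := fun y => ‖wave H t y‖ₑ ^ 2 + ‖wave (gaussLift H) t y‖ₑ ^ 2
      have hm : Measurable m := hmm.comp (f := fun y => (t, y)) (by fun_prop)
      have h1 := lintegral_rpow_le (volume.withDensity m) hp1 (f := fun y => wt (-β) ‖y‖)
        (by fun_prop)
      rw [lintegral_withDensity_eq_lintegral_mul _ hm (by fun_prop),
        lintegral_withDensity_eq_lintegral_mul _ hm (by fun_prop),
        withDensity_apply _ MeasurableSet.univ, Measure.restrict_univ] at h1
      have h2 : locEnergy β H t = ∫⁻ y, (m * fun y : E => wt (-β) ‖y‖ : E → ℝ≥0∞) y :=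
        lintegral_congr fun y => mul_comm _ _
      rw [h2]
      refine h1.trans ?_
      gcongr with y
      · exact henergy H hH t
      · simp only [Pi.mul_apply, m]
        rw [mul_comm, wt_rpow _ (by linarith) (norm_nonneg _), neg_mul]
    rw [eLpNorm_eq_lintegral_rpow_enorm_toReal hq0 hqt, ← hκ, eLpNorm_two_eq]
    have h3 : ∀ t, ‖locEnergy β H t ^ (1 / 2 : ℝ)‖ₑ ^ κ = locEnergy β H t ^ p := fun t => by
      rw [enorm_eq_self, ← ENNReal.rpow_mul]
      congr 1
      rw [hp]; ring
    simp_rw [h3]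
    have h4 : ∫⁻ t, ∫⁻ y, wt (-(β * p)) ‖y‖ *
        (‖wave H t y‖ₑ ^ 2 + ‖wave (gaussLift H) t y‖ₑ ^ 2) ≤ (K * (1 + D)) * S := by
      have hw1 := measurable_wave hH.measurable
      have h5 : ∀ t, ∫⁻ y, wt (-(β * p)) ‖y‖ *
          (‖wave H t y‖ₑ ^ 2 + ‖wave (gaussLift H) t y‖ₑ ^ 2) =
          (∫⁻ y, wt (-(β * p)) ‖y‖ * ‖wave H t y‖ₑ ^ 2) +
          ∫⁻ y, wt (-(β * p)) ‖y‖ * ‖wave (gaussLift H) t y‖ₑ ^ 2 := fun t => by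
        have := measurable_wave_right hH.measurable t
        rw [← lintegral_add_left (by fun_prop)]
        simp_rw [mul_add]
      simp_rw [h5]
      rw [lintegral_add_left (Measurable.lintegral_prod_right' (f := fun z : ℝ × E =>
        wt (-(β * p)) ‖z.2‖ * ‖wave H z.1 z.2‖ₑ ^ 2)
        (Measurable.mul (by fun_prop) (hw1.enorm.pow_const 2)))]
      calc _ ≤ K * S + K * (D * S) := by
            gcongr
            · exact hb H hH.measurable hH.integrable
            · refine (hb _ hH.gaussLift.measurable hH.gaussLift.integrable).trans ?_
              gcongr
              exact hH.lintegral_gaussLift_sq_le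
        _ = _ := by ring
    have h6 : ∫⁻ t, locEnergy β H t ^ p ≤ M * S ^ p := by
      calc _ ≤ ∫⁻ t, ((2 * (1 + D)) * S) ^ (p - 1) *
          ∫⁻ y, wt (-(β * p)) ‖y‖ * (‖wave H t y‖ₑ ^ 2 + ‖wave (gaussLift H) t y‖ₑ ^ 2) :=
            lintegral_mono hpow
        _ ≤ ((2 * (1 + D)) * S) ^ (p - 1) * ((K * (1 + D)) * S) := by
            rw [lintegral_const_mul _ (Measurable.lintegral_prod_right' (f := fun z : ℝ × E =>
              wt (-(β * p)) ‖z.2‖ * (‖wave H z.1 z.2‖ₑ ^ 2 + ‖wave (gaussLift H) z.1 z.2‖ₑ ^ 2))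
              (Measurable.mul (by fun_prop) hmm))]
            gcongr
        _ = M * (S ^ (p - 1) * S ^ (1 : ℝ)) := by
            rw [ENNReal.mul_rpow_of_nonneg _ _ (by linarith), hM, ENNReal.rpow_one]; ring
        _ = _ := by
            rw [← ENNReal.rpow_add_of_nonneg _ _ (by linarith) zero_le_one, sub_add_cancel]
    calc _ ≤ (M * S ^ p) ^ (1 / κ) := by gcongr
      _ = _ := by
          rw [ENNReal.mul_rpow_of_nonneg _ _ (by positivity), ← ENNReal.rpow_mul]
          congr 2
          rw [hp]; field_simp

end Wave

section Summation

variable {X : Type*} [MeasurableSpace X] {μ : Measure X}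

/-- Countable Minkowski inequality for nonnegative functions. -/
lemma eLpNorm_tsum_le {ι : Type*} [Countable ι] {f : ι → X → ℝ≥0∞} (hf : ∀ i, Measurable (f i))
    {p : ℝ≥0∞} (hp : 1 ≤ p) :
    eLpNorm (fun x => ∑' i, f i x) p μ ≤ ∑' i, eLpNorm (f i) p μ := by
  rcases eq_or_ne p ⊤ with rfl | hpt
  · simp only [eLpNorm_exponent_top, eLpNormEssSup_eq_essSup_enorm, enorm_eq_self]
    refine essSup_le_of_ae_le _ ?_
    filter_upwards [ae_all_iff.2 fun i => ENNReal.ae_le_essSup (μ := μ) (f i)] with x hx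
    exact ENNReal.tsum_le_tsum hx
  have hp0 : p ≠ 0 := (zero_lt_one.trans_le hp).ne'
  have hpos : 0 < p.toReal := toReal_pos hp0 hpt
  have key : ∀ s : Finset ι, eLpNorm (fun x => ∑ i ∈ s, f i x) p μ ≤ ∑' i, eLpNorm (f i) p μ := by
    intro s
    have h1 := eLpNorm_sum_le (p := p) (μ := μ) (s := s) (f := f)
      (fun i _ => (hf i).aestronglyMeasurable) hp
    have h2 : (∑ i ∈ s, f i) = fun x => ∑ i ∈ s, f i x := by ext x; simp
    rw [h2] at h1
    exact h1.trans (ENNReal.sum_le_tsum s)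
  rw [eLpNorm_eq_lintegral_rpow_enorm_toReal hp0 hpt, one_div,
    ENNReal.rpow_inv_le_iff hpos]
  have h3 : ∀ x, ‖∑' i, f i x‖ₑ ^ p.toReal = ⨆ s : Finset ι, (∑ i ∈ s, f i x) ^ p.toReal := by
    intro x
    rw [enorm_eq_self, ENNReal.tsum_eq_iSup_sum]
    exact (ENNReal.orderIsoRpow p.toReal hpos).map_iSup _
  simp only [h3]
  rw [lintegral_iSup_directed
    (fun s => ((Finset.measurable_sum s fun i _ => hf i).pow_const _).aemeasurable)]
  · refine iSup_le fun s => ?_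
    have h4 := key s
    rw [eLpNorm_eq_lintegral_rpow_enorm_toReal hp0 hpt, one_div,
      ENNReal.rpow_inv_le_iff hpos] at h4
    simpa only [enorm_eq_self] using h4
  · refine Monotone.directed_le fun s t hst x => ?_
    simp only
    gcongr

lemma eLpNorm_sq {f : X → ℝ≥0∞} {p : ℝ≥0∞} :
    eLpNorm (fun x => f x ^ 2) (p / 2) μ = eLpNorm f p μ ^ 2 := by
  have h := eLpNorm_enorm_rpow (μ := μ) (p := p / 2) f (q := 2) two_pos
  simp only [enorm_eq_self] at h
  have h2 : p / 2 * ENNReal.ofReal 2 = p := by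
    rw [ENNReal.ofReal_ofNat]
    exact ENNReal.div_mul_cancel two_ne_zero ofNat_ne_top
  rw [h2] at h
  simpa [ENNReal.rpow_two] using h

lemma tsum_sq (f : ℤ → ℝ≥0∞) : (∑' j, f j) ^ 2 = ∑' m, ∑' j, f j * f (j + m) := by
  rw [ENNReal.tsum_comm, sq, ← ENNReal.tsum_mul_right]
  refine tsum_congr fun j => ?_
  rw [← ENNReal.tsum_mul_left]
  exact ((Equiv.addLeft j).tsum_eq fun k => f j * f k).symm

lemma eLpNorm_mul_le_of_inv {p p0 p1 : ℝ≥0∞} (hp : p ≠ 0) (hp0 : p0 ≠ ⊤) (hp1 : p1 ≠ ⊤)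
    (h0 : p0 ≠ 0) (h1 : p1 ≠ 0) (hpt : p ≠ ⊤)
    (hpp : 2 / p.toReal = 1 / p0.toReal + 1 / p1.toReal) {f g : X → ℝ≥0∞} (hf : Measurable f)
    (hg : Measurable g) :
    eLpNorm (fun x => f x * g x) (p / 2) μ ≤ eLpNorm f p0 μ * eLpNorm g p1 μ := by
  have hh0 := toReal_pos h0 hp0
  have hh1 := toReal_pos h1 hp1
  have hh := toReal_pos hp hpt
  have e2 : (p / 2).toReal = p.toReal / 2 := by simp [ENNReal.toReal_div]
  rw [eLpNorm_eq_lintegral_rpow_enorm_toReal (ENNReal.div_ne_zero.2 ⟨hp, ofNat_ne_top⟩)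
    (ENNReal.div_ne_top hpt two_ne_zero), eLpNorm_eq_lintegral_rpow_enorm_toReal h0 hp0,
    eLpNorm_eq_lintegral_rpow_enorm_toReal h1 hp1, e2]
  have hq : p.toReal / 2 < p0.toReal := by
    have : 1 / p0.toReal < 2 / p.toReal := by rw [hpp]; linarith [one_div_pos.2 hh1]
    rw [div_lt_div_iff₀ hh0 hh] at this
    linarith
  exact ENNReal.lintegral_Lp_mul_le_Lq_mul_Lr (by positivity) hq
    (by rw [← hpp]; field_simp) μ hf.aemeasurable hg.aemeasurable

lemma ofReal_two_rpow_mul (a b : ℝ) :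
    ENNReal.ofReal (2 ^ a) * ENNReal.ofReal (2 ^ b) = ENNReal.ofReal (2 ^ (a + b)) := by
  rw [← ENNReal.ofReal_mul (by positivity), Real.rpow_add two_pos]

lemma tsum_two_rpow_abs_ne_top {δ : ℝ} (hδ : 0 < δ) :
    ∑' m : ℤ, ENNReal.ofReal (2 ^ (-(δ * |(m : ℝ)|))) ≠ ⊤ := by
  have hg : Summable fun k : ℕ => ((2 : ℝ) ^ (-δ)) ^ k :=
    summable_geometric_of_lt_one (by positivity) (Real.rpow_lt_one_of_one_lt_of_neg one_lt_two
      (by linarith))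
  have hs : Summable fun m : ℤ => (2 : ℝ) ^ (-(δ * |(m : ℝ)|)) := by
    refine Summable.of_nat_of_neg ?_ ?_ <;>
    · refine hg.congr fun k => ?_
      rw [← Real.rpow_natCast, ← Real.rpow_mul zero_le_two]
      simp
  rw [← ENNReal.ofReal_tsum_of_nonneg (fun _ => by positivity) hs]
  exact ofReal_ne_top

/-- If the pieces `F j` gain or lose a factor `2 ^ (j δ)` in two neighbouring Lebesgue spaces, their
sum is controlled in the intermediate space by the `ℓ²` sum of the common bounds. -/
lemma exists_eLpNorm_tsum_sq_le {δ : ℝ} (hδ : 0 < δ) {p p0 p1 : ℝ≥0∞} (hp : 2 ≤ p) (hpt : p ≠ ⊤)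
    (hp0 : p0 ≠ ⊤) (hp1 : p1 ≠ ⊤) (h0 : p0 ≠ 0) (h1 : p1 ≠ 0)
    (hpp : 2 / p.toReal = 1 / p0.toReal + 1 / p1.toReal) :
    ∃ K : ℝ≥0∞, K ≠ ⊤ ∧ ∀ (F : ℤ → X → ℝ≥0∞) (c : ℤ → ℝ≥0∞), (∀ j, Measurable (F j)) →
      (∀ j, eLpNorm (F j) p0 μ ≤ ENNReal.ofReal (2 ^ (j * δ)) * c j) →
      (∀ j, eLpNorm (F j) p1 μ ≤ ENNReal.ofReal (2 ^ (-(j * δ))) * c j) →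
      eLpNorm (fun x => ∑' j, F j x) p μ ^ 2 ≤ K * ∑' j, c j ^ 2 := by
  have hpne : p ≠ 0 := (two_pos.trans_le hp).ne'
  refine ⟨2 * ∑' m : ℤ, ENNReal.ofReal (2 ^ (-(δ * |(m : ℝ)|))),
    ENNReal.mul_ne_top ofNat_ne_top (tsum_two_rpow_abs_ne_top hδ), fun F c hF hF0 hF1 => ?_⟩
  have hpair : ∀ m j : ℤ, eLpNorm (fun x => F j x * F (j + m) x) (p / 2) μ ≤
      ENNReal.ofReal (2 ^ (-(δ * |(m : ℝ)|))) * (c j * c (j + m)) := by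
    intro m j
    rcases le_total 0 m with hm | hm
    · have hm' : (0 : ℝ) ≤ m := by exact_mod_cast hm
      refine (eLpNorm_mul_le_of_inv hpne hp0 hp1 h0 h1 hpt hpp (hF _) (hF _)).trans
        ((mul_le_mul' (hF0 j) (hF1 (j + m))).trans_eq ?_)
      rw [mul_mul_mul_comm, ofReal_two_rpow_mul, abs_of_nonneg hm']
      congr 3
      push_cast; ring
    · have hm' : (m : ℝ) ≤ 0 := by exact_mod_cast hm
      refine (eLpNorm_mul_le_of_inv hpne hp1 hp0 h1 h0 hpt (by rw [hpp, add_comm]) (hF _)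
        (hF _)).trans ((mul_le_mul' (hF1 j) (hF0 (j + m))).trans_eq ?_)
      rw [mul_mul_mul_comm, ofReal_two_rpow_mul, abs_of_nonpos hm']
      congr 3
      push_cast; ring
  have hp2 : 1 ≤ p / 2 := by
    rw [ENNReal.le_div_iff_mul_le (by simp) (by simp)]
    simpa using hp
  rw [← eLpNorm_sq]
  simp only [tsum_sq]
  calc _ ≤ ∑' m : ℤ, eLpNorm (fun x => ∑' j, F j x * F (j + m) x) (p / 2) μ :=
        eLpNorm_tsum_le (fun m => Measurable.tsum fun j => (hF _).mul (hF _)) hp2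
    _ ≤ ∑' (m : ℤ) (j : ℤ), ENNReal.ofReal (2 ^ (-(δ * |(m : ℝ)|))) * (c j * c (j + m)) := by
        refine ENNReal.tsum_le_tsum fun m => ?_
        exact (eLpNorm_tsum_le (fun j => (hF _).mul (hF _)) hp2).trans
          (ENNReal.tsum_le_tsum fun j => hpair m j)
    _ ≤ ∑' m : ℤ, ENNReal.ofReal (2 ^ (-(δ * |(m : ℝ)|))) * (2 * ∑' j, c j ^ 2) := by
        refine ENNReal.tsum_le_tsum fun m => ?_
        rw [ENNReal.tsum_mul_left]
        refine mul_le_mul_right ?_ _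
        calc _ ≤ ∑' j, (c j ^ 2 + c (j + m) ^ 2) :=
              ENNReal.tsum_le_tsum fun j => mul_le_sq_add_sq _ _
          _ = _ := by
              have h := (Equiv.addRight m).tsum_eq fun j => c j ^ 2
              simp only [Equiv.coe_addRight] at h
              rw [ENNReal.tsum_add, h, two_mul]
    _ = _ := by rw [ENNReal.tsum_mul_right]; ring

end Summation

section Scaling

variable {E : Type*} [NormedAddCommGroup E] [InnerProductSpace ℝ E] [FiniteDimensional ℝ E]
  [MeasurableSpace E] [BorelSpace E]

lemma eLpNorm_comp_smul {F : Type*} [TopologicalSpace F] [ContinuousENorm F] (f : E → F)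
    (p : ℝ≥0∞) {a : ℝ} (ha : 0 < a) :
    eLpNorm (fun x => f (a • x)) p volume =
      ENNReal.ofReal (a ^ (-(Module.finrank ℝ E / p.toReal))) * eLpNorm f p volume := by
  have hemb : MeasurableEmbedding fun x : E => a • x :=
    (Homeomorph.smulOfNeZero a ha.ne').measurableEmbedding
  have h1 := hemb.eLpNorm_map_measure (g := f) (p := p) (μ := volume)
  rw [Measure.map_addHaar_smul volume ha.ne', eLpNorm_smul_measure_of_ne_zero] at h1
  · rw [smul_eq_mul] at h1
    rw [show (fun x => f (a • x)) = f ∘ fun x => a • x from rfl, ← h1, abs_of_pos (by positivity),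
      ENNReal.ofReal_rpow_of_pos (by positivity), ← Real.rpow_natCast, ← Real.rpow_neg ha.le,
      ← Real.rpow_mul ha.le, one_div, ENNReal.toReal_inv, div_eq_mul_inv, neg_mul]
  · simp only [ne_eq, ENNReal.ofReal_eq_zero, not_le]
    positivity

end Scaling

section Pieces

variable {E : Type*} [NormedAddCommGroup E] [InnerProductSpace ℝ E] [FiniteDimensional ℝ E]
  [MeasurableSpace E] [BorelSpace E]

/-- Measurable, integrable, radial Fourier data. -/
structure IsData (h : E → ℂ) : Prop where
  measurable : Measurable h
  integrable : Integrable h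
  radial : IsRadial h

/-- The dyadic shell `2 ^ j ≤ ‖ξ‖ < 2 ^ (j + 1)`. -/
def shell (E : Type*) [NormedAddCommGroup E] (j : ℤ) : Set E :=
  {ξ | (2 : ℝ) ^ (j : ℝ) ≤ ‖ξ‖ ∧ ‖ξ‖ < 2 ^ (j + 1 : ℝ)}

lemma measurableSet_shell (j : ℤ) : MeasurableSet (shell E j) :=
  (measurableSet_le measurable_const measurable_norm).inter
    (measurableSet_lt measurable_norm measurable_const)

lemma tsum_indicator_shell (φ : E → ℝ≥0∞) {ξ : E} (hξ : ξ ≠ 0) :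
    ∑' j, (shell E j).indicator φ ξ = φ ξ := by
  obtain ⟨k, hk1, hk2⟩ := exists_mem_Ico_zpow (norm_pos_iff.2 hξ) (one_lt_two (α := ℝ))
  have hk : ξ ∈ shell E k := by
    refine ⟨by rwa [Real.rpow_intCast], ?_⟩
    have := Real.rpow_intCast (2 : ℝ) (k + 1)
    push_cast at this
    rwa [this]
  rw [tsum_eq_single k, Set.indicator_of_mem hk]
  intro j hj
  refine Set.indicator_of_notMem (fun hjm => hj ?_) _
  have h1 : (j : ℝ) < k + 1 := (Real.rpow_lt_rpow_left_iff one_lt_two).1 (hjm.1.trans_lt hk.2)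
  have h2 : (k : ℝ) < j + 1 := (Real.rpow_lt_rpow_left_iff one_lt_two).1 (hk.1.trans_lt hjm.2)
  have h1' : j < k + 1 := by exact_mod_cast h1
  have h2' : k < j + 1 := by exact_mod_cast h2
  omega

lemma lintegral_eq_tsum_shell [Nontrivial E] {φ : E → ℝ≥0∞} (hφ : Measurable φ) :
    ∫⁻ ξ, φ ξ = ∑' j, ∫⁻ ξ, (shell E j).indicator φ ξ := by
  rw [← lintegral_tsum fun j => (hφ.indicator (measurableSet_shell j)).aemeasurable]
  refine lintegral_congr_ae ?_
  have : ∀ᵐ ξ : E, ξ ≠ 0 := by simp [ae_iff]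
  filter_upwards [this] with ξ hξ
  exact (tsum_indicator_shell φ hξ).symm

/-- The frequency piece of `h` in the `j`-th dyadic shell. -/
noncomputable def piece (h : E → ℂ) (j : ℤ) : E → ℂ := (shell E j).indicator h

/-- The frequency piece rescaled to unit frequency. -/
noncomputable def unitPiece (h : E → ℂ) (j : ℤ) (η : E) : ℂ := piece h j ((2 : ℝ) ^ (j : ℝ) • η)

lemma IsData.piece {h : E → ℂ} (hh : IsData h) (j : ℤ) : IsData (piece h j) := by
  refine ⟨hh.measurable.indicator (measurableSet_shell j),
    hh.integrable.indicator (measurableSet_shell j), fun x y hxy => ?_⟩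
  have : x ∈ shell E j ↔ y ∈ shell E j := by simp [shell, hxy]
  by_cases hx : x ∈ shell E j
  · simp [RadialStrichartz.piece, hx, this.1 hx, hh.radial x y hxy]
  · have hy : y ∉ shell E j := fun hy => hx (this.2 hy)
    simp [RadialStrichartz.piece, hx, hy]

lemma IsData.unitPiece {h : E → ℂ} (hh : IsData h) (j : ℤ) : IsUnitData (unitPiece h j) := by
  have ha : (0 : ℝ) < 2 ^ (j : ℝ) := by positivity
  refine ⟨(hh.piece j).measurable.comp (measurable_const_smul _),
    (hh.piece j).integrable.comp_smul ha.ne', fun x y hxy => (hh.piece j).radial _ _ ?_,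
    fun ξ hξ => Set.indicator_of_notMem (fun hm => ?_) _⟩
  · simp [norm_smul, hxy]
  · have h2 := hm.2
    rw [norm_smul, Real.norm_of_nonneg ha.le, Real.rpow_add two_pos, Real.rpow_one] at h2
    nlinarith

lemma wave_piece (h : E → ℂ) (j : ℤ) (t : ℝ) (x : E) :
    wave (piece h j) t x = ((2 : ℝ) ^ (j * Module.finrank ℝ E : ℝ)) •
      wave (unitPiece h j) ((2 : ℝ) ^ (j : ℝ) * t) ((2 : ℝ) ^ (j : ℝ) • x) := by
  have ha : (0 : ℝ) < 2 ^ (j : ℝ) := by positivity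
  set a : ℝ := 2 ^ (j : ℝ) with hadef
  have h1 := Measure.integral_comp_smul (volume : Measure E)
    (fun ξ => (phase x ξ * phase t ‖ξ‖) * piece h j ξ) a
  have h2 : wave (unitPiece h j) (a * t) (a • x) =
      ∫ ξ, (phase x (a • ξ) * phase t ‖a • ξ‖) * piece h j (a • ξ) := by
    unfold wave
    congr 1
    ext ξ
    have e1 : phase (a • x) ξ = phase x (a • ξ) := by
      simp only [phase, real_inner_smul_left, real_inner_smul_right]
    have e2 : phase (a * t) ‖ξ‖ = phase t ‖a • ξ‖ := by
      simp only [phase, norm_smul, Real.norm_of_nonneg ha.le, RCLike.inner_apply, conj_trivial]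
      congr 4
      ring
    rw [e1, e2, unitPiece]
  rw [h2, h1, smul_smul, Real.rpow_mul zero_le_two, ← hadef, Real.rpow_natCast,
    abs_of_pos (by positivity), mul_inv_cancel₀ (by positivity), one_smul]
  rfl

lemma enorm_wave_le_tsum [Nontrivial E] {h : E → ℂ} (hh : IsData h) (t : ℝ) (x : E) :
    ‖wave h t x‖ₑ ≤ ∑' j, ‖wave (piece h j) t x‖ₑ := by
  have hae : ∀ᵐ ξ : E, ξ ≠ 0 := by simp [ae_iff]
  have h_int := integrable_phase_mul hh.integrable t x
  have hm : ∀ j, Integrable fun ξ => (phase x ξ * phase t ‖ξ‖) * piece h j ξ :=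
    fun j => integrable_phase_mul (hh.piece j).integrable t x
  have hind : ∀ j ξ, (phase x ξ * phase t ‖ξ‖) * piece h j ξ =
      (shell E j).indicator (fun ξ => (phase x ξ * phase t ‖ξ‖) * h ξ) ξ := by
    intro j ξ
    by_cases hξ : ξ ∈ shell E j <;> simp [piece, hξ]
  have henorm : ∀ j ξ, ‖(phase x ξ * phase t ‖ξ‖) * piece h j ξ‖ₑ =
      (shell E j).indicator (fun ξ => ‖(phase x ξ * phase t ‖ξ‖) * h ξ‖ₑ) ξ := by
    intro j ξ
    rw [hind, enorm_indicator_eq_indicator_enorm]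
  have hsum : ∑' j, ∫⁻ ξ, ‖(phase x ξ * phase t ‖ξ‖) * piece h j ξ‖ₑ ≠ ⊤ := by
    rw [← lintegral_tsum fun j => (hm j).aestronglyMeasurable.enorm]
    have : ∫⁻ ξ, ∑' j, ‖(phase x ξ * phase t ‖ξ‖) * piece h j ξ‖ₑ =
        ∫⁻ ξ, ‖(phase x ξ * phase t ‖ξ‖) * h ξ‖ₑ := by
      refine lintegral_congr_ae ?_
      filter_upwards [hae] with ξ hξ
      simp only [henorm]
      exact tsum_indicator_shell _ hξ
    rw [this]
    exact h_int.2.ne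
  have hs := hasSum_integral_of_summable_integral_norm hm (by
    have hto : ∀ j, ∫ ξ, ‖(phase x ξ * phase t ‖ξ‖) * piece h j ξ‖ =
        (∫⁻ ξ, ‖(phase x ξ * phase t ‖ξ‖) * piece h j ξ‖ₑ).toReal := fun j =>
      integral_norm_eq_lintegral_enorm (hm j).aestronglyMeasurable
    simp only [hto]
    exact ENNReal.summable_toReal hsum)
  have heq : ∫ ξ, ∑' j, (phase x ξ * phase t ‖ξ‖) * piece h j ξ = wave h t x := by
    refine integral_congr_ae ?_
    filter_upwards [hae] with ξ hξ
    obtain ⟨k, hk⟩ : ∃ k, ξ ∈ shell E k := by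
      by_contra hne
      push Not at hne
      have := tsum_indicator_shell (fun _ => (1 : ℝ≥0∞)) hξ
      simp [Set.indicator_of_notMem (hne _)] at this
    rw [tsum_eq_single k]
    · simp [piece, hk]
    · intro j hj
      have hjm : ξ ∉ shell E j := by
        intro hjm
        have hone := tsum_indicator_shell (fun _ => (1 : ℝ≥0∞)) hξ
        have h2 := ENNReal.sum_le_tsum {j, k}
          (f := fun i => (shell E i).indicator (fun _ => (1 : ℝ≥0∞)) ξ)
        rw [hone, Finset.sum_pair hj, Set.indicator_of_mem hjm, Set.indicator_of_mem hk] at h2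
        norm_num at h2
      simp [piece, hjm]
  rw [heq] at hs
  rw [← hs.tsum_eq]
  exact enorm_tsum_le_tsum_enorm

/-- The homogeneous Sobolev norm of order `s` on the Fourier side. -/
noncomputable def sobNorm (s : ℝ) (h : E → ℂ) : ℝ≥0∞ :=
  eLpNorm (fun ξ => (‖ξ‖ ^ s : ℝ) • h ξ) 2 volume

lemma tsum_sobNorm_piece_sq [Nontrivial E] (s : ℝ) {h : E → ℂ} (hm : Measurable h) :
    ∑' j, sobNorm s (piece h j) ^ 2 = sobNorm s h ^ 2 := by
  have hsq : ∀ k : E → ℂ, sobNorm s k ^ 2 = ∫⁻ ξ, ‖(‖ξ‖ ^ s : ℝ) • k ξ‖ₑ ^ 2 := by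
    intro k
    rw [sobNorm, eLpNorm_two_eq, ← ENNReal.rpow_two, ← ENNReal.rpow_mul]
    norm_num
  simp only [hsq]
  rw [lintegral_eq_tsum_shell (by fun_prop)]
  refine tsum_congr fun j => lintegral_congr fun ξ => ?_
  by_cases hξ : ξ ∈ shell E j <;> simp [piece, hξ]

lemma eLpNorm_unitPiece_le (s : ℝ) {h : E → ℂ} (j : ℤ) :
    eLpNorm (unitPiece h j) 2 volume ≤ ENNReal.ofReal (2 ^ |s|) *
      (ENNReal.ofReal (2 ^ (j * (-s - Module.finrank ℝ E / 2 : ℝ))) * sobNorm s (piece h j)) := by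
  have ha : (0 : ℝ) < 2 ^ (j : ℝ) := by positivity
  have h1 : eLpNorm (piece h j) 2 volume ≤
      ENNReal.ofReal (2 ^ |s| * 2 ^ (j * -s : ℝ)) * sobNorm s (piece h j) := by
    rw [sobNorm, ← Real.enorm_eq_ofReal (by positivity), ← eLpNorm_const_smul]
    refine eLpNorm_mono_enorm fun ξ => ?_
    by_cases hξ : ξ ∈ shell E j
    · have hpos : 0 < ‖ξ‖ := ha.trans_le hξ.1
      simp only [piece, Set.indicator_of_mem hξ, Pi.smul_apply, smul_smul]
      rw [enorm_smul]
      refine le_mul_of_one_le_left' ?_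
      rw [Real.enorm_eq_ofReal (by positivity), ENNReal.one_le_ofReal]
      have e : (2 : ℝ) ^ (j * -s : ℝ) = (2 ^ (j : ℝ)) ^ (-s) := Real.rpow_mul zero_le_two _ _
      rw [e]
      rcases le_total 0 s with hs | hs
      · have h3 : (2 ^ (j : ℝ) : ℝ) ^ s ≤ ‖ξ‖ ^ s := Real.rpow_le_rpow ha.le hξ.1 hs
        have h4 : (1 : ℝ) ≤ 2 ^ |s| := Real.one_le_rpow one_le_two (abs_nonneg _)
        have h5 : ((2 : ℝ) ^ (j : ℝ)) ^ (-s) * (2 ^ (j : ℝ)) ^ s = 1 := by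
          rw [← Real.rpow_add ha]; simp
        calc (1 : ℝ) = 1 * (((2 : ℝ) ^ (j : ℝ)) ^ (-s) * (2 ^ (j : ℝ)) ^ s) := by rw [h5, one_mul]
          _ ≤ 2 ^ |s| * ((2 ^ (j : ℝ)) ^ (-s) * ‖ξ‖ ^ s) := by gcongr
          _ = _ := by ring
      · have hlt : ‖ξ‖ ≤ 2 * 2 ^ (j : ℝ) := by
          have := hξ.2
          rw [Real.rpow_add two_pos, Real.rpow_one] at this
          linarith
        have h3 : (2 * 2 ^ (j : ℝ) : ℝ) ^ s ≤ ‖ξ‖ ^ s := Real.rpow_le_rpow_of_nonpos hpos hlt hs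
        have h5 : (2 : ℝ) ^ |s| * ((2 : ℝ) ^ (j : ℝ)) ^ (-s) * (2 * 2 ^ (j : ℝ)) ^ s = 1 := by
          rw [abs_of_nonpos hs, ← Real.mul_rpow two_pos.le ha.le, ← Real.rpow_add (by positivity)]
          simp
        calc (1 : ℝ) = _ := h5.symm
          _ ≤ _ := by gcongr
    · simp [piece, hξ]
  have h2 : unitPiece h j = fun η => piece h j ((2 : ℝ) ^ (j : ℝ) • η) := rfl
  rw [h2, eLpNorm_comp_smul _ _ ha]
  refine (mul_le_mul_right h1 _).trans_eq ?_
  rw [← Real.rpow_mul zero_le_two, ENNReal.ofReal_mul (by positivity),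
    show (j * (-s - Module.finrank ℝ E / 2) : ℝ) =
      j * -((Module.finrank ℝ E : ℝ) / (2 : ℝ≥0∞).toReal) + j * -s by simp; ring,
    ← ofReal_two_rpow_mul]
  ring

/-- The majorant of the `j`-th frequency piece. -/
noncomputable def pieceEnergy (β : ℝ) (h : E → ℂ) (j : ℤ) (t : ℝ) : ℝ≥0∞ :=
  locEnergy β (unitPiece h j) ((2 : ℝ) ^ (j : ℝ) * t) ^ (1 / 2 : ℝ)

lemma measurable_pieceEnergy (β : ℝ) {h : E → ℂ} (hh : IsData h) (j : ℤ) :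
    Measurable (pieceEnergy β h j) :=
  ((measurable_locEnergy β (hh.unitPiece j)).comp (measurable_const_mul _)).pow_const _

variable (E) in
lemma exists_eLpNorm_wave_piece_le [Nontrivial E] {β : ℝ} {r : ℝ≥0∞} (hβ0 : 0 ≤ β) (hr : 2 ≤ r)
    (hβ : β ≤ (Module.finrank ℝ E - 1) * (1 - 2 / r.toReal)) :
    ∃ K : ℝ≥0∞, K ≠ ⊤ ∧ ∀ h : E → ℂ, IsData h → ∀ j t, eLpNorm (wave (piece h j) t) r volume ≤
      K * (ENNReal.ofReal (2 ^ (j * (Module.finrank ℝ E - Module.finrank ℝ E / r.toReal) : ℝ)) *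
        pieceEnergy β h j t) := by
  obtain ⟨K, hK, hb⟩ := exists_eLpNorm_wave_le E hβ0 hr hβ
  refine ⟨K, hK, fun h hh j t => ?_⟩
  have ha : (0 : ℝ) < 2 ^ (j : ℝ) := by positivity
  have e : wave (piece h j) t = ((2 : ℝ) ^ (j * Module.finrank ℝ E : ℝ)) •
      fun x => wave (unitPiece h j) ((2 : ℝ) ^ (j : ℝ) * t) ((2 : ℝ) ^ (j : ℝ) • x) := by
    ext x
    rw [wave_piece]
    rfl
  rw [e, eLpNorm_const_smul, eLpNorm_comp_smul _ _ ha, Real.enorm_eq_ofReal (by positivity),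
    ← Real.rpow_mul zero_le_two, ← mul_assoc, ofReal_two_rpow_mul]
  refine (mul_le_mul_right (hb _ (hh.unitPiece j) _) _).trans_eq ?_
  rw [mul_left_comm, pieceEnergy]
  congr 5
  ring

variable (E) in
lemma exists_eLpNorm_pieceEnergy_le [Nontrivial E] {β : ℝ} {q : ℝ≥0∞} (s : ℝ) (hq : 2 ≤ q)
    (hβ : 2 / q.toReal < β) :
    ∃ K : ℝ≥0∞, K ≠ ⊤ ∧ ∀ h : E → ℂ, IsData h → ∀ j, eLpNorm (pieceEnergy β h j) q volume ≤
      K * (ENNReal.ofReal (2 ^ (j * (-(1 / q.toReal) - s - Module.finrank ℝ E / 2) : ℝ)) *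
        sobNorm s (piece h j)) := by
  obtain ⟨K, hK, hb⟩ := exists_eLpNorm_locEnergy_le E hq hβ
  refine ⟨K * ENNReal.ofReal (2 ^ |s|), by finiteness, fun h hh j => ?_⟩
  have ha : (0 : ℝ) < 2 ^ (j : ℝ) := by positivity
  have h1 := eLpNorm_comp_smul (fun t : ℝ => locEnergy β (unitPiece h j) t ^ (1 / 2 : ℝ)) q ha
  have e : pieceEnergy β h j =
      fun t : ℝ => locEnergy β (unitPiece h j) ((2 : ℝ) ^ (j : ℝ) • t) ^ (1 / 2 : ℝ) := rfl
  rw [e, h1, ← Real.rpow_mul zero_le_two]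
  have h2 := (hb _ (hh.unitPiece j)).trans (mul_le_mul_right (eLpNorm_unitPiece_le s j) K)
  refine (mul_le_mul_right h2 _).trans_eq ?_
  rw [show (j * (-(1 / q.toReal) - s - Module.finrank ℝ E / 2) : ℝ) =
    j * -((Module.finrank ℝ ℝ : ℝ) / q.toReal) + j * (-s - Module.finrank ℝ E / 2) by
      simp; ring, ← ofReal_two_rpow_mul]
  ring

end Pieces

section Majorant

variable (E : Type*) [NormedAddCommGroup E] [InnerProductSpace ℝ E] [FiniteDimensional ℝ E]
  [MeasurableSpace E] [BorelSpace E]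

/-- The space-time bound for half waves, phrased with a measurable majorant of
`t ↦ ‖wave h t‖_{L^r}`. -/
def HalfWaveBound (q r : ℝ≥0∞) (s : ℝ) : Prop :=
  ∃ K : ℝ≥0∞, K ≠ ⊤ ∧ ∀ h : E → ℂ, IsData h → ∃ Z : ℝ → ℝ≥0∞, Measurable Z ∧
    (∀ t, eLpNorm (wave h t) r volume ≤ Z t) ∧ eLpNorm Z q volume ≤ K * sobNorm s h

variable {E} in
lemma measurable_enorm_wave_piece {h : E → ℂ} (hh : IsData h) (j : ℤ) (t : ℝ) :
    Measurable fun x => ‖wave (piece h j) t x‖ₑ :=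
  (measurable_wave_right (hh.piece j).measurable t).enorm

lemma eLpNorm_const_mul_le {X : Type*} [MeasurableSpace X] {μ : Measure X} {a : ℝ≥0∞} (ha : a ≠ ⊤)
    (f : X → ℝ≥0∞) (p : ℝ≥0∞) : eLpNorm (fun x => a * f x) p μ ≤ a * eLpNorm f p μ := by
  lift a to NNReal using ha
  exact eLpNorm_le_nnreal_smul_eLpNorm_of_ae_le_mul' (ae_of_all _ fun x => by simp) p

lemma halfWaveBound_infty_two : HalfWaveBound E ⊤ 2 0 := by
  refine ⟨2 ^ (1 / 2 : ℝ), by finiteness, fun h hh =>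
    ⟨fun _ => 2 ^ (1 / 2 : ℝ) * sobNorm 0 h, measurable_const, fun t => ?_, ?_⟩⟩
  · have e : sobNorm 0 h = eLpNorm h 2 volume := by simp [sobNorm]
    rw [e, eLpNorm_two_eq, eLpNorm_two_eq, ← ENNReal.mul_rpow_of_nonneg _ _ (by norm_num)]
    exact ENNReal.rpow_le_rpow (lintegral_wave_sq_le hh.measurable hh.integrable t) (by norm_num)
  · simp only [eLpNorm_exponent_top, eLpNormEssSup_eq_essSup_enorm, enorm_eq_self]
    exact essSup_le_of_ae_le _ (ae_of_all _ fun _ => le_rfl)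

lemma halfWaveBound_of_ne_top [Nontrivial E] {q r : ℝ≥0∞} {s : ℝ} (hq : 2 ≤ q) (hr : 2 < r)
    (hrt : r ≠ ⊤)
    (hadm : 2 / q.toReal < (Module.finrank ℝ E - 1) * (1 - 2 / r.toReal))
    (hscal : 1 / q.toReal + Module.finrank ℝ E / r.toReal = Module.finrank ℝ E / 2 - s) :
    HalfWaveBound E q r s := by
  have hn : (0 : ℝ) < Module.finrank ℝ E := by exact_mod_cast Module.finrank_pos
  have hn1 : (0 : ℝ) ≤ Module.finrank ℝ E - 1 := by
    have : (1 : ℝ) ≤ Module.finrank ℝ E := by exact_mod_cast Module.finrank_pos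
    linarith
  set n : ℝ := (Module.finrank ℝ E : ℝ) with hndef
  obtain ⟨β, hβ1, hβ2⟩ := exists_between hadm
  have hβ0 : 0 ≤ β := le_trans (by positivity) hβ1.le
  have hr2 : 2 < r.toReal := by
    have := (ENNReal.toReal_lt_toReal ofNat_ne_top hrt).2 hr
    simpa using this
  obtain ⟨ε, hε0, hε1, hε2, hε3⟩ : ∃ ε : ℝ, 0 < ε ∧ ε < 1 / r.toReal ∧
      1 / r.toReal + ε ≤ 1 / 2 ∧ β ≤ (n - 1) * (1 - 2 * (1 / r.toReal + ε)) := by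
    have hlt : 1 / r.toReal < 1 / 2 := one_div_lt_one_div_of_lt two_pos hr2
    have hpos : 0 < 1 / r.toReal := by positivity
    set d := (n - 1) * (1 - 2 / r.toReal) - β with hd
    have hd0 : 0 < d := by linarith
    refine ⟨min (min (1 / r.toReal / 2) (1 / 2 - 1 / r.toReal)) (d / (2 * n)), ?_, ?_, ?_, ?_⟩
    · refine lt_min (lt_min (by linarith) (by linarith)) (by positivity)
    · exact (min_le_left _ _).trans_lt ((min_le_left _ _).trans_lt (by linarith))
    · have := (min_le_left _ (d / (2 * n))).trans
        (min_le_right (1 / r.toReal / 2) (1 / 2 - 1 / r.toReal))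
      linarith
    · have h1 := min_le_right (min (1 / r.toReal / 2) (1 / 2 - 1 / r.toReal)) (d / (2 * n))
      have h2 : (n - 1) * (2 * min (min (1 / r.toReal / 2) (1 / 2 - 1 / r.toReal)) (d / (2 * n)))
          ≤ (n - 1) * (2 * (d / (2 * n))) := by gcongr
      have h3 : (n - 1) * (2 * (d / (2 * n))) ≤ d := by
        rw [show (n - 1) * (2 * (d / (2 * n))) = (n - 1) / n * d by field_simp]
        refine mul_le_of_le_one_left hd0.le ?_
        rw [div_le_one hn]; linarith
      have h4 : (2 : ℝ) / r.toReal = 2 * (1 / r.toReal) := by ring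
      rw [h4] at hd
      linarith
  have hr0pos : 0 < 1 / r.toReal - ε := by linarith
  have hr1pos : 0 < 1 / r.toReal + ε := by positivity
  set r0 : ℝ≥0∞ := ENNReal.ofReal (1 / r.toReal - ε)⁻¹ with hr0
  set r1 : ℝ≥0∞ := ENNReal.ofReal (1 / r.toReal + ε)⁻¹ with hr1
  have er0 : r0.toReal = (1 / r.toReal - ε)⁻¹ := ENNReal.toReal_ofReal (by positivity)
  have er1 : r1.toReal = (1 / r.toReal + ε)⁻¹ := ENNReal.toReal_ofReal (by positivity)
  have h2r1 : 2 ≤ r1 := by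
    rw [hr1, ← ENNReal.ofReal_ofNat 2]
    refine ENNReal.ofReal_le_ofReal ?_
    rw [le_inv_comm₀ two_pos hr1pos]
    simpa using hε2
  have h2r0 : 2 ≤ r0 := by
    refine h2r1.trans (ENNReal.ofReal_le_ofReal ?_)
    exact inv_anti₀ hr0pos (by linarith)
  obtain ⟨K0, hK0, hb0⟩ := exists_eLpNorm_wave_piece_le E (β := β) (r := r0) hβ0 h2r0 (by
    rw [er0]
    refine hε3.trans (mul_le_mul_of_nonneg_left ?_ hn1)
    rw [div_inv_eq_mul]; linarith)
  obtain ⟨K1, hK1, hb1⟩ := exists_eLpNorm_wave_piece_le E (β := β) (r := r1) hβ0 h2r1 (by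
    rw [er1]
    refine hε3.trans (mul_le_mul_of_nonneg_left ?_ hn1)
    rw [div_inv_eq_mul])
  obtain ⟨Kq, hKq, hbq⟩ := exists_eLpNorm_pieceEnergy_le E s hq hβ1
  obtain ⟨Ks, hKs, hbs⟩ := exists_eLpNorm_tsum_sq_le (μ := (volume : Measure E))
    (δ := n * ε) (by positivity) hr.le hrt
    (p0 := r0) (p1 := r1) ofReal_ne_top ofReal_ne_top (by simpa [hr0] using hr0pos)
    (by simpa [hr1] using hr1pos) (by rw [er0, er1]; simp only [one_div, inv_inv]; ring)
  set K := K0 + K1 with hK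
  have hKt : K ≠ ⊤ := by finiteness
  have hdiv : 1 ≤ q / 2 := by
    rw [ENNReal.le_div_iff_mul_le (by simp) (by simp)]
    simpa using hq
  set c : (E → ℂ) → ℤ → ℝ → ℝ≥0∞ := fun h j t =>
    ENNReal.ofReal (2 ^ (j * (n - n / r.toReal) : ℝ)) * (K * pieceEnergy β h j t) with hc
  have hcm : ∀ h, IsData h → ∀ j, Measurable (c h j) := fun h hh j =>
    ((measurable_pieceEnergy β hh j).const_mul _).const_mul _
  have hcq : ∀ h, IsData h → ∀ j, eLpNorm (c h j) q volume ≤ K * Kq * sobNorm s (piece h j) := by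
    intro h hh j
    refine (eLpNorm_const_mul_le ofReal_ne_top _ _).trans ?_
    refine (mul_le_mul_right (eLpNorm_const_mul_le hKt _ _) _).trans ?_
    refine (mul_le_mul_right (mul_le_mul_right (hbq h hh j) _) _).trans_eq ?_
    have e : ENNReal.ofReal (2 ^ (j * (n - n / r.toReal) : ℝ)) *
        ENNReal.ofReal (2 ^ (j * (-(1 / q.toReal) - s - n / 2) : ℝ)) = 1 := by
      rw [ofReal_two_rpow_mul, ← mul_add, show n - n / r.toReal + (-(1 / q.toReal) - s - n / 2) = 0
        by linarith]
      simp
    calc _ = (ENNReal.ofReal (2 ^ (j * (n - n / r.toReal) : ℝ)) *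
        ENNReal.ofReal (2 ^ (j * (-(1 / q.toReal) - s - n / 2) : ℝ))) *
          (K * Kq * sobNorm s (piece h j)) := by ring
      _ = _ := by rw [e, one_mul]
  refine ⟨Ks ^ (1 / 2 : ℝ) * (K * Kq), by finiteness, fun h hh =>
    ⟨fun t => (Ks * ∑' j, c h j t ^ 2) ^ (1 / 2 : ℝ), ?_, fun t => ?_, ?_⟩⟩
  · exact ((Measurable.tsum fun j => (hcm h hh j).pow_const 2).const_mul _).pow_const _
  · have h1 : eLpNorm (wave h t) r volume ≤
        eLpNorm (fun x => ∑' j, ‖wave (piece h j) t x‖ₑ) r volume :=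
      eLpNorm_mono_enorm fun x => by
        rw [enorm_eq_self]
        exact enorm_wave_le_tsum hh t x
    refine h1.trans ?_
    rw [one_div, ENNReal.le_rpow_inv_iff two_pos, ENNReal.rpow_two]
    refine hbs _ _ (measurable_enorm_wave_piece hh · t) (fun j => ?_) fun j => ?_
    · have h2 := hb0 h hh j t
      rw [eLpNorm_enorm]
      refine h2.trans ?_
      rw [er0, hc]
      simp only
      rw [mul_left_comm, ← mul_assoc (ENNReal.ofReal (2 ^ (j * (n * ε) : ℝ))), ofReal_two_rpow_mul]
      refine mul_le_mul' (le_of_eq ?_) ?_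
      · congr 2
        rw [div_inv_eq_mul]; ring
      · exact mul_le_mul' le_self_add le_rfl
    · have h2 := hb1 h hh j t
      rw [eLpNorm_enorm]
      refine h2.trans ?_
      rw [er1, hc]
      simp only
      rw [mul_left_comm, ← mul_assoc (ENNReal.ofReal (2 ^ (-(j * (n * ε)) : ℝ))),
        ofReal_two_rpow_mul]
      refine mul_le_mul' (le_of_eq ?_) ?_
      · congr 2
        rw [div_inv_eq_mul]; ring
      · exact mul_le_mul' le_add_self le_rfl
  · rw [← (ENNReal.pow_right_strictMono two_ne_zero).le_iff_le, ← eLpNorm_sq]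
    have e : ∀ t, ((Ks * ∑' j, c h j t ^ 2) ^ (1 / 2 : ℝ)) ^ 2 = Ks * ∑' j, c h j t ^ 2 := by
      intro t
      rw [← ENNReal.rpow_two, ← ENNReal.rpow_mul]
      norm_num
    simp only [e]
    calc _ ≤ Ks * ∑' j, eLpNorm (fun t => c h j t ^ 2) (q / 2) volume :=
          (eLpNorm_const_mul_le hKs _ _).trans (mul_le_mul_right
            (eLpNorm_tsum_le (fun j => (hcm h hh j).pow_const 2) hdiv) _)
      _ ≤ Ks * ∑' j, (K * Kq * sobNorm s (piece h j)) ^ 2 := by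
          refine mul_le_mul_right (ENNReal.tsum_le_tsum fun j => ?_) _
          rw [eLpNorm_sq]
          exact pow_le_pow_left' (hcq h hh j) 2
      _ = _ := by
          simp only [mul_pow]
          rw [ENNReal.tsum_mul_left, tsum_sobNorm_piece_sq s hh.measurable,
            ← ENNReal.rpow_two (Ks ^ (1 / 2 : ℝ)), ← ENNReal.rpow_mul]
          norm_num
          ring

lemma halfWaveBound_of_top [Nontrivial E] {q : ℝ≥0∞} {s : ℝ} (hq : 2 < q) (hqt : q ≠ ⊤)
    (hadm : 2 / q.toReal < (Module.finrank ℝ E - 1))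
    (hscal : 1 / q.toReal = Module.finrank ℝ E / 2 - s) :
    HalfWaveBound E q ⊤ s := by
  set n : ℝ := (Module.finrank ℝ E : ℝ) with hndef
  obtain ⟨β, hβ1, hβ2⟩ := exists_between hadm
  have hβ0 : 0 ≤ β := le_trans (by positivity) hβ1.le
  have hq2 : 2 < q.toReal := by
    have := (ENNReal.toReal_lt_toReal ofNat_ne_top hqt).2 hq
    simpa using this
  obtain ⟨ε, hε0, hε1, hε2, hε3⟩ : ∃ ε : ℝ, 0 < ε ∧ ε < 1 / q.toReal ∧
      1 / q.toReal + ε ≤ 1 / 2 ∧ 2 * (1 / q.toReal + ε) < β := by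
    have hlt : 1 / q.toReal < 1 / 2 := one_div_lt_one_div_of_lt two_pos hq2
    have hpos : 0 < 1 / q.toReal := by positivity
    have h4 : (2 : ℝ) / q.toReal = 2 * (1 / q.toReal) := by ring
    rw [h4] at hβ1
    refine ⟨min (min (1 / q.toReal / 2) (1 / 2 - 1 / q.toReal)) ((β - 2 * (1 / q.toReal)) / 4),
      ?_, ?_, ?_, ?_⟩
    · exact lt_min (lt_min (by linarith) (by linarith)) (by linarith)
    · exact (min_le_left _ _).trans_lt ((min_le_left _ _).trans_lt (by linarith))
    · have := (min_le_left _ ((β - 2 * (1 / q.toReal)) / 4)).trans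
        (min_le_right (1 / q.toReal / 2) (1 / 2 - 1 / q.toReal))
      linarith
    · have := min_le_right (min (1 / q.toReal / 2) (1 / 2 - 1 / q.toReal))
        ((β - 2 * (1 / q.toReal)) / 4)
      linarith
  have hq0pos : 0 < 1 / q.toReal - ε := by linarith
  have hq1pos : 0 < 1 / q.toReal + ε := by positivity
  set q0 : ℝ≥0∞ := ENNReal.ofReal (1 / q.toReal - ε)⁻¹ with hq0
  set q1 : ℝ≥0∞ := ENNReal.ofReal (1 / q.toReal + ε)⁻¹ with hq1
  have eq0 : q0.toReal = (1 / q.toReal - ε)⁻¹ := ENNReal.toReal_ofReal (by positivity)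
  have eq1 : q1.toReal = (1 / q.toReal + ε)⁻¹ := ENNReal.toReal_ofReal (by positivity)
  have h2q1 : 2 ≤ q1 := by
    rw [hq1, ← ENNReal.ofReal_ofNat 2]
    refine ENNReal.ofReal_le_ofReal ?_
    rw [le_inv_comm₀ two_pos hq1pos]
    simpa using hε2
  have h2q0 : 2 ≤ q0 := by
    refine h2q1.trans (ENNReal.ofReal_le_ofReal ?_)
    exact inv_anti₀ hq0pos (by linarith)
  obtain ⟨K, hK, hb⟩ := exists_eLpNorm_wave_piece_le E (β := β) (r := ⊤) hβ0 le_top (by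
    simpa using hβ2.le)
  obtain ⟨K0, hK0, hb0⟩ := exists_eLpNorm_pieceEnergy_le E s (β := β) h2q0 (by
    rw [eq0, div_inv_eq_mul]; linarith)
  obtain ⟨K1, hK1, hb1⟩ := exists_eLpNorm_pieceEnergy_le E s (β := β) h2q1 (by
    rw [eq1, div_inv_eq_mul]; linarith)
  obtain ⟨Ks, hKs, hbs⟩ := exists_eLpNorm_tsum_sq_le (μ := (volume : Measure ℝ))
    (δ := ε) hε0 hq.le hqt
    (p0 := q0) (p1 := q1) ofReal_ne_top ofReal_ne_top (by simpa [hq0] using hq0pos)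
    (by simpa [hq1] using hq1pos) (by rw [eq0, eq1]; simp only [one_div, inv_inv]; ring)
  set L := K * (K0 + K1) with hL
  set F : (E → ℂ) → ℤ → ℝ → ℝ≥0∞ := fun h j t =>
    K * (ENNReal.ofReal (2 ^ (j * (n - n / (⊤ : ℝ≥0∞).toReal) : ℝ)) * pieceEnergy β h j t) with hF
  have hFm : ∀ h, IsData h → ∀ j, Measurable (F h j) := fun h hh j =>
    ((measurable_pieceEnergy β hh j).const_mul _).const_mul _
  have hFq : ∀ (h : E → ℂ) (j : ℤ) (p : ℝ≥0∞) (e : ℝ) (K2 : ℝ≥0∞), K2 ≤ K0 + K1 →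
      e = 1 / q.toReal - 1 / p.toReal →
      eLpNorm (pieceEnergy β h j) p volume ≤
        K2 * (ENNReal.ofReal (2 ^ (j * (-(1 / p.toReal) - s - n / 2) : ℝ)) *
          sobNorm s (piece h j)) →
      eLpNorm (F h j) p volume ≤
        ENNReal.ofReal (2 ^ (j * e : ℝ)) * (L * sobNorm s (piece h j)) := by
    intro h j p e K2 hK2 he hp
    refine (eLpNorm_const_mul_le hK _ _).trans ?_
    refine (mul_le_mul_right (eLpNorm_const_mul_le ofReal_ne_top _ _) _).trans ?_
    refine (mul_le_mul_right (mul_le_mul_right (hp.trans (mul_le_mul' hK2 le_rfl)) _) _).trans_eq ?_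
    rw [show (j * e : ℝ) = j * (n - n / (⊤ : ℝ≥0∞).toReal) + j * (-(1 / p.toReal) - s - n / 2) by
      rw [he, hscal, ENNReal.toReal_top, _root_.div_zero]
      ring, ← ofReal_two_rpow_mul]
    ring
  refine ⟨Ks ^ (1 / 2 : ℝ) * L, by finiteness, fun h hh =>
    ⟨fun t => ∑' j, F h j t, Measurable.tsum (hFm h hh), fun t => ?_, ?_⟩⟩
  · have h1 : eLpNorm (wave h t) ⊤ volume ≤
        eLpNorm (fun x => ∑' j, ‖wave (piece h j) t x‖ₑ) ⊤ volume :=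
      eLpNorm_mono_enorm fun x => by
        rw [enorm_eq_self]
        exact enorm_wave_le_tsum hh t x
    refine h1.trans ((eLpNorm_tsum_le (measurable_enorm_wave_piece hh · t) le_top).trans
      (ENNReal.tsum_le_tsum fun j => ?_))
    rw [eLpNorm_enorm]
    exact hb h hh j t
  · rw [← (ENNReal.pow_right_strictMono two_ne_zero).le_iff_le]
    refine (hbs (F h) (fun j => L * sobNorm s (piece h j)) (hFm h hh) (fun j => ?_)
      fun j => ?_).trans_eq ?_
    · exact hFq h j q0 ε K0 le_self_add (by rw [eq0, one_div, one_div, inv_inv]; ring) (hb0 h hh j)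
    · rw [← mul_neg]
      exact hFq h j q1 (-ε) K1 le_add_self (by rw [eq1, one_div, one_div, inv_inv]; ring)
        (hb1 h hh j)
    · simp only [mul_pow]
      rw [ENNReal.tsum_mul_left, tsum_sobNorm_piece_sq s hh.measurable,
        ← ENNReal.rpow_two (Ks ^ (1 / 2 : ℝ)), ← ENNReal.rpow_mul]
      norm_num
      ring

end Majorant

section Maximal

/-- The Hardy–Littlewood maximal function on the line, over balls of dyadic radius. -/
noncomputable def maxFn (φ : ℝ → ℝ≥0∞) (t : ℝ) : ℝ≥0∞ :=
  ⨆ k : ℤ, (ENNReal.ofReal (2 ^ k))⁻¹ * ∫⁻ u in Metric.closedBall t (2 ^ k), φ u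

lemma measurable_maxFn {φ : ℝ → ℝ≥0∞} (hφ : Measurable φ) : Measurable (maxFn φ) := by
  refine Measurable.iSup fun k => Measurable.const_mul ?_ _
  have h1 : ∀ t : ℝ, ∫⁻ u in Metric.closedBall t (2 ^ k), φ u =
      ∫⁻ u, {z : ℝ × ℝ | dist z.2 z.1 ≤ 2 ^ k}.indicator (fun z => φ z.2) (t, u) := by
    intro t
    rw [← lintegral_indicator Metric.isClosed_closedBall.measurableSet]
    rfl
  simp only [h1]
  refine Measurable.lintegral_prod_right' (f :=
    {z : ℝ × ℝ | dist z.2 z.1 ≤ 2 ^ k}.indicator (fun z => φ z.2)) ?_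
  exact (hφ.comp measurable_snd).indicator
    (measurableSet_le (measurable_snd.dist measurable_fst) measurable_const)

lemma maxFn_weak (φ : ℝ → ℝ≥0∞) {l : ℝ≥0∞} (hl : l ≠ 0) (hlt : l ≠ ⊤) :
    l * volume {t | l < maxFn φ t} ≤ 8 * ∫⁻ u, φ u := by
  rcases eq_or_ne (∫⁻ u, φ u) ⊤ with htop | htop
  · rw [htop, ENNReal.mul_top (by norm_num)]
    exact le_top
  have hk : ∀ t, ∃ k : ℤ, l < maxFn φ t →
      l * ENNReal.ofReal (2 ^ k) ≤ ∫⁻ u in Metric.closedBall t (2 ^ k), φ u := by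
    intro t
    by_cases ht : l < maxFn φ t
    · obtain ⟨k, hk⟩ := lt_iSup_iff.1 ht
      refine ⟨k, fun _ => ?_⟩
      have hpos : ENNReal.ofReal ((2 : ℝ) ^ k) ≠ 0 := by
        simp only [ne_eq, ENNReal.ofReal_eq_zero, not_le]; positivity
      rw [← ENNReal.div_eq_inv_mul] at hk
      exact (ENNReal.le_div_iff_mul_le (Or.inl hpos) (Or.inl ofReal_ne_top)).1 hk.le
    · exact ⟨0, fun h => (ht h).elim⟩
  choose k hk using hk
  set A : Set ℝ := {t | l < maxFn φ t} with hA
  have hbd : ∀ t ∈ A, (2 : ℝ) ^ k t ≤ (l⁻¹ * ∫⁻ u, φ u).toReal := by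
    intro t ht
    rw [← ENNReal.ofReal_le_iff_le_toReal (ENNReal.mul_ne_top (by simpa using hl) htop),
      ← ENNReal.div_eq_inv_mul, ENNReal.le_div_iff_mul_le (Or.inl hl) (Or.inl hlt), mul_comm]
    exact (hk t ht).trans (setLIntegral_le_lintegral _ _)
  obtain ⟨u, huA, hdisj, hcov⟩ := Vitali.exists_disjoint_subfamily_covering_enlargement_closedBall
    A (fun t => t) (fun t => (2 : ℝ) ^ k t) _ hbd 4 (by norm_num)
  have hcount : u.Countable := hdisj.countable_of_nonempty_interior fun t _ => by
    rw [interior_closedBall _ (by positivity)]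
    exact Metric.nonempty_ball.2 (by positivity)
  have hsub : A ⊆ ⋃ t ∈ u, Metric.closedBall t (4 * 2 ^ k t) := by
    intro t ht
    obtain ⟨b, hb, hsubb⟩ := hcov t ht
    exact Set.mem_biUnion hb (hsubb (Metric.mem_closedBall_self (by positivity)))
  calc l * volume A ≤ l * ∑' t : u, volume (Metric.closedBall (t : ℝ) (4 * 2 ^ k t)) :=
        mul_le_mul_right ((measure_mono hsub).trans (measure_biUnion_le _ hcount _)) _
    _ = 8 * ∑' t : u, l * ENNReal.ofReal (2 ^ k t) := by
        rw [← ENNReal.tsum_mul_left, ← ENNReal.tsum_mul_left]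
        refine tsum_congr fun t => ?_
        rw [Real.volume_closedBall, show 2 * (4 * (2 : ℝ) ^ k t) = 8 * 2 ^ k t by ring,
          ENNReal.ofReal_mul (by norm_num), ENNReal.ofReal_ofNat]
        ring
    _ ≤ 8 * ∑' t : u, ∫⁻ v in Metric.closedBall (t : ℝ) (2 ^ k t), φ v :=
        mul_le_mul_right (ENNReal.tsum_le_tsum fun t : u => hk t (huA t.2)) _
    _ = 8 * ∫⁻ v in ⋃ t ∈ u, Metric.closedBall t (2 ^ k t), φ v := by
        rw [lintegral_biUnion hcount (fun _ _ => Metric.isClosed_closedBall.measurableSet) hdisj]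
    _ ≤ _ := mul_le_mul_right (setLIntegral_le_lintegral _ _) _

lemma maxFn_le_add {φ ψ : ℝ → ℝ≥0∞} (hψ : Measurable ψ) {c : ℝ≥0∞} (h : ∀ u, φ u ≤ ψ u + c)
    (t : ℝ) : maxFn φ t ≤ maxFn ψ t + 2 * c := by
  refine iSup_le fun k => ?_
  have hpos : ENNReal.ofReal ((2 : ℝ) ^ k) ≠ 0 := by
    simp only [ne_eq, ENNReal.ofReal_eq_zero, not_le]; positivity
  calc _ ≤ (ENNReal.ofReal (2 ^ k))⁻¹ * ∫⁻ u in Metric.closedBall t (2 ^ k), (ψ u + c) :=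
        mul_le_mul_right (lintegral_mono fun u => h u) _
    _ = (ENNReal.ofReal (2 ^ k))⁻¹ * (∫⁻ u in Metric.closedBall t (2 ^ k), ψ u) +
        ((ENNReal.ofReal (2 ^ k))⁻¹ * ENNReal.ofReal (2 ^ k)) * (2 * c) := by
        rw [lintegral_add_left hψ, setLIntegral_const, Real.volume_closedBall,
          ENNReal.ofReal_mul (by norm_num), ENNReal.ofReal_ofNat]
        ring
    _ ≤ _ := by
        rw [ENNReal.inv_mul_cancel hpos ofReal_ne_top, one_mul]
        gcongr
        exact le_iSup (fun k : ℤ =>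
          (ENNReal.ofReal (2 ^ k))⁻¹ * ∫⁻ u in Metric.closedBall t (2 ^ k), ψ u) k

lemma sq_le_lintegral_level (a : ℝ≥0∞) :
    a ^ 2 ≤ 2 * ∫⁻ l in Set.Ioi (0 : ℝ), ENNReal.ofReal (2 * l) *
      {l : ℝ | ENNReal.ofReal l < a}.indicator 1 l := by
  have hfin : ∀ b : ℝ, 0 ≤ b → ENNReal.ofReal b ≤ a → ENNReal.ofReal b ^ 2 ≤
      2 * ∫⁻ l in Set.Ioi (0 : ℝ), ENNReal.ofReal (2 * l) *
        {l : ℝ | ENNReal.ofReal l < a}.indicator 1 l := by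
    intro b hb hba
    have hsub : Set.Ioo (b / 2) b ⊆ Set.Ioi 0 := fun l hl => by
      have := hl.1
      simp only [Set.mem_Ioi]; linarith
    calc ENNReal.ofReal b ^ 2 = 2 * ∫⁻ l in Set.Ioo (b / 2) b, ENNReal.ofReal b := by
          rw [setLIntegral_const, Real.volume_Ioo, ← ENNReal.ofReal_mul hb,
            ← ENNReal.ofReal_ofNat 2, ← ENNReal.ofReal_mul zero_le_two, ← ENNReal.ofReal_pow hb]
          congr 1; ring
      _ ≤ 2 * ∫⁻ l in Set.Ioo (b / 2) b, ENNReal.ofReal (2 * l) *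
          {l : ℝ | ENNReal.ofReal l < a}.indicator 1 l := by
          refine mul_le_mul_right (setLIntegral_mono' measurableSet_Ioo fun l hl => ?_) _
          have hla : ENNReal.ofReal l < a :=
            ((ENNReal.ofReal_lt_ofReal_iff (by linarith [hl.1, hl.2])).2 hl.2).trans_le hba
          rw [Set.indicator_of_mem (by exact hla), Pi.one_apply, mul_one]
          exact ENNReal.ofReal_le_ofReal (by linarith [hl.1])
      _ ≤ _ := mul_le_mul_right (lintegral_mono_set hsub) _
  rcases eq_or_ne a ⊤ with rfl | ha
  · refine (top_le_iff.2 (ENNReal.eq_top_of_forall_nnreal_le fun b => ?_)).trans' le_top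
    have hb := hfin (1 + b) (by positivity) le_top
    refine le_trans ?_ hb
    rw [← ENNReal.ofReal_pow (by positivity), ← ENNReal.ofReal_coe_nnreal]
    exact ENNReal.ofReal_le_ofReal (by nlinarith [b.coe_nonneg])
  · have := hfin a.toReal toReal_nonneg (ENNReal.ofReal_toReal ha).le
    rwa [ENNReal.ofReal_toReal ha] at this

lemma lintegral_level_le (a : ℝ≥0∞) :
    ∫⁻ l in Set.Ioi (0 : ℝ), {l : ℝ | ENNReal.ofReal l < a}.indicator 1 l ≤ a := by
  rcases eq_or_ne a ⊤ with rfl | ha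
  · exact le_top
  rw [lintegral_indicator_one (measurableSet_lt ENNReal.measurable_ofReal measurable_const),
    Measure.restrict_apply (measurableSet_lt ENNReal.measurable_ofReal measurable_const)]
  calc _ ≤ volume (Set.Ioo 0 a.toReal) := by
        refine measure_mono fun l hl => ⟨hl.2, ?_⟩
        exact (ENNReal.ofReal_lt_iff_lt_toReal (le_of_lt hl.2) ha).1 hl.1
    _ = a := by rw [Real.volume_Ioo, sub_zero, ENNReal.ofReal_toReal ha]

/-- The Hardy–Littlewood maximal theorem in `L²`. -/
lemma lintegral_maxFn_sq_le {φ : ℝ → ℝ≥0∞} (hφ : Measurable φ) :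
    ∫⁻ t, maxFn φ t ^ 2 ≤ 256 * ∫⁻ u, φ u ^ 2 := by
  have hlev : ∀ f : ℝ → ℝ≥0∞, Measurable f → Measurable fun z : ℝ × ℝ =>
      {l : ℝ | ENNReal.ofReal l < f z.1}.indicator (1 : ℝ → ℝ≥0∞) z.2 := by
    intro f hf
    exact (measurable_const (a := (1 : ℝ≥0∞))).indicator (s := {z : ℝ × ℝ | ENNReal.ofReal z.2 < f z.1})
      (measurableSet_lt (ENNReal.measurable_ofReal.comp measurable_snd) (hf.comp measurable_fst))
  have hM := measurable_maxFn hφ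
  have hw : ∀ l ∈ Set.Ioi (0 : ℝ), ENNReal.ofReal (2 * l) * volume {t | ENNReal.ofReal l < maxFn φ t} ≤
      32 * ∫⁻ u, φ u * {l : ℝ | ENNReal.ofReal l < 4 * φ u}.indicator 1 l := by
    intro l hl
    have hl0 : 0 < l := hl
    set ψ : ℝ → ℝ≥0∞ := fun u => φ u * {l : ℝ | ENNReal.ofReal l < 4 * φ u}.indicator 1 l with hψ
    have hψm : Measurable ψ :=
      hφ.mul ((hlev (fun u => 4 * φ u) (hφ.const_mul 4)).comp (measurable_id.prodMk measurable_const))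
    have hle : ∀ u, φ u ≤ ψ u + ENNReal.ofReal (l / 4) := by
      intro u
      by_cases hu : ENNReal.ofReal l < 4 * φ u
      · simp only [hψ, Set.indicator_of_mem (show l ∈ {l : ℝ | ENNReal.ofReal l < 4 * φ u} from hu)]
        simp
      · refine le_add_left ?_
        rw [ENNReal.ofReal_div_of_pos (by norm_num), ENNReal.ofReal_ofNat,
          ENNReal.le_div_iff_mul_le (by simp) (by simp), mul_comm]
        exact not_lt.1 hu
    have h1 : {t | ENNReal.ofReal l < maxFn φ t} ⊆ {t | ENNReal.ofReal (l / 2) < maxFn ψ t} := by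
      intro t ht
      by_contra hcon
      have h2 := (maxFn_le_add hψm hle t).trans
        (add_le_add_left (not_lt.1 hcon) _)
      rw [← ENNReal.ofReal_ofNat 2, ← ENNReal.ofReal_mul zero_le_two,
        ← ENNReal.ofReal_add (by positivity) (by positivity), show l / 2 + 2 * (l / 4) = l by ring]
        at h2
      exact absurd ht (not_lt.2 h2)
    calc _ ≤ 4 * (ENNReal.ofReal (l / 2) * volume {t | ENNReal.ofReal (l / 2) < maxFn ψ t}) := by
          rw [← mul_assoc, ← ENNReal.ofReal_ofNat 4, ← ENNReal.ofReal_mul (by norm_num),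
            show 4 * (l / 2) = 2 * l by ring]
          exact mul_le_mul_right (measure_mono h1) _
      _ ≤ 4 * (8 * ∫⁻ u, ψ u) := mul_le_mul_right (maxFn_weak ψ
          (by simp only [ne_eq, ENNReal.ofReal_eq_zero, not_le]; positivity) ofReal_ne_top) _
      _ = _ := by rw [← mul_assoc]; norm_num
  have hmm : Measurable fun z : ℝ × ℝ => φ z.1 *
      {l : ℝ | ENNReal.ofReal l < 4 * φ z.1}.indicator (1 : ℝ → ℝ≥0∞) z.2 :=
    (hφ.comp measurable_fst).mul (hlev (fun u => 4 * φ u) (hφ.const_mul 4))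
  have hmm2 : Measurable fun z : ℝ × ℝ => ENNReal.ofReal (2 * z.2) *
      {l : ℝ | ENNReal.ofReal l < maxFn φ z.1}.indicator (1 : ℝ → ℝ≥0∞) z.2 :=
    Measurable.mul (by fun_prop) (hlev (maxFn φ) hM)
  calc ∫⁻ t, maxFn φ t ^ 2 ≤ ∫⁻ t, 2 * ∫⁻ l in Set.Ioi (0 : ℝ), ENNReal.ofReal (2 * l) *
        {l : ℝ | ENNReal.ofReal l < maxFn φ t}.indicator 1 l :=
        lintegral_mono fun t => sq_le_lintegral_level _
    _ = 2 * ∫⁻ l in Set.Ioi (0 : ℝ), ∫⁻ t, ENNReal.ofReal (2 * l) *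
        {l : ℝ | ENNReal.ofReal l < maxFn φ t}.indicator 1 l := by
        rw [lintegral_const_mul _ hmm2.lintegral_prod_right', lintegral_lintegral_swap]
        exact hmm2.aemeasurable
    _ ≤ 2 * ∫⁻ l in Set.Ioi (0 : ℝ), 32 * ∫⁻ u, φ u *
        {l : ℝ | ENNReal.ofReal l < 4 * φ u}.indicator 1 l := by
        refine mul_le_mul_right (setLIntegral_mono' measurableSet_Ioi fun l hl => ?_) _
        refine le_trans (le_of_eq ?_) (hw l hl)
        rw [lintegral_const_mul' _ _ ofReal_ne_top]
        congr 1
        rw [← lintegral_indicator_one (measurableSet_lt measurable_const hM)]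
        rfl
    _ = 64 * ∫⁻ u, φ u * ∫⁻ l in Set.Ioi (0 : ℝ), {l : ℝ | ENNReal.ofReal l < 4 * φ u}.indicator 1 l := by
        rw [lintegral_const_mul' _ _ ofNat_ne_top, ← mul_assoc, lintegral_lintegral_swap]
        · norm_num
          congr 1
          refine lintegral_congr fun u => ?_
          rw [lintegral_const_mul]
          exact (measurable_const (a := (1 : ℝ≥0∞))).indicator
            (measurableSet_lt ENNReal.measurable_ofReal measurable_const)
        · exact (hmm.comp measurable_swap).aemeasurable
    _ ≤ 64 * ∫⁻ u, φ u * (4 * φ u) :=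
        mul_le_mul_right (lintegral_mono fun u => mul_le_mul_right (lintegral_level_le _) _) _
    _ = _ := by
        rw [← lintegral_const_mul' _ _ ofNat_ne_top, ← lintegral_const_mul' _ _ ofNat_ne_top]
        refine lintegral_congr fun u => ?_
        ring

/-- Averages over arbitrary intervals are controlled by the maximal function. -/
lemma lintegral_closedBall_le_maxFn (φ : ℝ → ℝ≥0∞) (t : ℝ) {R : ℝ} (hR : 0 < R) :
    ∫⁻ u in Metric.closedBall t R, φ u ≤ ENNReal.ofReal (2 * R) * maxFn φ t := by
  obtain ⟨k, hk1, hk2⟩ := exists_mem_Ico_zpow hR (one_lt_two (α := ℝ))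
  have hpos : ENNReal.ofReal ((2 : ℝ) ^ (k + 1)) ≠ 0 := by
    simp only [ne_eq, ENNReal.ofReal_eq_zero, not_le]; positivity
  calc _ ≤ ∫⁻ u in Metric.closedBall t (2 ^ (k + 1)), φ u :=
        lintegral_mono_set (Metric.closedBall_subset_closedBall hk2.le)
    _ = ENNReal.ofReal (2 ^ (k + 1)) * ((ENNReal.ofReal (2 ^ (k + 1)))⁻¹ *
        ∫⁻ u in Metric.closedBall t (2 ^ (k + 1)), φ u) := by
        rw [← mul_assoc, ENNReal.mul_inv_cancel hpos ofReal_ne_top, one_mul]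
    _ ≤ _ := by
        refine mul_le_mul' (ENNReal.ofReal_le_ofReal ?_) ?_
        · rw [zpow_add₀ two_ne_zero, zpow_one]; linarith
        · exact le_iSup (fun k : ℤ =>
            (ENNReal.ofReal (2 ^ k))⁻¹ * ∫⁻ u in Metric.closedBall t (2 ^ k), φ u) (k + 1)

end Maximal

section Slices

lemma lintegral_euclidean_succ (m : ℕ) {f : ℝ × ℝ → ℝ≥0∞} (hf : Measurable f) :
    ∫⁻ y : EuclideanSpace ℝ (Fin (m + 1)), f (y 0, ‖y‖ ^ 2) =
      ∫⁻ u : ℝ, ∫⁻ z : EuclideanSpace ℝ (Fin m), f (u, u ^ 2 + ‖z‖ ^ 2) := by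
  set g : ℝ × (Fin m → ℝ) → ℝ≥0∞ := fun p => f (p.1, p.1 ^ 2 + ∑ i, p.2 i ^ 2) with hg
  have hgm : Measurable g := hf.comp (by fun_prop)
  have h1 : ∀ u : ℝ, ∫⁻ z : EuclideanSpace ℝ (Fin m), f (u, u ^ 2 + ‖z‖ ^ 2) =
      ∫⁻ w : Fin m → ℝ, g (u, w) := by
    intro u
    rw [← (PiLp.volume_preserving_ofLp (Fin m)).lintegral_comp (f := fun w => g (u, w))
      (hgm.comp measurable_prodMk_left)]
    refine lintegral_congr fun z => ?_
    simp only [hg, EuclideanSpace.norm_sq_eq, Real.norm_eq_abs, sq_abs]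
  simp only [h1]
  have h2 := ((volume_preserving_piFinSuccAbove (fun _ : Fin (m + 1) => ℝ) 0).comp
    (PiLp.volume_preserving_ofLp (Fin (m + 1)))).lintegral_comp hgm
  rw [Measure.volume_eq_prod, lintegral_prod _ hgm.aemeasurable] at h2
  rw [← h2]
  refine lintegral_congr fun y => ?_
  simp only [hg, EuclideanSpace.norm_sq_eq, Real.norm_eq_abs, sq_abs, Fin.sum_univ_succ]
  rfl

/-- The open spherical shell with the given inner and outer radii. -/
def annulus (E : Type*) [NormedAddCommGroup E] (R R' : ℝ) : Set E := {y | R < ‖y‖ ∧ ‖y‖ < R'}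

lemma measurableSet_annulus {E : Type*} [NormedAddCommGroup E] [MeasurableSpace E] [BorelSpace E]
    (R R' : ℝ) : MeasurableSet (annulus E R R') :=
  (measurableSet_lt measurable_const measurable_norm).inter
    (measurableSet_lt measurable_norm measurable_const)

lemma lintegral_slice_le (m : ℕ) (hm : 2 ≤ m) {R R' : ℝ} (hR : 0 < R) (hRR : R ≤ R') (u : ℝ) :
    ∫⁻ z : EuclideanSpace ℝ (Fin m), (Set.Ioo (R ^ 2) (R' ^ 2)).indicator 1 (u ^ 2 + ‖z‖ ^ 2) ≤
      (volume : Measure (EuclideanSpace ℝ (Fin m))).toSphere Set.univ *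
        ENNReal.ofReal (R' ^ (m - 2) * (R' ^ 2 - R ^ 2)) := by
  have : Nontrivial (EuclideanSpace ℝ (Fin m)) := by
    have : Nonempty (Fin m) := ⟨⟨0, by omega⟩⟩
    infer_instance
  have hφ : Measurable fun ρ : ℝ =>
      (Set.Ioo (R ^ 2) (R' ^ 2)).indicator (1 : ℝ → ℝ≥0∞) (u ^ 2 + ρ ^ 2) :=
    ((measurable_const (a := (1 : ℝ≥0∞))).indicator measurableSet_Ioo).comp
      (f := fun ρ : ℝ => u ^ 2 + ρ ^ 2) (by fun_prop)
  rw [lintegral_radial hφ, finrank_euclideanSpace_fin]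
  refine mul_le_mul_right ?_ _
  set a := √(R ^ 2 - u ^ 2) with ha
  set b := √(R' ^ 2 - u ^ 2) with hb
  have hR' : 0 < R' := hR.trans_le hRR
  have hbR : b ≤ R' := by
    rw [hb, Real.sqrt_le_left hR'.le]; nlinarith [sq_nonneg u]
  have hsq : R ^ 2 ≤ R' ^ 2 := by gcongr
  calc _ ≤ ∫⁻ ρ in Set.Ioo a b, ENNReal.ofReal (R' ^ (m - 2) * b) := by
        rw [← lintegral_indicator measurableSet_Ioi, ← lintegral_indicator measurableSet_Ioo]
        refine lintegral_mono fun ρ => ?_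
        by_cases hρ : 0 < ρ ∧ u ^ 2 + ρ ^ 2 ∈ Set.Ioo (R ^ 2) (R' ^ 2)
        · obtain ⟨hρ0, hρ1, hρ2⟩ := hρ
          have hlt : ρ < b := Real.lt_sqrt_of_sq_lt (by linarith)
          have hgt : a < ρ := by rw [ha, Real.sqrt_lt' hρ0]; linarith
          rw [Set.indicator_of_mem (show ρ ∈ Set.Ioi (0 : ℝ) from hρ0),
            Set.indicator_of_mem (show ρ ∈ Set.Ioo a b from ⟨hgt, hlt⟩),
            Set.indicator_of_mem (show _ ∈ Set.Ioo (R ^ 2) (R' ^ 2) from ⟨hρ1, hρ2⟩),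
            Pi.one_apply, mul_one]
          refine ENNReal.ofReal_le_ofReal ?_
          rw [show m - 1 = m - 2 + 1 by omega, pow_succ]
          gcongr
          exact hlt.le.trans hbR
        · refine le_of_eq_of_le ?_ zero_le
          by_cases hρ0 : 0 < ρ
          · rw [Set.indicator_of_mem (show ρ ∈ Set.Ioi (0 : ℝ) from hρ0),
              Set.indicator_of_notMem (fun hmem => hρ ⟨hρ0, hmem⟩), mul_zero]
          · exact Set.indicator_of_notMem hρ0 _
    _ = ENNReal.ofReal (R' ^ (m - 2) * (b * (b - a))) := by
        rw [setLIntegral_const, Real.volume_Ioo, ← ENNReal.ofReal_mul (by positivity), mul_assoc]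
    _ ≤ _ := by
        refine ENNReal.ofReal_le_ofReal ?_
        gcongr
        have ha0 : 0 ≤ a := Real.sqrt_nonneg _
        have hb0 : 0 ≤ b := Real.sqrt_nonneg _
        have hab : a ≤ b := Real.sqrt_le_sqrt (by linarith)
        have h1 : R ^ 2 - u ^ 2 ≤ a ^ 2 := by
          rcases le_total 0 (R ^ 2 - u ^ 2) with h | h
          · rw [ha, Real.sq_sqrt h]
          · exact h.trans (sq_nonneg _)
        rcases le_total 0 (R' ^ 2 - u ^ 2) with h | h
        · have h2 : b ^ 2 = R' ^ 2 - u ^ 2 := Real.sq_sqrt h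
          nlinarith
        · have : b = 0 := Real.sqrt_eq_zero_of_nonpos h
          rw [this]; nlinarith

lemma lintegral_annulus_le (m : ℕ) (hm : 2 ≤ m) {R R' : ℝ} (hR : 0 < R) (hRR : R ≤ R')
    {φ : ℝ → ℝ≥0∞} (hφ : Measurable φ) :
    ∫⁻ y in annulus (EuclideanSpace ℝ (Fin (m + 1))) R R', φ (y 0) ≤
      (volume : Measure (EuclideanSpace ℝ (Fin m))).toSphere Set.univ *
        ENNReal.ofReal (R' ^ (m - 2) * (R' ^ 2 - R ^ 2)) *
          ∫⁻ u in Metric.closedBall 0 R', φ u := by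
  have hR' : 0 < R' := hR.trans_le hRR
  set I : Set ℝ := Set.Ioo (R ^ 2) (R' ^ 2) with hI
  have hmf : Measurable fun p : ℝ × ℝ => φ p.1 * I.indicator (1 : ℝ → ℝ≥0∞) p.2 :=
    (hφ.comp measurable_fst).mul
      (((measurable_const (a := (1 : ℝ≥0∞))).indicator measurableSet_Ioo).comp measurable_snd)
  have h1 : ∫⁻ y in annulus (EuclideanSpace ℝ (Fin (m + 1))) R R', φ (y 0) =
      ∫⁻ y : EuclideanSpace ℝ (Fin (m + 1)), φ (y 0) * I.indicator 1 (‖y‖ ^ 2) := by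
    rw [← lintegral_indicator (measurableSet_annulus R R')]
    refine lintegral_congr fun y => ?_
    have hiff : y ∈ annulus (EuclideanSpace ℝ (Fin (m + 1))) R R' ↔ ‖y‖ ^ 2 ∈ I := by
      simp only [annulus, Set.mem_ofPred_eq, hI, Set.mem_Ioo]
      rw [sq_lt_sq₀ hR.le (norm_nonneg _), sq_lt_sq₀ (norm_nonneg _) hR'.le]
    by_cases hy : ‖y‖ ^ 2 ∈ I
    · rw [Set.indicator_of_mem (hiff.2 hy), Set.indicator_of_mem hy, Pi.one_apply, mul_one]
    · rw [Set.indicator_of_notMem (fun h => hy (hiff.1 h)), Set.indicator_of_notMem hy, mul_zero]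
  rw [h1, lintegral_euclidean_succ m (f := fun p => φ p.1 * I.indicator 1 p.2) hmf,
    ← lintegral_indicator Metric.isClosed_closedBall.measurableSet]
  rw [← lintegral_const_mul _ (hφ.indicator Metric.isClosed_closedBall.measurableSet)]
  refine lintegral_mono fun u => ?_
  simp only
  by_cases hu : u ∈ Metric.closedBall (0 : ℝ) R'
  · rw [Set.indicator_of_mem hu, lintegral_const_mul, mul_comm]
    · exact mul_le_mul_left (lintegral_slice_le m hm hR hRR u) _
    · exact ((measurable_const (a := (1 : ℝ≥0∞))).indicator measurableSet_Ioo).comp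
        (f := fun z : EuclideanSpace ℝ (Fin m) => u ^ 2 + ‖z‖ ^ 2) (by fun_prop)
  · refine le_of_eq_of_le ?_ zero_le
    have hu' : R' < |u| := by simpa using hu
    have : ∀ z : EuclideanSpace ℝ (Fin m),
        φ u * I.indicator (1 : ℝ → ℝ≥0∞) (u ^ 2 + ‖z‖ ^ 2) = 0 := by
      intro z
      rw [Set.indicator_of_notMem, mul_zero]
      intro hmem
      have h2 := hmem.2
      have h3 : R' ^ 2 < u ^ 2 := by
        rw [← sq_abs u]; exact (sq_lt_sq₀ hR'.le (abs_nonneg _)).2 hu'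
      nlinarith [sq_nonneg ‖z‖]
    simp [this]

lemma le_volume_annulus (E : Type*) [NormedAddCommGroup E] [InnerProductSpace ℝ E]
    [FiniteDimensional ℝ E] [MeasurableSpace E] [BorelSpace E] [Nontrivial E] {R R' : ℝ}
    (hR : 0 < R) :
    (volume : Measure E).toSphere Set.univ *
      ENNReal.ofReal (R ^ (Module.finrank ℝ E - 1) * (R' - R)) ≤ volume (annulus E R R') := by
  have h1 : volume (annulus E R R') =
      ∫⁻ y : E, (Set.Ioo R R').indicator (1 : ℝ → ℝ≥0∞) ‖y‖ := by
    rw [← lintegral_indicator_one (measurableSet_annulus R R')]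
    rfl
  rw [h1, lintegral_radial (φ := (Set.Ioo R R').indicator 1)
    (measurable_one.indicator measurableSet_Ioo)]
  refine mul_le_mul_right ?_ _
  have hsub : Set.Ioo R R' ⊆ Set.Ioi 0 := fun ρ hρ => hR.trans hρ.1
  calc _ = ∫⁻ ρ in Set.Ioo R R', ENNReal.ofReal (R ^ (Module.finrank ℝ E - 1)) := by
        rw [setLIntegral_const, Real.volume_Ioo, ENNReal.ofReal_mul (by positivity)]
    _ ≤ ∫⁻ ρ in Set.Ioo R R', ENNReal.ofReal (ρ ^ (Module.finrank ℝ E - 1)) *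
        (Set.Ioo R R').indicator (1 : ℝ → ℝ≥0∞) ρ := by
        refine setLIntegral_mono' measurableSet_Ioo fun ρ hρ => ?_
        rw [Set.indicator_of_mem hρ, Pi.one_apply, mul_one]
        refine ENNReal.ofReal_le_ofReal ?_
        have := hρ.1.le
        gcongr
    _ ≤ _ := lintegral_mono_set hsub

end Slices

section Averages

variable {E : Type*} [NormedAddCommGroup E] [InnerProductSpace ℝ E] [FiniteDimensional ℝ E]
  [MeasurableSpace E] [BorelSpace E]

lemma phase_comm (x w : E) : phase x w = phase w x := by rw [phase, phase, real_inner_comm]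

@[simp] lemma phase_zero_left (w : E) : phase 0 w = 1 := by simp [phase]

lemma phase_smul_right (x e : E) (ρ : ℝ) : phase x (ρ • e) = phase ⟪x, e⟫ ρ := by
  simp only [phase, inner_smul_right, RCLike.inner_apply]
  simp

/-- Averaging a character over a radial set only sees one coordinate. -/
lemma setIntegral_phase_eq {A : Set E} (hA : MeasurableSet A)
    (hr : IsRadial (A.indicator (1 : E → ℂ))) {e : E} (he : ‖e‖ = 1) (ξ : E) :
    ∫ y in A, phase y ξ = ∫ y in A, phase ⟪y, e⟫ ‖ξ‖ := by
  have h1 : ∀ ζ : E, ∫ y in A, phase y ζ = wave (A.indicator (1 : E → ℂ)) 0 ζ := by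
    intro ζ
    rw [wave, ← integral_indicator hA]
    refine integral_congr_ae (.of_forall fun y => ?_)
    by_cases hy : y ∈ A <;> simp [hy, phase_comm ζ y]
  rw [h1, (hr.wave 0).eq_norm_smul he, ← h1]
  simp only [phase_smul_right]

/-- The mean of a radial wave over a radial set, expressed through its trace at the origin. -/
lemma setIntegral_wave_eq {h : E → ℂ} (hh : IsData h) {A : Set E} (hA : MeasurableSet A)
    (hAfin : volume A ≠ ⊤) (hr : IsRadial (A.indicator (1 : E → ℂ))) {e : E} (he : ‖e‖ = 1)
    (t : ℝ) : ∫ y in A, wave h t y = ∫ y in A, wave h (t + ⟪y, e⟫) 0 := by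
  have : IsFiniteMeasure (volume.restrict A) := ⟨by simpa using hAfin.lt_top⟩
  have h_int : ∀ P : E × E → ℂ, Measurable P → (∀ z, ‖P z‖ = 1) →
      Integrable (fun z : E × E => P z * h z.2) ((volume.restrict A).prod volume) := by
    intro P hP hP1
    refine Integrable.bdd_mul (c := 1) ?_ hP.aestronglyMeasurable (.of_forall fun z => (hP1 z).le)
    exact hh.integrable.comp_snd _
  have hswap : ∀ P : E × E → ℂ, Measurable P → (∀ z, ‖P z‖ = 1) →
      ∫ y in A, ∫ ξ, P (y, ξ) * h ξ = ∫ ξ, (∫ y in A, P (y, ξ)) * h ξ := by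
    intro P hP hP1
    rw [integral_integral_swap (f := fun y ξ => P (y, ξ) * h ξ) (h_int P hP hP1)]
    simp only [integral_mul_const]
  have m1 : Measurable fun z : E × E => phase z.1 z.2 * phase t ‖z.2‖ := by
    unfold phase; fun_prop
  have m2 : Measurable fun z : E × E => phase (0 : E) z.2 * phase (t + ⟪z.1, e⟫) ‖z.2‖ := by
    unfold phase; fun_prop
  unfold wave
  rw [hswap _ m1 (by simp), hswap _ m2 (by simp)]
  refine integral_congr_ae (.of_forall fun ξ => ?_)
  simp only [phase_zero_left, one_mul, phase_add_left, integral_mul_const, integral_const_mul]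
  rw [setIntegral_phase_eq hA hr he, mul_comm (phase t _)]

lemma measurable_wave_zero {h : E → ℂ} (hm : Measurable h) : Measurable fun τ => wave h τ 0 :=
  (measurable_wave hm).comp (g := Function.uncurry (wave h)) (f := fun τ => (τ, (0 : E)))
    (by fun_prop)

variable (E) in
/-- The trace of a radial wave at the spatial origin is square integrable in time. -/
lemma exists_lintegral_wave_zero_sq_le [Nontrivial E] :
    ∃ K : ℝ≥0∞, K ≠ ⊤ ∧ ∀ h : E → ℂ, IsData h →
      ∫⁻ τ, ‖wave h τ 0‖ₑ ^ 2 ≤ K * sobNorm ((Module.finrank ℝ E - 1 : ℝ) / 2) h ^ 2 := by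
  set n := Module.finrank ℝ E with hn
  have hn0 : 1 ≤ n := Module.finrank_pos
  set S := (volume : Measure E).toSphere Set.univ with hS
  set c : ℝ := n * (volume : Measure E).real (Metric.ball 0 1) with hc
  have hS0 : S ≠ 0 := by
    rw [hS, Ne, Measure.measure_univ_eq_zero]; exact Measure.toSphere_ne_zero _
  have hSt : S ≠ ⊤ := measure_ne_top _ _
  obtain ⟨e, he⟩ := exists_norm_eq E zero_le_one
  refine ⟨‖c‖ₑ ^ 2 * 2 * S⁻¹, by finiteness, fun h hh => ?_⟩
  set k : ℝ → ℂ := (Set.Ioi (0 : ℝ)).indicator fun ρ => (ρ ^ (n - 1) : ℝ) • h (ρ • e) with hk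
  have hhm := hh.measurable
  have hkm : Measurable k := Measurable.indicator (by fun_prop) measurableSet_Ioi
  have hki : Integrable k := by
    rw [hk, integrable_indicator_iff measurableSet_Ioi]
    have := (integrable_fun_norm_addHaar (volume : Measure E) (f := fun ρ => h (ρ • e))).1
      (hh.integrable.congr (.of_forall fun x => hh.radial.eq_norm_smul he x))
    exact this
  have hwave : ∀ τ, wave h τ 0 = c • wave k 0 τ := by
    intro τ
    have h1 : wave h τ 0 = ∫ ξ : E, (fun ρ : ℝ => phase τ ρ * h (ρ • e)) ‖ξ‖ := by
      refine integral_congr_ae (.of_forall fun ξ => ?_)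
      simp only [phase_zero_left, one_mul]
      rw [← hh.radial.eq_norm_smul he]
    rw [h1, integral_fun_norm_addHaar volume (fun ρ : ℝ => phase τ ρ * h (ρ • e)), ← hn, hc,
      mul_smul, Nat.cast_smul_eq_nsmul, wave,
      ← integral_indicator measurableSet_Ioi]
    congr 2
    refine integral_congr_ae (.of_forall fun ρ => ?_)
    by_cases hρ : ρ ∈ Set.Ioi (0 : ℝ)
    · simp [hk, hρ]; ring
    · simp [hk, hρ]
  have hsob : S * ∫⁻ ρ, ‖k ρ‖ₑ ^ 2 = sobNorm ((n - 1 : ℝ) / 2) h ^ 2 := by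
    set φ : ℝ → ℝ≥0∞ := fun ρ => ‖(ρ ^ ((n - 1 : ℝ) / 2) : ℝ) • h (ρ • e)‖ₑ ^ 2 with hφ
    have hφm : Measurable φ := by fun_prop
    have h2 : sobNorm ((n - 1 : ℝ) / 2) h ^ 2 = ∫⁻ ξ : E, φ ‖ξ‖ := by
      rw [sobNorm, eLpNorm_two_eq, ← ENNReal.rpow_two, ← ENNReal.rpow_mul]
      norm_num
      refine lintegral_congr fun ξ => ?_
      rw [hφ]
      simp only
      rw [← hh.radial.eq_norm_smul he]
      simp
    rw [h2, lintegral_radial hφm, ← hn, ← lintegral_indicator measurableSet_Ioi]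
    congr 1
    refine lintegral_congr fun ρ => ?_
    by_cases hρ : ρ ∈ Set.Ioi (0 : ℝ)
    · have hρ0 : 0 < ρ := hρ
      simp only [hk, Set.indicator_of_mem hρ, hφ, enorm_smul, mul_pow, ← mul_assoc]
      congr 1
      rw [Real.enorm_of_nonneg (by positivity), Real.enorm_of_nonneg (by positivity), sq,
        ← ENNReal.ofReal_pow (by positivity)]
      congr 2
      rw [← Real.rpow_natCast, ← Real.rpow_natCast, ← Real.rpow_mul hρ0.le, Nat.cast_sub hn0]
      congr 1
      push_cast
      ring
    · simp [hk, hρ]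
  have h3 := lintegral_wave_sq_le hkm hki 0
  calc ∫⁻ τ, ‖wave h τ 0‖ₑ ^ 2 = ‖c‖ₑ ^ 2 * ∫⁻ τ, ‖wave k 0 τ‖ₑ ^ 2 := by
        rw [← lintegral_const_mul _ ((measurable_wave_right hkm 0).enorm.pow_const 2)]
        simp only [hwave, enorm_smul, mul_pow]
    _ ≤ ‖c‖ₑ ^ 2 * (2 * ∫⁻ ρ, ‖k ρ‖ₑ ^ 2) := mul_le_mul_right h3 _
    _ = ‖c‖ₑ ^ 2 * (2 * (S⁻¹ * (S * ∫⁻ ρ, ‖k ρ‖ₑ ^ 2))) := by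
        rw [← mul_assoc S⁻¹, ENNReal.inv_mul_cancel hS0 hSt, one_mul]
    _ = _ := by rw [hsob]; ring

end Averages

section Endpoint

variable {E : Type*} [NormedAddCommGroup E] [InnerProductSpace ℝ E] [FiniteDimensional ℝ E]
  [MeasurableSpace E] [BorelSpace E]

lemma continuous_wave {h : E → ℂ} (hi : Integrable h) (t : ℝ) : Continuous (wave h t) := by
  refine continuous_of_dominated (bound := fun ξ => ‖h ξ‖)
    (fun x => (integrable_phase_mul hi t x).aestronglyMeasurable)
    (fun x => .of_forall fun ξ => by simp) hi.norm (.of_forall fun ξ => ?_)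
  unfold phase
  fun_prop

lemma norm_wave_le (h : E → ℂ) (t : ℝ) (x : E) : ‖wave h t x‖ ≤ ∫ ξ, ‖h ξ‖ := by
  refine (norm_integral_le_integral_norm _).trans_eq ?_
  simp

lemma isRadial_indicator_annulus (R R' : ℝ) :
    IsRadial ((annulus E R R').indicator (1 : E → ℂ)) := by
  intro x y hxy
  have : x ∈ annulus E R R' ↔ y ∈ annulus E R R' := by
    simp only [annulus, Set.mem_ofPred_eq, hxy]
  by_cases hx : x ∈ annulus E R R'
  · rw [Set.indicator_of_mem hx, Set.indicator_of_mem (this.1 hx)]; rfl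
  · rw [Set.indicator_of_notMem hx, Set.indicator_of_notMem (mt this.2 hx)]

lemma volume_annulus_ne_top (R R' : ℝ) : volume (annulus E R R') ≠ ⊤ :=
  measure_ne_top_of_subset (fun y hy => by simpa using hy.2)
    (measure_ball_lt_top (x := (0 : E)) (r := R')).ne

lemma dist_wave_lt_of_mem_annulus {h : E → ℂ} (hr : IsRadial h) (t : ℝ) {x : E} (hx : x ≠ 0)
    {δ η R' : ℝ} (hδ : ∀ y, dist y x < δ → dist (wave h t y) (wave h t x) < η)
    (hR' : R' ≤ ‖x‖ + δ) {y : E} (hy : y ∈ annulus E ‖x‖ R') :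
    dist (wave h t y) (wave h t x) < η := by
  have hx0 : 0 < ‖x‖ := norm_pos_iff.2 hx
  have h1 : wave h t y = wave h t ((‖y‖ / ‖x‖) • x) := by
    refine hr.wave t _ _ ?_
    rw [norm_smul, norm_of_nonneg (by positivity), div_mul_cancel₀ _ hx0.ne']
  rw [h1]
  refine hδ _ ?_
  have h2 : (‖y‖ / ‖x‖) • x - x = ((‖y‖ - ‖x‖) / ‖x‖) • x := by
    rw [sub_div, div_self hx0.ne', sub_smul, one_smul]
  rw [dist_eq_norm, h2, norm_smul, norm_div, norm_norm, div_mul_cancel₀ _ hx0.ne',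
    norm_of_nonneg (by linarith [hy.1])]
  linarith [hy.2]

lemma lintegral_annulus_wave_zero_le (m : ℕ) (hm : 2 ≤ m) {R R' : ℝ} (hR : 0 < R) (hRR : R ≤ R')
    (hR2 : R' ≤ 2 * R) {φ : ℝ → ℝ≥0∞} (hφ : Measurable φ) (t : ℝ) :
    ∫⁻ y in annulus (EuclideanSpace ℝ (Fin (m + 1))) R R', φ (t + y 0) ≤
      (volume : Measure (EuclideanSpace ℝ (Fin m))).toSphere Set.univ *
        ENNReal.ofReal (12 * 2 ^ (m - 2)) *
        ((volume : Measure (EuclideanSpace ℝ (Fin (m + 1)))).toSphere Set.univ)⁻¹ * maxFn φ t *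
          volume (annulus (EuclideanSpace ℝ (Fin (m + 1))) R R') := by
  set S₁ := (volume : Measure (EuclideanSpace ℝ (Fin m))).toSphere Set.univ
  set S₂ := (volume : Measure (EuclideanSpace ℝ (Fin (m + 1)))).toSphere Set.univ with hS₂
  have hS0 : S₂ ≠ 0 := by
    rw [hS₂, Ne, Measure.measure_univ_eq_zero]; exact Measure.toSphere_ne_zero _
  have hSt : S₂ ≠ ⊤ := measure_ne_top _ _
  have hR' : 0 < R' := hR.trans_le hRR
  have hvol := le_volume_annulus (EuclideanSpace ℝ (Fin (m + 1))) (R' := R') hR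
  rw [finrank_euclideanSpace_fin, Nat.add_sub_cancel] at hvol
  have htrans : ∫⁻ u in Metric.closedBall 0 R', φ (t + u) = ∫⁻ u in Metric.closedBall t R', φ u := by
    rw [← lintegral_indicator Metric.isClosed_closedBall.measurableSet,
      ← lintegral_indicator Metric.isClosed_closedBall.measurableSet,
      ← lintegral_add_left_eq_self (μ := volume) ((Metric.closedBall t R').indicator fun u => φ u) t]
    refine lintegral_congr fun u => ?_
    simp only [Set.indicator, Metric.mem_closedBall, dist_self_add_left, dist_zero_right]
  calc _ ≤ S₁ * ENNReal.ofReal (R' ^ (m - 2) * (R' ^ 2 - R ^ 2)) *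
        ∫⁻ u in Metric.closedBall 0 R', φ (t + u) :=
        lintegral_annulus_le m hm hR hRR (φ := fun u => φ (t + u)) (by fun_prop)
    _ ≤ S₁ * ENNReal.ofReal (R' ^ (m - 2) * (R' ^ 2 - R ^ 2)) *
        (ENNReal.ofReal (2 * R') * maxFn φ t) := by
        rw [htrans]
        exact mul_le_mul_right (lintegral_closedBall_le_maxFn φ t hR') _
    _ = S₁ * ENNReal.ofReal (R' ^ (m - 2) * (R' ^ 2 - R ^ 2) * (2 * R')) * maxFn φ t := by
        rw [ENNReal.ofReal_mul' (q := 2 * R') (by positivity)]; ring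
    _ ≤ S₁ * ENNReal.ofReal ((12 * 2 ^ (m - 2)) * (R ^ m * (R' - R))) * maxFn φ t := by
        refine mul_le_mul_left (mul_le_mul_right (ENNReal.ofReal_le_ofReal ?_) _) _
        have h1 : R' ^ (m - 2) ≤ (2 * R) ^ (m - 2) := by gcongr
        have h2 : (R' ^ 2 - R ^ 2) * (2 * R') ≤ 12 * R ^ 2 * (R' - R) := by
          have : (R' + R) * (2 * R') ≤ 12 * R ^ 2 := by nlinarith
          nlinarith [mul_le_mul_of_nonneg_right this (sub_nonneg.2 hRR)]
        calc R' ^ (m - 2) * (R' ^ 2 - R ^ 2) * (2 * R')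
            = R' ^ (m - 2) * ((R' ^ 2 - R ^ 2) * (2 * R')) := by ring
          _ ≤ (2 * R) ^ (m - 2) * (12 * R ^ 2 * (R' - R)) := by
              refine mul_le_mul h1 h2 ?_ (by positivity)
              have : 0 ≤ R' ^ 2 - R ^ 2 := by nlinarith
              positivity
          _ = _ := by
              obtain ⟨k, rfl⟩ := Nat.exists_eq_add_of_le hm
              simp only [Nat.add_sub_cancel_left, mul_pow, pow_add]
              ring
    _ = S₁ * ENNReal.ofReal (12 * 2 ^ (m - 2)) * S₂⁻¹ * maxFn φ t *
        (S₂ * ENNReal.ofReal (R ^ m * (R' - R))) := by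
        rw [ENNReal.ofReal_mul (by positivity)]
        calc _ = S₁ * ENNReal.ofReal (12 * 2 ^ (m - 2)) * maxFn φ t *
              ENNReal.ofReal (R ^ m * (R' - R)) * (S₂⁻¹ * S₂) := by
              rw [ENNReal.inv_mul_cancel hS0 hSt]; ring
          _ = _ := by ring
    _ ≤ _ := mul_le_mul_right hvol _

/-- A radial wave is pointwise dominated by the maximal function of its trace at the origin. -/
lemma enorm_wave_le_maxFn (m : ℕ) (hm : 2 ≤ m) {h : EuclideanSpace ℝ (Fin (m + 1)) → ℂ}
    (hh : IsData h) (t : ℝ) {x : EuclideanSpace ℝ (Fin (m + 1))} (hx : x ≠ 0) :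
    ‖wave h t x‖ₑ ≤ (volume : Measure (EuclideanSpace ℝ (Fin m))).toSphere Set.univ *
        ENNReal.ofReal (12 * 2 ^ (m - 2)) *
        ((volume : Measure (EuclideanSpace ℝ (Fin (m + 1)))).toSphere Set.univ)⁻¹ *
          maxFn (fun τ => ‖wave h τ 0‖ₑ) t := by
  refine ENNReal.le_of_forall_pos_le_add fun η hη _ => ?_
  obtain ⟨δ, hδ0, hδ⟩ := Metric.continuousAt_iff.1
    ((continuous_wave hh.integrable t).continuousAt (x := x)) (η : ℝ) (by exact_mod_cast hη)
  have hR : 0 < ‖x‖ := norm_pos_iff.2 hx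
  set R' := ‖x‖ + min δ ‖x‖ with hR'
  have hlt : ‖x‖ < R' := by rw [hR']; linarith [lt_min hδ0 hR]
  set A := annulus (EuclideanSpace ℝ (Fin (m + 1))) ‖x‖ R' with hA
  have hAm : MeasurableSet A := measurableSet_annulus _ _
  have hAt : volume A ≠ ⊤ := volume_annulus_ne_top _ _
  have hA0 : volume A ≠ 0 := by
    have hvol := le_volume_annulus (EuclideanSpace ℝ (Fin (m + 1))) (R' := R') hR
    refine (lt_of_lt_of_le (pos_iff_ne_zero.2 (mul_ne_zero ?_ ?_)) hvol).ne'
    · rw [Ne, Measure.measure_univ_eq_zero]; exact Measure.toSphere_ne_zero _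
    · have := sub_pos.2 hlt
      exact (ENNReal.ofReal_pos.2 (by positivity)).ne'
  have : IsFiniteMeasure (volume.restrict A) := ⟨by simpa using hAt.lt_top⟩
  have hwi : IntegrableOn (wave h t) A := Integrable.of_bound
    (measurable_wave_right hh.measurable t).aestronglyMeasurable _
    (.of_forall fun y => norm_wave_le h t y)
  have hmean := setIntegral_wave_eq hh hAm hAt (isRadial_indicator_annulus _ _)
    (e := EuclideanSpace.single (0 : Fin (m + 1)) (1 : ℝ)) (by simp) t
  simp only [EuclideanSpace.inner_single_right, conj_trivial, one_mul] at hmean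
  have hφm : Measurable fun τ => ‖wave h τ 0‖ₑ := (measurable_wave_zero hh.measurable).enorm
  have hbound := lintegral_annulus_wave_zero_le m hm hR hlt.le
    (by rw [hR']; linarith [min_le_right δ ‖x‖]) hφm t
  refine (ENNReal.mul_le_mul_iff_left hA0 hAt).1 ?_
  calc ‖wave h t x‖ₑ * volume A = ‖∫ y in A, wave h t x‖ₑ := by
        rw [setIntegral_const, enorm_smul, Measure.real, Real.enorm_of_nonneg toReal_nonneg,
          ENNReal.ofReal_toReal hAt, mul_comm]
    _ = ‖(∫ y in A, wave h t y) - ∫ y in A, (wave h t y - wave h t x)‖ₑ := by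
        rw [integral_sub hwi (integrable_const _)]
        exact congrArg _ (by ring)
    _ ≤ ‖∫ y in A, wave h t y‖ₑ + ‖∫ y in A, (wave h t y - wave h t x)‖ₑ := enorm_sub_le
    _ ≤ _ + (η : ℝ≥0∞) * volume A := by
        refine add_le_add (le_trans ?_ hbound) ?_
        · rw [hmean]; exact enorm_integral_le_lintegral_enorm _
        · refine (enorm_integral_le_lintegral_enorm _).trans ?_
          rw [← setLIntegral_const]
          refine setLIntegral_mono' hAm fun y hy => ?_
          have h1 := dist_wave_lt_of_mem_annulus hh.radial t hx (fun y hy => hδ hy)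
            (by rw [hR']; linarith [min_le_left δ ‖x‖]) hy
          rw [← ofReal_norm, ← dist_eq_norm, ← ENNReal.ofReal_coe_nnreal]
          exact ENNReal.ofReal_le_ofReal h1.le
    _ = _ := by rw [add_mul]

/-- The endpoint `(q, r) = (2, ∞)`. -/
lemma halfWaveBound_two_top (m : ℕ) (hm : 2 ≤ m) :
    HalfWaveBound (EuclideanSpace ℝ (Fin (m + 1))) 2 ⊤ ((m : ℝ) / 2) := by
  obtain ⟨K, hK, hKle⟩ := exists_lintegral_wave_zero_sq_le (EuclideanSpace ℝ (Fin (m + 1)))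
  rw [finrank_euclideanSpace_fin] at hKle
  set a := (volume : Measure (EuclideanSpace ℝ (Fin m))).toSphere Set.univ *
        ENNReal.ofReal (12 * 2 ^ (m - 2)) *
        ((volume : Measure (EuclideanSpace ℝ (Fin (m + 1)))).toSphere Set.univ)⁻¹ with ha
  have hat : a ≠ ⊤ := by
    have : (volume : Measure (EuclideanSpace ℝ (Fin (m + 1)))).toSphere Set.univ ≠ 0 := by
      rw [Ne, Measure.measure_univ_eq_zero]; exact Measure.toSphere_ne_zero _
    finiteness
  refine ⟨a * (256 * K) ^ (1 / 2 : ℝ), by finiteness, fun h hh =>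
    ⟨fun t => a * maxFn (fun τ => ‖wave h τ 0‖ₑ) t, ?_, fun t => ?_, ?_⟩⟩
  · exact (measurable_maxFn (measurable_wave_zero hh.measurable).enorm).const_mul a
  · rw [eLpNorm_exponent_top]
    refine essSup_le_of_ae_le _ ?_
    filter_upwards [Measure.ae_ne volume (0 : EuclideanSpace ℝ (Fin (m + 1)))] with x hx
    exact enorm_wave_le_maxFn m hm hh t hx
  · refine (eLpNorm_const_mul_le hat _ _).trans ?_
    rw [mul_assoc a]
    gcongr
    rw [eLpNorm_two_eq]
    simp only [enorm_eq_self]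
    have h1 := (lintegral_maxFn_sq_le (measurable_wave_zero hh.measurable).enorm).trans
      (mul_le_mul_right (hKle h hh) (256 : ℝ≥0∞))
    rw [← mul_assoc] at h1
    have h2 := ENNReal.rpow_le_rpow h1 (z := 1 / 2) (by norm_num)
    rw [ENNReal.mul_rpow_of_nonneg _ _ (by norm_num), ← ENNReal.rpow_two (sobNorm _ _),
      ← ENNReal.rpow_mul] at h2
    simpa using h2

end Endpoint

section Conclusion

lemma halfWaveBound_of_admissible {n : ℕ} (hn : 2 ≤ n) {q r : ℝ≥0∞} {s : ℝ}
    (hadm : RadWaveAdmissible n q r)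
    (hscal : 1 / q.toReal + (n : ℝ) / r.toReal = (n : ℝ) / 2 - s) :
    HalfWaveBound (EuclideanSpace ℝ (Fin n)) q r s := by
  have hnt : Nontrivial (EuclideanSpace ℝ (Fin n)) := by
    have : Nonempty (Fin n) := ⟨⟨0, by omega⟩⟩
    infer_instance
  obtain ⟨hq, hr, ⟨hne, hlt⟩ | ⟨rfl, rfl⟩⟩ := hadm
  swap
  · have hs : s = 0 := by
      simp at hscal
      linarith
    rw [hs]
    exact halfWaveBound_infty_two _
  have hq0 : q ≠ 0 := (lt_of_lt_of_le (by norm_num) hq).ne'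
  have hr0 : r ≠ 0 := (lt_of_lt_of_le (by norm_num) hr).ne'
  have hreal : 1 / q.toReal + (n - 1 : ℝ) / r.toReal < (n - 1 : ℝ) / 2 := by
    have hn1 : ((n : ℝ≥0∞) - 1).toReal = (n - 1 : ℝ) := by
      rw [ENNReal.toReal_sub_of_le (by exact_mod_cast (by omega : 1 ≤ n)) (by finiteness)]
      simp
    have hsub : (n : ℝ≥0∞) - 1 ≠ ⊤ := by finiteness
    have h1 : 1 / q ≠ ⊤ := ENNReal.div_ne_top one_ne_top hq0
    have h2 : ((n : ℝ≥0∞) - 1) / r ≠ ⊤ := ENNReal.div_ne_top hsub hr0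
    have h3 := ENNReal.toReal_strict_mono (ENNReal.div_ne_top hsub two_ne_zero) hlt
    rw [ENNReal.toReal_add h1 h2, ENNReal.toReal_div, ENNReal.toReal_div, ENNReal.toReal_div,
      hn1] at h3
    simpa using h3
  have hn1 : (0 : ℝ) < n - 1 := by
    have : (2 : ℝ) ≤ n := by exact_mod_cast hn
    linarith
  rcases eq_or_ne r ⊤ with rfl | hrt
  · have hqt : q ≠ ⊤ := fun h => hne ⟨h, rfl⟩
    simp only [ENNReal.toReal_top, _root_.div_zero, add_zero] at hreal hscal
    rcases hq.eq_or_lt with rfl | hq2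
    · obtain ⟨m, rfl⟩ : ∃ m, n = m + 1 := ⟨n - 1, by omega⟩
      simp only [ENNReal.toReal_ofNat] at hreal hscal
      push_cast at hreal hscal
      have hm : 2 ≤ m := by
        have : (1 : ℝ) < m := by linarith
        exact_mod_cast this
      rw [show s = (m : ℝ) / 2 by linarith]
      exact halfWaveBound_two_top m hm
    · refine halfWaveBound_of_top _ hq2 hqt ?_ ?_
      · rw [finrank_euclideanSpace_fin]
        have : 2 / q.toReal = 2 * (1 / q.toReal) := by ring
        linarith
      · rw [finrank_euclideanSpace_fin]; exact hscal
  · have hr2 : 2 < r := by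
      refine lt_of_le_of_ne hr ?_
      rintro rfl
      simp only [ENNReal.toReal_ofNat] at hreal
      have : 0 ≤ 1 / q.toReal := by positivity
      linarith
    refine halfWaveBound_of_ne_top _ hq hr2 hrt ?_ ?_
    · rw [finrank_euclideanSpace_fin]
      have h1 : 2 / q.toReal = 2 * (1 / q.toReal) := by ring
      have h2 : (n - 1 : ℝ) * (1 - 2 / r.toReal) = (n - 1) - 2 * ((n - 1) / r.toReal) := by ring
      linarith
    · rw [finrank_euclideanSpace_fin]; exact hscal

lemma timeNorm_le {q : ℝ≥0∞} (hq : q ≠ 0) {G Z : ℝ → ℝ≥0∞} (h : ∀ t, G t ≤ Z t) :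
    timeNorm q G ≤ eLpNorm Z q volume := by
  have h1 : timeNorm q G = eLpNorm G q (volume.restrict (Set.Ioi 0)) := by
    unfold timeNorm
    split_ifs with hqt
    · rw [hqt, eLpNorm_exponent_top]; rfl
    · rw [eLpNorm_eq_lintegral_rpow_enorm_toReal hq hqt]; simp only [enorm_eq_self]
  rw [h1]
  exact (eLpNorm_mono_enorm fun t => h t).trans (eLpNorm_mono_measure _ Measure.restrict_le_self)

variable {E : Type*} [NormedAddCommGroup E] [InnerProductSpace ℝ E] [FiniteDimensional ℝ E]
  [MeasurableSpace E] [BorelSpace E]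

lemma IsRadial.fourier {f : E → ℂ} (hf : IsRadial f) : IsRadial (𝓕 f) := by
  intro x y hxy
  obtain ⟨L, rfl⟩ := exists_isometry_map_eq hxy
  have h : f ∘ L = f := funext fun z => hf _ _ (L.norm_map z)
  rw [← Real.fourier_comp_linearIsometry L, h]

lemma isData_fourier {f : SchwartzMap E ℂ} (hf : IsRadial f) : IsData (𝓕 ⇑f) where
  measurable := by rw [← SchwartzMap.fourier_coe]; exact (𝓕 f).continuous.measurable
  integrable := by rw [← SchwartzMap.fourier_coe]; exact (𝓕 f).integrable
  radial := hf.fourier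

lemma integrable_norm_inv_mul_one_add_norm_pow (hE : 2 ≤ Module.finrank ℝ E) :
    Integrable fun ξ : E => ‖ξ‖⁻¹ * ((1 + ‖ξ‖) ^ Module.finrank ℝ E)⁻¹ := by
  have : Nontrivial E := Module.nontrivial_of_finrank_pos (R := ℝ) (by omega)
  refine (integrable_fun_norm_addHaar (volume : Measure E)
    (f := fun ρ : ℝ => ρ⁻¹ * ((1 + ρ) ^ Module.finrank ℝ E)⁻¹)).2 ?_
  have hmaj : Integrable fun ρ : ℝ => (1 + ‖ρ‖) ^ (-(2 : ℝ)) :=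
    integrable_one_add_norm (by norm_num)
  refine hmaj.integrableOn.mono' (by fun_prop) ?_
  filter_upwards [ae_restrict_mem measurableSet_Ioi] with ρ hρ
  have hρ0 : 0 < ρ := hρ
  obtain ⟨k, hk⟩ := Nat.exists_eq_add_of_le hE
  rw [hk, norm_of_nonneg (by positivity), norm_of_nonneg hρ0.le, Real.rpow_neg (by positivity),
    Real.rpow_two, smul_eq_mul, show 2 + k - 1 = k + 1 by omega]
  calc ρ ^ (k + 1) * (ρ⁻¹ * ((1 + ρ) ^ (2 + k))⁻¹) = ρ ^ k * ((1 + ρ) ^ (2 + k))⁻¹ := by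
        field_simp
        ring
    _ ≤ (1 + ρ) ^ k * ((1 + ρ) ^ (2 + k))⁻¹ := by gcongr; linarith
    _ = ((1 + ρ) ^ 2)⁻¹ := by rw [pow_add]; field_simp

lemma exists_norm_schwartzMap_le (g : SchwartzMap E ℂ) (k : ℕ) :
    ∃ C : ℝ, ∀ x, ‖g x‖ ≤ C * ((1 + ‖x‖) ^ k)⁻¹ := by
  refine ⟨2 ^ k * ((Finset.Iic (k, 0)).sup fun m => SchwartzMap.seminorm ℝ m.1 m.2) g,
    fun x => ?_⟩
  have := SchwartzMap.one_add_le_sup_seminorm_apply (𝕜 := ℝ) (m := (k, 0)) le_rfl le_rfl g x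
  rw [norm_iteratedFDeriv_zero] at this
  rw [← div_eq_mul_inv, le_div_iff₀ (by positivity), mul_comm]
  exact this

lemma isData_fourier_div (hE : 2 ≤ Module.finrank ℝ E) {g : SchwartzMap E ℂ} (hg : IsRadial g) :
    IsData fun ξ : E => ((1 / (2 * π * ‖ξ‖) : ℝ) : ℂ) * 𝓕 ⇑g ξ where
  measurable := by
    have := (isData_fourier hg).measurable
    fun_prop
  integrable := by
    have hm := (isData_fourier hg).measurable
    obtain ⟨C, hC⟩ := exists_norm_schwartzMap_le (𝓕 g) (Module.finrank ℝ E)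
    refine ((integrable_norm_inv_mul_one_add_norm_pow hE).const_mul C).mono'
      (Measurable.aestronglyMeasurable (by fun_prop)) (.of_forall fun ξ => ?_)
    rw [norm_mul, Complex.norm_real, norm_of_nonneg (by positivity), ← SchwartzMap.fourier_coe]
    have h1 : 1 / (2 * π * ‖ξ‖) ≤ ‖ξ‖⁻¹ := by
      rw [one_div, mul_inv]
      refine mul_le_of_le_one_left (by positivity) (inv_le_one_of_one_le₀ ?_)
      linarith [pi_gt_three]
    calc _ ≤ ‖ξ‖⁻¹ * (C * ((1 + ‖ξ‖) ^ Module.finrank ℝ E)⁻¹) := by gcongr; exact hC ξ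
      _ = _ := by ring
  radial := by
    intro x y hxy
    simp only [hxy, hg.fourier x y hxy]

lemma sobNorm_div_le [Nontrivial E] (s : ℝ) (G : E → ℂ) :
    sobNorm s (fun ξ => ((1 / (2 * π * ‖ξ‖) : ℝ) : ℂ) * G ξ) ≤ sobNorm (s - 1) G := by
  refine eLpNorm_mono_ae ?_
  filter_upwards [Measure.ae_ne volume (0 : E)] with ξ hξ
  have hξ0 : 0 < ‖ξ‖ := norm_pos_iff.2 hξ
  rw [norm_smul, norm_smul, norm_mul, Complex.norm_real, ← mul_assoc,
    norm_of_nonneg (by positivity), norm_of_nonneg (by positivity), norm_of_nonneg (by positivity),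
    Real.rpow_sub_one hξ0.ne', div_eq_mul_one_div (‖ξ‖ ^ s)]
  gcongr
  nlinarith [pi_gt_three]

/-- The free wave is a combination of half waves. -/
lemma integral_eq_wave {F G : E → ℂ} (hF : Integrable F)
    (hG : Integrable fun ξ : E => ((1 / (2 * π * ‖ξ‖) : ℝ) : ℂ) * G ξ) (t : ℝ) (x : E) :
    ∫ ξ, Complex.exp (2 * π * ⟪x, ξ⟫ * Complex.I) * ((Real.cos (2 * π * t * ‖ξ‖) : ℂ) * F ξ +
        ((Real.sin (2 * π * t * ‖ξ‖) / (2 * π * ‖ξ‖) : ℝ) : ℂ) * G ξ) =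
      ((1 / 2 : ℂ) * wave F t x + (1 / 2 : ℂ) * wave F (-t) x) +
        ((-Complex.I / 2) * wave (fun ξ => ((1 / (2 * π * ‖ξ‖) : ℝ) : ℂ) * G ξ) t x +
          (Complex.I / 2) * wave (fun ξ => ((1 / (2 * π * ‖ξ‖) : ℝ) : ℂ) * G ξ) (-t) x) := by
  simp only [wave, ← integral_const_mul]
  have i1 := fun τ (c : ℂ) => (integrable_phase_mul hF τ x).const_mul c
  have i2 := fun τ (c : ℂ) => (integrable_phase_mul hG τ x).const_mul c
  refine Eq.trans ?_ ((integral_add ((i1 t (1 / 2)).add (i1 (-t) (1 / 2)))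
    ((i2 t (-Complex.I / 2)).add (i2 (-t) (Complex.I / 2)))).trans
      (congrArg₂ (· + ·) (integral_add (i1 _ _) (i1 _ _)) (integral_add (i2 _ _) (i2 _ _))))
  refine integral_congr_ae (.of_forall fun ξ => ?_)
  have hx : Complex.exp (2 * π * ⟪x, ξ⟫ * Complex.I) = phase x ξ := by
    rw [phase]; push_cast; rfl
  have hp : phase t ‖ξ‖ = Complex.cos ((2 * π * t * ‖ξ‖ : ℝ) : ℂ) +
      Complex.sin ((2 * π * t * ‖ξ‖ : ℝ) : ℂ) * Complex.I := by
    rw [← Complex.exp_mul_I, phase]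
    simp only [RCLike.inner_apply]
    congr 3
    simp
    ring
  have hn : phase (-t) ‖ξ‖ = Complex.cos ((2 * π * t * ‖ξ‖ : ℝ) : ℂ) -
      Complex.sin ((2 * π * t * ‖ξ‖ : ℝ) : ℂ) * Complex.I := by
    rw [← Complex.cos_neg, sub_eq_add_neg, ← neg_mul, ← Complex.sin_neg, ← Complex.exp_mul_I, phase]
    simp only [RCLike.inner_apply]
    rw [← Complex.ofReal_neg]
    congr 3
    simp
    ring
  simp only [Pi.add_apply, hx, hp, hn]
  rw [div_eq_mul_one_div (Real.sin _), Complex.ofReal_mul, Complex.ofReal_cos, Complex.ofReal_sin]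
  ring_nf
  rw [Complex.I_sq]
  ring

lemma eLpNorm_const_mul_le_of_norm_le_one {c : ℂ} (hc : ‖c‖ ≤ 1) (w : E → ℂ) (r : ℝ≥0∞) :
    eLpNorm (fun x => c * w x) r volume ≤ eLpNorm w r volume :=
  eLpNorm_mono fun x => by
    rw [norm_mul]; exact mul_le_of_le_one_left (norm_nonneg _) hc

lemma eLpNorm_sum_wave_le {F H : E → ℂ} (hF : IsData F) (hH : IsData H) {r : ℝ≥0∞} (hr : 1 ≤ r)
    (t : ℝ) :
    eLpNorm (fun x => ((1 / 2 : ℂ) * wave F t x + (1 / 2 : ℂ) * wave F (-t) x) +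
        ((-Complex.I / 2) * wave H t x + (Complex.I / 2) * wave H (-t) x)) r volume ≤
      (eLpNorm (wave F t) r volume + eLpNorm (wave F (-t)) r volume) +
        (eLpNorm (wave H t) r volume + eLpNorm (wave H (-t)) r volume) := by
  have m : ∀ {h : E → ℂ}, IsData h → ∀ (τ : ℝ) (c : ℂ),
      AEStronglyMeasurable (fun x => c * wave h τ x) volume := fun hh τ c =>
    ((measurable_wave_right hh.measurable τ).const_mul c).aestronglyMeasurable
  refine (eLpNorm_add_le ((m hF _ _).add (m hF _ _)) ((m hH _ _).add (m hH _ _)) hr).trans ?_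
  refine add_le_add ((eLpNorm_add_le (m hF _ _) (m hF _ _) hr).trans (add_le_add ?_ ?_))
    ((eLpNorm_add_le (m hH _ _) (m hH _ _) hr).trans (add_le_add ?_ ?_))
  all_goals
    refine eLpNorm_const_mul_le_of_norm_le_one ?_ _ _
    norm_num

lemma eLpNorm_add_neg_le {Z : ℝ → ℝ≥0∞} (hZ : Measurable Z) {q : ℝ≥0∞} (hq : 1 ≤ q) :
    eLpNorm (fun t => Z t + Z (-t)) q volume ≤ 2 * eLpNorm Z q volume := by
  have hneg : eLpNorm (fun t => Z (-t)) q volume = eLpNorm Z q volume :=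
    eLpNorm_comp_measurePreserving hZ.aestronglyMeasurable (Measure.measurePreserving_neg volume)
  refine (eLpNorm_add_le hZ.aestronglyMeasurable
    (hZ.comp measurable_neg).aestronglyMeasurable hq).trans_eq ?_
  rw [two_mul]
  exact congrArg _ hneg

end Conclusion

end RadialStrichartz

/-- **Homogeneous radial Strichartz estimate for the wave equation.**
For `n ≥ 2`, spherically symmetric Schwartz data `f, g` on `ℝⁿ`, a radially wave-admissible
pair `(q, r)` and `s` given by the scaling condition `1/q + n/r = n/2 - s`, the free wave
`u(t) = cos(t|D|) f + (sin(t|D|)/|D|) g` satisfies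
`‖u‖_{L^q_t((0,∞)) L^r_x} ≲ ‖f‖_{Ḣ^s} + ‖g‖_{Ḣ^{s-1}}`. -/
theorem stmt_6 (n : ℕ) (hn : 2 ≤ n) (q r : ℝ≥0∞) (s : ℝ)
    (hadm : RadWaveAdmissible n q r)
    (hscal : 1 / q.toReal + (n : ℝ) / r.toReal = (n : ℝ) / 2 - s) :
    ∃ C : ℝ, 0 ≤ C ∧
      ∀ f g : SchwartzMap (EuclideanSpace ℝ (Fin n)) ℂ,
        (∀ x y : EuclideanSpace ℝ (Fin n), ‖x‖ = ‖y‖ → f x = f y) →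
        (∀ x y : EuclideanSpace ℝ (Fin n), ‖x‖ = ‖y‖ → g x = g y) →
        eLpNorm (fun ξ : EuclideanSpace ℝ (Fin n) => (‖ξ‖ ^ s : ℝ) • 𝓕 ⇑f ξ) 2 volume < ⊤ →
        eLpNorm (fun ξ : EuclideanSpace ℝ (Fin n) => (‖ξ‖ ^ (s - 1) : ℝ) • 𝓕 ⇑g ξ) 2 volume < ⊤ →
        timeNorm q (fun t =>
            eLpNorm (fun x : EuclideanSpace ℝ (Fin n) =>
              ∫ ξ : EuclideanSpace ℝ (Fin n),
                Complex.exp (2 * Real.pi * ⟪x, ξ⟫ * Complex.I) *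
                  ((Real.cos (2 * Real.pi * t * ‖ξ‖) : ℂ) * 𝓕 ⇑f ξ +
                    ((Real.sin (2 * Real.pi * t * ‖ξ‖) / (2 * Real.pi * ‖ξ‖) : ℝ) : ℂ) *
                      𝓕 ⇑g ξ)) r volume)
          ≤ ENNReal.ofReal C *
            (eLpNorm (fun ξ : EuclideanSpace ℝ (Fin n) => (‖ξ‖ ^ s : ℝ) • 𝓕 ⇑f ξ) 2 volume +
              eLpNorm (fun ξ : EuclideanSpace ℝ (Fin n) =>
                (‖ξ‖ ^ (s - 1) : ℝ) • 𝓕 ⇑g ξ) 2 volume) := by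
  have hn1 : Nontrivial (EuclideanSpace ℝ (Fin n)) := by
    have : Nonempty (Fin n) := ⟨⟨0, by omega⟩⟩
    infer_instance
  have hq1 : 1 ≤ q := le_trans (by norm_num) hadm.1
  have hr1 : 1 ≤ r := le_trans (by norm_num) hadm.2.1
  obtain ⟨K, hK, hKle⟩ := RadialStrichartz.halfWaveBound_of_admissible hn hadm hscal
  refine ⟨2 * K.toReal, by positivity, fun f g hf hg _ _ => ?_⟩
  have hF := RadialStrichartz.isData_fourier (f := f) hf
  have hH := RadialStrichartz.isData_fourier_div
    (by rw [finrank_euclideanSpace_fin]; exact hn) (g := g) hg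
  obtain ⟨Z, hZm, hZ, hZq⟩ := hKle _ hF
  obtain ⟨W, hWm, hW, hWq⟩ := hKle _ hH
  have hpt := RadialStrichartz.eLpNorm_sum_wave_le hF hH hr1
  simp only [RadialStrichartz.integral_eq_wave hF.integrable hH.integrable]
  refine (RadialStrichartz.timeNorm_le (by positivity) fun t => (hpt t).trans
    (add_le_add (add_le_add (hZ t) (hZ (-t))) (add_le_add (hW t) (hW (-t))))).trans ?_
  have hZn : Measurable fun t => Z t + Z (-t) := by fun_prop
  have hWn : Measurable fun t => W t + W (-t) := by fun_prop
  calc _ ≤ 2 * eLpNorm Z q volume + 2 * eLpNorm W q volume :=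
        (eLpNorm_add_le hZn.aestronglyMeasurable hWn.aestronglyMeasurable hq1).trans
          (add_le_add (RadialStrichartz.eLpNorm_add_neg_le hZm hq1)
            (RadialStrichartz.eLpNorm_add_neg_le hWm hq1))
    _ ≤ 2 * (K * RadialStrichartz.sobNorm s (𝓕 ⇑f)) +
        2 * (K * RadialStrichartz.sobNorm (s - 1) (𝓕 ⇑g)) := by
        gcongr
        exact hWq.trans (mul_le_mul_right (RadialStrichartz.sobNorm_div_le s _) K)
    _ = ENNReal.ofReal (2 * K.toReal) * (RadialStrichartz.sobNorm s (𝓕 ⇑f) +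
        RadialStrichartz.sobNorm (s - 1) (𝓕 ⇑g)) := by
        rw [ENNReal.ofReal_mul two_pos.le, ENNReal.ofReal_toReal hK, ENNReal.ofReal_ofNat]
        ring
    _ = _ := rfl
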